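/- Let H be a finite abelian group containing an element of order at least 10. Then H can be realized by a 3-net in ℙ²(ℂ) (i.e., there exist injective maps p₁, p₂, p₃ : H → ℙ²(ℂ) with pairwise disjoint images such that p₁(x), p₂(y), p₃(z) are collinear if and only if x+y+z = 0) if and only if H is isomorphic to ℤ/aℤ × ℤ/bℤ for some positive integers a,b (that is, H has at most two invariant factors). -/

import Mathlib

/-- The complex projective plane ℙ²(ℂ) = ℙ(ℂ³). -/
abbrev P2 : Type := Projectivization ℂ (Fin 3 → ℂ)

/-- Three points of ℙ²(ℂ) are collinear if representative vectors in ℂ³ span a linear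
subspace of dimension at most 2. -/
def Collin (p q r : P2) : Prop :=
  Module.finrank ℂ (Submodule.span ℂ {p.rep, q.rep, r.rep} : Submodule ℂ (Fin 3 → ℂ)) ≤ 2

/-- A realization of a finite abelian group `H` by a 3-net in ℙ²(ℂ), stated dually in
terms of the points dual to the lines of the net: three injective maps `H → ℙ²(ℂ)` with
pairwise disjoint images such that `p₁ x`, `p₂ y`, `p₃ z` are collinear iff
`x + y + z = 0`. -/
def Realizes {H : Type} [AddCommGroup H] (p₁ p₂ p₃ : H → P2) : Prop :=
  Function.Injective p₁ ∧ Function.Injective p₂ ∧ Function.Injective p₃ ∧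
  Disjoint (Set.range p₁) (Set.range p₂) ∧
  Disjoint (Set.range p₁) (Set.range p₃) ∧
  Disjoint (Set.range p₂) (Set.range p₃) ∧
  ∀ x y z : H, Collin (p₁ x) (p₂ y) (p₃ z) ↔ x + y + z = 0

/-! ### Group theory -/

namespace NetG

lemma exists_inj_zmod (p : ℕ) (hp : p.Prime) (e : ℕ) (he : 0 < e) :
    ∃ φ : ZMod p →+ ZMod (p ^ e), Function.Injective φ := by
  obtain ⟨k, rfl⟩ : ∃ k, e = k + 1 := ⟨e - 1, by omega⟩
  have h0 : (p : ℤ) • ((p ^ k : ℕ) : ZMod (p ^ (k + 1))) = 0 := by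
    rw [zsmul_eq_mul]
    norm_cast
    rw [← pow_succ', ZMod.natCast_self]
  refine ⟨ZMod.lift p ⟨zmultiplesHom _ ((p ^ k : ℕ) : ZMod (p ^ (k + 1))), by simpa using h0⟩, ?_⟩
  rw [ZMod.lift_injective]
  intro m hm
  simp only [zmultiplesHom_apply, zsmul_eq_mul] at hm
  have : ((m * (p ^ k : ℕ) : ℤ) : ZMod (p ^ (k + 1))) = 0 := by
    push_cast at hm ⊢; exact hm
  rw [ZMod.intCast_zmod_eq_zero_iff_dvd] at this
  rw [ZMod.intCast_zmod_eq_zero_iff_dvd]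
  have hpp : (0 : ℤ) < (p : ℤ) ^ k := by have := hp.pos; positivity
  push_cast at this
  rw [pow_succ', mul_dvd_mul_iff_right hpp.ne'] at this
  exact this

lemma two_factors {H : Type} [AddCommGroup H] [Finite H]
    (h : ∀ p : ℕ, p.Prime → ∀ φ : (Fin 3 → ZMod p) →+ H, ¬ Function.Injective φ) :
    ∃ a b : ℕ, 0 < a ∧ 0 < b ∧ Nonempty (H ≃+ ZMod a × ZMod b) := by
  classical
  obtain ⟨ι, _, p, hp, e, ⟨f⟩⟩ := AddCommGroup.equiv_directSum_zmod_of_finite H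
  let g : H ≃+ (∀ i, ZMod (p i ^ e i)) := f.trans (DirectSum.addEquivProd _)
  -- at most two indices per prime
  have key : ∀ idx : Fin 3 → ι, Function.Injective idx → (∀ k, 0 < e (idx k)) →
      (∀ k, p (idx k) = p (idx 0)) → False := by
    intro idx hinj hpos hpeq
    have hψ : ∀ i, ∃ ψ : ZMod (p (idx 0)) →+ ZMod (p i ^ e i),
        (p i = p (idx 0) → 0 < e i → Function.Injective ψ) := by
      intro i
      by_cases hi : p i = p (idx 0) ∧ 0 < e i
      · rw [← hi.1]
        obtain ⟨ψ, hψ⟩ := exists_inj_zmod (p i) (hp i) (e i) hi.2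
        exact ⟨ψ, fun _ _ => hψ⟩
      · exact ⟨0, fun h1 h2 => absurd ⟨h1, h2⟩ hi⟩
    choose ψ hψ using hψ
    let Φ : (Fin 3 → ZMod (p (idx 0))) →+ (∀ i, ZMod (p i ^ e i)) :=
      { toFun := fun a i => if hh : ∃ k, idx k = i then ψ i (a hh.choose) else 0
        map_zero' := by ext i; simp
        map_add' := by
          intro a b; ext i
          by_cases hh : ∃ k, idx k = i
          · simp [hh]
          · simp [hh] }
    refine h (p (idx 0)) (hp _) (g.symm.toAddMonoidHom.comp Φ) ?_
    refine g.symm.injective.comp ?_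
    intro a b hab
    ext k
    have := congrFun hab (idx k)
    have hh : ∃ k', idx k' = idx k := ⟨k, rfl⟩
    have hk : hh.choose = k := hinj hh.choose_spec
    simp only [Φ, AddMonoidHom.coe_mk, ZeroHom.coe_mk] at this
    rw [dif_pos hh, dif_pos hh] at this
    have := hψ _ (hpeq k) (hpos k) this
    rwa [hk] at this
  let o := Fintype.equivFin ι
  let P : ι → Prop := fun i => ∃ j, o j < o i ∧ p j = p i ∧ 0 < e j
  have cop : ∀ i j, i ≠ j → (P i ↔ P j) → Nat.Coprime (p i ^ e i) (p j ^ e j) := by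
    have main : ∀ i j, o i < o j → (P i ↔ P j) → Nat.Coprime (p i ^ e i) (p j ^ e j) := by
      intro i j hij hP
      by_cases hei : e i = 0
      · simp [hei]
      by_cases hej : e j = 0
      · simp [hej]
      by_cases hpp : p i = p j
      · exfalso
        have hj : P j := ⟨i, hij, hpp, Nat.pos_of_ne_zero hei⟩
        obtain ⟨l, hl, hlp, hle⟩ := hP.2 hj
        refine key ![l, i, j] ?_ ?_ ?_
        · have h1 : l ≠ i := by rintro rfl; exact lt_irrefl _ hl
          have h2 : i ≠ j := by rintro rfl; exact lt_irrefl _ hij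
          have h3 : l ≠ j := by rintro rfl; exact lt_irrefl _ (hl.trans hij)
          intro a b hab
          fin_cases a <;> fin_cases b <;> simp_all
        · intro k; fin_cases k
          · exact hle
          · exact Nat.pos_of_ne_zero hei
          · exact Nat.pos_of_ne_zero hej
        · intro k; fin_cases k
          · rfl
          · exact hlp.symm
          · exact (hlp.trans hpp).symm
      · exact Nat.Coprime.pow _ _ ((Nat.coprime_primes (hp i) (hp j)).2 hpp)
    intro i j hij hP
    rcases lt_trichotomy (o i) (o j) with h1 | h1 | h1
    · exact main i j h1 hP
    · exact absurd (o.injective h1) hij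
    · exact (main j i h1 hP.symm).symm
  let s1 : (∀ i, ZMod (p i ^ e i)) ≃+
      (∀ i : {i // P i}, ZMod (p i ^ e i)) × (∀ i : {i // ¬ P i}, ZMod (p i ^ e i)) :=
    { Equiv.piEquivPiSubtypeProd P (fun i => ZMod (p i ^ e i)) with
      map_add' := fun a b => rfl }
  let c1 := ZMod.prodEquivPi (fun i : {i // P i} => p i ^ e i) (by
    intro i j hij
    exact cop _ _ (fun h => hij (Subtype.ext h)) ⟨fun _ => j.2, fun _ => i.2⟩)
  let c2 := ZMod.prodEquivPi (fun i : {i // ¬ P i} => p i ^ e i) (by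
    intro i j hij
    exact cop _ _ (fun h => hij (Subtype.ext h)) ⟨fun h => absurd h i.2, fun h => absurd h j.2⟩)
  refine ⟨_, _, ?_, ?_, ⟨(g.trans s1).trans
    (AddEquiv.prodCongr c1.symm.toAddEquiv c2.symm.toAddEquiv)⟩⟩
  · exact Finset.prod_pos fun i _ => pow_pos (hp _).pos _
  · exact Finset.prod_pos fun i _ => pow_pos (hp _).pos _

lemma two_factors_of_cyclic {H : Type} [AddCommGroup H] [Finite H] [IsAddCyclic H] :
    ∃ a b : ℕ, 0 < a ∧ 0 < b ∧ Nonempty (H ≃+ ZMod a × ZMod b) := by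
  refine ⟨Nat.card H, 1, Nat.card_pos, one_pos, ⟨?_⟩⟩
  exact (zmodAddCyclicAddEquiv inferInstance).symm.trans (AddEquiv.prodUnique).symm

end NetG

/-! ### The addition-subtraction map on points -/

namespace NetE

open WeierstrassCurve WeierstrassCurve.Affine WeierstrassCurve.Affine.Point

/-- the pair of x-coordinates is sent where it should -/
def ASP (W : WeierstrassCurve.Affine ℂ) (p q s d : Fin 2 → ℂ) : Prop :=
  ∃ c : ℂ, c ≠ 0 ∧
    (p 0 * q 0) ^ 2 - W.b₄ * (p 0 * q 0) * (p 1 * q 1)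
      - W.b₆ * (p 0 * q 1 + p 1 * q 0) * (p 1 * q 1) - W.b₈ * (p 1 * q 1) ^ 2
      = c * (s 0 * d 0) ∧
    2 * (p 0 * q 1 + p 1 * q 0) * (p 0 * q 0) + W.b₂ * (p 0 * q 0) * (p 1 * q 1)
      + W.b₄ * (p 0 * q 1 + p 1 * q 0) * (p 1 * q 1) + W.b₆ * (p 1 * q 1) ^ 2
      = c * (s 0 * d 1 + s 1 * d 0) ∧
    (p 0 * q 1 + p 1 * q 0) ^ 2 - 4 * (p 0 * q 0) * (p 1 * q 1) = c * (s 1 * d 1)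

lemma addSub_ne (W : WeierstrassCurve.Affine ℂ) [W.IsElliptic] (s t u : ℂ)
    (h : s ≠ 0 ∨ t ≠ 0 ∨ u ≠ 0) :
    s ^ 2 - W.b₄ * s * u - W.b₆ * t * u - W.b₈ * u ^ 2 ≠ 0 ∨
    2 * t * s + W.b₂ * s * u + W.b₄ * t * u + W.b₆ * u ^ 2 ≠ 0 ∨
    t ^ 2 - 4 * s * u ≠ 0 := by
  by_contra hc
  push Not at hc
  obtain ⟨h0, h1, h2⟩ := hc
  have hx : (![s, t, u] : Fin 3 → ℂ) ≠ 0 := by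
    intro hz
    have a := congrFun hz 0
    have b := congrFun hz 1
    have c := congrFun hz 2
    simp at a b c
    rcases h with h | h | h
    · exact h a
    · exact h b
    · exact h c
  apply addSubMap_ne_zero W hx
  ext i
  fin_cases i <;> simp [addSubMap]
  · exact h0
  · exact h1
  · exact h2

lemma asp_self (W : WeierstrassCurve.Affine ℂ) [W.IsElliptic] (P : W.Point) :
    ASP W P.xRep P.xRep (P + P).xRep (0 : W.Point).xRep := by
  match P with
  | 0 => exact ⟨1, one_ne_zero, by simp⟩
  | .some x y h =>
    have heq := (equation_iff x y).1 h.1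
    by_cases hy : y = W.negY x y
    · rw [add_self_of_Y_eq hy]
      have h2 : 2 * (2 * x) * x ^ 2 + W.b₂ * x ^ 2 * 1 + W.b₄ * (2 * x) * 1 + W.b₆ * 1 ^ 2 = 0 := by
        have : 2 * y + W.a₁ * x + W.a₃ = 0 := by
          rw [negY] at hy; linear_combination hy
        simp only [b₂, b₄, b₆]
        linear_combination (-4) * heq + (2 * y + W.a₁ * x + W.a₃) * this
      have hne := addSub_ne W (x ^ 2) (2 * x) 1 (by simp)
      refine ⟨_, (hne.resolve_right ?_), ?_, ?_, ?_⟩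
      · rintro (h' | h')
        · exact h' h2
        · apply h'; ring
      · simp; ring
      · simp; linear_combination h2
      · simp; ring
    · rw [add_some (fun hh => hy hh.2)]
      have hD : 2 * y + W.a₁ * x + W.a₃ ≠ 0 := by
        intro h'; apply hy; rw [negY]; linear_combination h'
      refine ⟨(2 * y + W.a₁ * x + W.a₃) ^ 2, pow_ne_zero 2 hD, ?_, ?_, ?_⟩
      · simp only [xRep_some, xRep_zero, Matrix.cons_val_zero, Matrix.cons_val_one]
        rw [slope_of_Y_ne rfl hy, addX, negY]
        have e : y - (-y - W.a₁ * x - W.a₃) = 2 * y + W.a₁ * x + W.a₃ := by ring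
        rw [e]
        generalize hl : (3 * x ^ 2 + 2 * W.a₂ * x + W.a₄ - W.a₁ * y) /
          (2 * y + W.a₁ * x + W.a₃) = l
        rw [div_eq_iff hD] at hl
        simp only [b₄, b₆, b₈]
        clear hy h e
        grind only
      · simp only [xRep_some, xRep_zero, Matrix.cons_val_zero, Matrix.cons_val_one]
        simp only [b₂, b₄, b₆, b₈]
        linear_combination (-4) * heq
      · simp; ring

lemma asp (W : WeierstrassCurve.Affine ℂ) [W.IsElliptic] (P Q : W.Point) :
    ASP W P.xRep Q.xRep (P + Q).xRep (P - Q).xRep := by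
  by_cases hx : P.xRep = Q.xRep
  · rcases eq_or_eq_neg_of_xRep_eq_xRep hx with rfl | rfl
    · rw [sub_self]; exact asp_self W P
    · have := asp_self W Q
      obtain ⟨c, hc, h0, h1, h2⟩ := this
      refine ⟨c, hc, ?_, ?_, ?_⟩
      all_goals
        rw [xRep_neg, neg_add_cancel, show -Q - Q = -(Q + Q) by abel, xRep_neg]
      · rw [h0]; ring
      · rw [h1]; ring
      · rw [h2]; ring
  · match P, Q, hx with
    | 0, 0, hx => exact absurd rfl hx
    | 0, .some x y h, _ =>
      rw [zero_add, zero_sub, xRep_neg]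
      refine ⟨1, one_ne_zero, ?_, ?_, ?_⟩ <;> simp <;> ring
    | .some x y h, 0, _ =>
      rw [add_zero, sub_zero]
      refine ⟨1, one_ne_zero, ?_, ?_, ?_⟩ <;> simp <;> ring
    | .some x y h, .some x' y' h', hx =>
      have hne : x ≠ x' := by
        intro hh; apply hx; simp [hh]
      have e1 := (equation_iff x y).1 h.1
      have e2 := (equation_iff x' y').1 h'.1
      rw [sub_eq_add_neg, neg_some, add_some (fun hh => hne hh.1), add_some (fun hh => hne hh.1)]
      have hd : x - x' ≠ 0 := sub_ne_zero.2 hne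
      refine ⟨(x - x') ^ 2, pow_ne_zero 2 hd, ?_, ?_, ?_⟩
      · simp only [xRep_some, Matrix.cons_val_zero, Matrix.cons_val_one]
        rw [slope_of_X_ne hne, slope_of_X_ne hne]
        simp only [addX, negY]
        field_simp
        simp only [b₂, b₄, b₆, b₈]
        grind only
      · simp only [xRep_some, Matrix.cons_val_zero, Matrix.cons_val_one]
        rw [slope_of_X_ne hne, slope_of_X_ne hne]
        simp only [addX, negY]
        field_simp
        simp only [b₂, b₄, b₆, b₈]
        linear_combination (-2) * e1 + (-2) * e2
      · simp; ring

end NetE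

namespace NetE

open WeierstrassCurve WeierstrassCurve.Affine WeierstrassCurve.Affine.Point Polynomial

lemma exists_point (W : WeierstrassCurve.Affine ℂ) [W.IsElliptic] (x : ℂ) :
    ∃ y, W.Nonsingular x y := by
  obtain ⟨y, hy⟩ := IsAlgClosed.exists_root
    (X ^ 2 + C (W.a₁ * x + W.a₃) * X - C (x ^ 3 + W.a₂ * x ^ 2 + W.a₄ * x + W.a₆) : ℂ[X])
    (by
      have : (X ^ 2 + C (W.a₁ * x + W.a₃) * X -
        C (x ^ 3 + W.a₂ * x ^ 2 + W.a₄ * x + W.a₆) : ℂ[X]).degree = 2 := by compute_degree!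
      rw [this]; norm_num)
  refine ⟨y, equation_iff_nonsingular.1 ((equation_iff x y).2 ?_)⟩
  simp at hy
  linear_combination hy

lemma split_rel (u v G0 G1 G2 : ℂ[X]) (hu : u ≠ 0) (hc : IsCoprime u v)
    (h : G0 * u ^ 2 - G1 * (u * v) + G2 * v ^ 2 = 0) :
    ∃ U V : ℂ[X], G2 = u * U ∧ G1 = u * V + v * U ∧ G0 = v * V := by
  obtain ⟨U, hU⟩ : u ∣ G2 := by
    have : u ∣ G2 * v ^ 2 := ⟨G1 * v - G0 * u, by linear_combination h⟩
    exact (hc.pow_right).dvd_of_dvd_mul_right this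
  by_cases hv : v = 0
  · subst hv
    have hun : IsUnit u := isCoprime_zero_right.1 hc
    obtain ⟨V, hV⟩ : u ∣ G1 := hun.dvd
    refine ⟨U, V, hU, by simp [hV], ?_⟩
    have : G0 * u ^ 2 = 0 := by linear_combination h
    simpa [hu] using this
  · obtain ⟨V, hV⟩ : v ∣ G0 := by
      have : v ∣ G0 * u ^ 2 := ⟨G1 * u - G2 * v, by linear_combination h⟩
      exact (hc.symm.pow_right).dvd_of_dvd_mul_right this
    refine ⟨U, V, hU, ?_, hV⟩
    subst hU hV
    have : u * v * (u * V + v * U - G1) = 0 := by linear_combination h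
    have := (mul_eq_zero.1 this).resolve_left (mul_ne_zero hu hv)
    linear_combination -this

lemma sy_cancel (a0 a1 b0 b1 : ℂ) (hb : b0 ≠ 0 ∨ b1 ≠ 0) (h0 : a0 * b0 = 0)
    (h1 : a0 * b1 + a1 * b0 = 0) (h2 : a1 * b1 = 0) : a0 = 0 ∧ a1 = 0 := by
  rcases hb with hb | hb
  · have : a0 = 0 := by simpa [hb] using h0
    subst this
    refine ⟨rfl, by simpa [hb] using h1⟩
  · have : a1 = 0 := by simpa [hb] using h2
    subst this
    refine ⟨by simpa [hb] using h1, rfl⟩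

/-- `n • P` has x-coordinate `U / V`. -/
structure MulPoly (W : WeierstrassCurve.Affine ℂ) (n : ℕ) (U V : ℂ[X]) : Prop where
  monic : U.Monic
  deg : U.natDegree = n ^ 2
  degV : V.degree < (n ^ 2 : ℕ)
  cop : IsCoprime U V
  spec : ∀ x y (h : W.Nonsingular x y), ∃ c : ℂ, c ≠ 0 ∧
    (n • (Point.some x y h)).xRep 0 = c * U.eval x ∧ (n • (Point.some x y h)).xRep 1 = c * V.eval x

lemma mulPoly_zero (W : WeierstrassCurve.Affine ℂ) : MulPoly W 0 1 0 where
  monic := monic_one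
  deg := by simp
  degV := by simp
  cop := isCoprime_one_left
  spec := fun x y h => ⟨1, one_ne_zero, by simp, by simp⟩

lemma mulPoly_one (W : WeierstrassCurve.Affine ℂ) : MulPoly W 1 X 1 where
  monic := monic_X
  deg := by simp
  degV := by simp
  cop := isCoprime_one_right
  spec := fun x y h => ⟨1, one_ne_zero, by simp, by simp⟩

lemma mulPoly_step (W : WeierstrassCurve.Affine ℂ) [W.IsElliptic] (n : ℕ) (u v U V : ℂ[X])
    (h1 : MulPoly W n u v) (h2 : MulPoly W (n + 1) U V) :
    ∃ U' V' : ℂ[X], MulPoly W (n + 2) U' V' := by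
  obtain ⟨s, hs⟩ : ∃ s, s = U * X := ⟨_, rfl⟩
  obtain ⟨t, ht⟩ : ∃ t, t = U + V * X := ⟨_, rfl⟩
  obtain ⟨G2, hG2⟩ : ∃ G, G = s ^ 2 - C W.b₄ * s * V - C W.b₆ * t * V - C W.b₈ * V ^ 2 := ⟨_, rfl⟩
  obtain ⟨G1, hG1⟩ : ∃ G, G = 2 * t * s + C W.b₂ * s * V + C W.b₄ * t * V + C W.b₆ * V ^ 2 :=
    ⟨_, rfl⟩
  obtain ⟨G0, hG0⟩ : ∃ G, G = t ^ 2 - 4 * s * V := ⟨_, rfl⟩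
  -- pointwise
  have pw : ∀ x y (h : W.Nonsingular x y), ∃ c : ℂ, c ≠ 0 ∧
      G2.eval x = c * (((n + 2) • Point.some x y h).xRep 0 * u.eval x) ∧
      G1.eval x = c * (((n + 2) • Point.some x y h).xRep 0 * v.eval x +
        ((n + 2) • Point.some x y h).xRep 1 * u.eval x) ∧
      G0.eval x = c * (((n + 2) • Point.some x y h).xRep 1 * v.eval x) := by
    intro x y h
    obtain ⟨c, hc, e0, e1, e2⟩ := asp W ((n + 1) • Point.some x y h) (Point.some x y h)
    obtain ⟨c1, hc1, f0, f1⟩ := h1.spec x y h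
    obtain ⟨c2, hc2, g0, g1⟩ := h2.spec x y h
    have a1 : (n + 1) • Point.some x y h + Point.some x y h = (n + 2) • Point.some x y h := by
      rw [← succ_nsmul]
    have a2 : (n + 1) • Point.some x y h - Point.some x y h = n • Point.some x y h := by
      rw [succ_nsmul, add_sub_cancel_right]
    rw [a1, a2] at e0 e1 e2
    rw [f0, g0, g1] at e0
    rw [f0, f1, g0, g1] at e1
    rw [f1, g0, g1] at e2
    simp only [xRep_some, Matrix.cons_val_zero, Matrix.cons_val_one] at e0 e1 e2
    refine ⟨c * c1 / c2 ^ 2, by positivity, ?_, ?_, ?_⟩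
    · rw [hG2, hs, ht]; simp
      field_simp
      linear_combination e0
    · rw [hG1, hs, ht]; simp
      field_simp
      linear_combination e1
    · rw [hG0, hs, ht]; simp
      field_simp
      linear_combination e2
  have rel : G0 * u ^ 2 - G1 * (u * v) + G2 * v ^ 2 = 0 := by
    apply Polynomial.funext
    intro x
    obtain ⟨y, h⟩ := exists_point W x
    obtain ⟨c, hc, e0, e1, e2⟩ := pw x y h
    simp [e0, e1, e2]
    ring
  obtain ⟨U', V', k2, k1, k0⟩ := split_rel u v G0 G1 G2 h1.monic.ne_zero h1.cop rel
  -- degrees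
  have hUd : U.degree = ((n + 1) ^ 2 : ℕ) := by
    rw [degree_eq_natDegree h2.monic.ne_zero, h2.deg]
  have hud : u.degree = (n ^ 2 : ℕ) := by
    rw [degree_eq_natDegree h1.monic.ne_zero, h1.deg]
  have hsm : s.Monic := by rw [hs]; exact h2.monic.mul monic_X
  have hsd : s.natDegree = (n + 1) ^ 2 + 1 := by
    rw [hs, h2.monic.natDegree_mul monic_X, h2.deg, natDegree_X]
  have hVle : V.natDegree ≤ (n + 1) ^ 2 - 1 := by
    by_cases hV : V = 0
    · simp [hV]
    · have := h2.degV
      rw [degree_eq_natDegree hV] at this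
      have := Nat.cast_lt.1 this
      omega
  have hpos : 1 ≤ (n + 1) ^ 2 := Nat.one_le_pow _ _ (by omega)
  have htd : t.natDegree ≤ (n + 1) ^ 2 := by
    rw [ht]
    refine natDegree_add_le_of_degree_le h2.deg.le ?_
    refine natDegree_mul_le.trans ?_
    rw [natDegree_X]; omega
  obtain ⟨N, hN⟩ : ∃ N, (n + 1) ^ 2 = N + 1 := ⟨(n + 1) ^ 2 - 1, by omega⟩
  rw [hN] at hVle htd hsd
  simp only [Nat.add_sub_cancel] at hVle
  have hG2m : G2.Monic ∧ G2.natDegree = 2 * N + 4 := by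
    have hr : (C W.b₄ * s * V + C W.b₆ * t * V + C W.b₈ * V ^ 2).natDegree ≤ 2 * N + 3 := by
      refine natDegree_add_le_of_degree_le (natDegree_add_le_of_degree_le ?_ ?_) ?_
      · refine natDegree_mul_le.trans ?_
        have := natDegree_C_mul_le W.b₄ s
        omega
      · refine natDegree_mul_le.trans ?_
        have := natDegree_C_mul_le W.b₆ t
        omega
      · refine (natDegree_C_mul_le _ _).trans ?_
        refine natDegree_pow_le.trans ?_
        omega
    have hs2 : (s ^ 2).natDegree = 2 * N + 4 := by
      rw [hsm.natDegree_pow, hsd]; ring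
    have e : G2 = s ^ 2 - (C W.b₄ * s * V + C W.b₆ * t * V + C W.b₈ * V ^ 2) := by
      rw [hG2]; ring
    have hlt : (C W.b₄ * s * V + C W.b₆ * t * V + C W.b₈ * V ^ 2).degree < (s ^ 2).degree := by
      apply degree_lt_degree
      omega
    constructor
    · rw [e]; exact (hsm.pow 2).sub_of_left hlt
    · rw [e, natDegree_sub_eq_left_of_natDegree_lt (by omega), hs2]
  have hU'm : U'.Monic := by
    have := hG2m.1
    rw [k2] at this
    exact h1.monic.of_mul_monic_left this
  have hU'd : U'.natDegree = (n + 2) ^ 2 := by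
    have := hG2m.2
    rw [k2, h1.monic.natDegree_mul hU'm, h1.deg] at this
    nlinarith
  have hG1d : G1.natDegree ≤ 2 * N + 3 := by
    rw [hG1]
    refine natDegree_add_le_of_degree_le (natDegree_add_le_of_degree_le
      (natDegree_add_le_of_degree_le ?_ ?_) ?_) ?_
    · rw [mul_assoc, show (2 : ℂ[X]) = C 2 from rfl]
      refine (natDegree_C_mul_le _ _).trans ?_
      refine natDegree_mul_le.trans ?_
      omega
    · refine natDegree_mul_le.trans ?_
      have := natDegree_C_mul_le W.b₂ s
      omega
    · refine natDegree_mul_le.trans ?_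
      have := natDegree_C_mul_le W.b₄ t
      omega
    · refine (natDegree_C_mul_le _ _).trans ?_
      refine natDegree_pow_le.trans ?_
      omega
  have hV'd : V'.degree < ((n + 2) ^ 2 : ℕ) := by
    have e : u * V' = G1 - v * U' := by rw [k1]; ring
    have hU'dd : U'.degree = ((n + 2) ^ 2 : ℕ) := by
      rw [degree_eq_natDegree hU'm.ne_zero, hU'd]
    have e2 : (u * V').degree < ((n ^ 2 + (n + 2) ^ 2 : ℕ) : WithBot ℕ) := by
      rw [e]
      refine (degree_sub_le _ _).trans_lt (max_lt ?_ ?_)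
      · refine degree_le_natDegree.trans_lt ?_
        rw [Nat.cast_lt]
        nlinarith
      · rw [degree_mul, hU'dd]
        push_cast
        refine WithBot.add_lt_add_right (by norm_cast; exact WithBot.coe_ne_bot) ?_
        exact_mod_cast h1.degV
    rw [degree_mul, hud] at e2
    by_cases hV' : V' = 0
    · rw [hV', degree_zero]; exact WithBot.bot_lt_coe _
    · rw [degree_eq_natDegree hV'] at e2 ⊢
      norm_cast at e2 ⊢
      omega
  have hne : ∀ x : ℂ, u.eval x ≠ 0 ∨ v.eval x ≠ 0 := by
    have := (isCoprime_iff_aeval_ne_zero_of_isAlgClosed ℂ ℂ u v).1 h1.cop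
    simpa using this
  have hne2 : ∀ x : ℂ, U.eval x ≠ 0 ∨ V.eval x ≠ 0 := by
    have := (isCoprime_iff_aeval_ne_zero_of_isAlgClosed ℂ ℂ U V).1 h2.cop
    simpa using this
  refine ⟨U', V', ⟨hU'm, hU'd, hV'd, ?_, ?_⟩⟩
  · rw [isCoprime_iff_aeval_ne_zero_of_isAlgClosed ℂ ℂ]
    intro x
    by_contra hcon
    push Not at hcon
    obtain ⟨z1, z2⟩ := hcon
    simp only [coe_aeval_eq_eval] at z1 z2
    have q2 := congrArg (eval x) k2
    have q1 := congrArg (eval x) k1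
    have q0 := congrArg (eval x) k0
    simp [z1, z2] at q2 q1 q0
    have := addSub_ne W (s.eval x) (t.eval x) (V.eval x) (by
      by_contra hcc
      push Not at hcc
      obtain ⟨r0, r1, r2⟩ := hcc
      rw [ht] at r1
      simp [r2] at r1
      rcases hne2 x with h | h
      · exact h r1
      · exact h r2)
    rw [hG2] at q2
    rw [hG1] at q1
    rw [hG0] at q0
    simp at q0 q1 q2
    rcases this with h | h | h
    · exact h q2
    · exact h q1
    · exact h q0
  · intro x y h
    obtain ⟨c, hc, e0, e1, e2⟩ := pw x y h
    refine ⟨1 / c, one_div_ne_zero hc, ?_⟩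
    have := sy_cancel (((n + 2) • Point.some x y h).xRep 0 * c - U'.eval x)
      (((n + 2) • Point.some x y h).xRep 1 * c - V'.eval x) (u.eval x) (v.eval x) (hne x)
      (by rw [k2] at e0; simp at e0; linear_combination -e0)
      (by rw [k1] at e1; simp at e1; linear_combination -e1)
      (by rw [k0] at e2; simp at e2; linear_combination -e2)
    constructor
    · field_simp; linear_combination this.1
    · field_simp; linear_combination this.2

lemma exists_mulPoly (W : WeierstrassCurve.Affine ℂ) [W.IsElliptic] (n : ℕ) :
    ∃ U V : ℂ[X], MulPoly W n U V := by
  suffices ∀ n, (∃ U V : ℂ[X], MulPoly W n U V) ∧ ∃ U V : ℂ[X], MulPoly W (n + 1) U V from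
    (this n).1
  intro n
  induction n with
  | zero => exact ⟨⟨_, _, mulPoly_zero W⟩, ⟨_, _, mulPoly_one W⟩⟩
  | succ n ih =>
    obtain ⟨⟨u, v, h1⟩, ⟨U, V, h2⟩⟩ := ih
    exact ⟨⟨U, V, h2⟩, mulPoly_step W n u v U V h1 h2⟩

end NetE

namespace NetE

open WeierstrassCurve WeierstrassCurve.Affine WeierstrassCurve.Affine.Point Polynomial

variable (W : WeierstrassCurve.Affine ℂ) [W.IsElliptic]

lemma MulPoly.V_ne {n : ℕ} {U V : ℂ[X]} (h : MulPoly W n U V) (hn : 0 < n) : V ≠ 0 := by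
  rintro rfl
  have := isCoprime_zero_right.1 h.cop
  have h1 := natDegree_eq_zero_of_isUnit this
  rw [h.deg] at h1
  have := pow_pos hn 2
  omega

lemma MulPoly.tors {n : ℕ} {U V : ℂ[X]} (h : MulPoly W n U V) {x y : ℂ} (hxy : W.Nonsingular x y)
    (h0 : n • Point.some x y hxy = 0) : V.eval x = 0 := by
  obtain ⟨c, hc, -, e⟩ := h.spec x y hxy
  rw [h0] at e
  simpa [hc] using e.symm

/-- the first coordinate, with junk value at infinity -/
noncomputable def px (P : W.Point) : ℂ := P.xRep 0

lemma px_eq {P Q : W.Point} (hP : P ≠ 0) (hQ : Q ≠ 0) (h : px W P = px W Q) : P = Q ∨ P = -Q := by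
  match P, Q, hP, hQ with
  | .some x y h1, .some x' y' h2, _, _ =>
    apply eq_or_eq_neg_of_xRep_eq_xRep
    simp [px] at h
    simp [h]

lemma MulPoly.tors' {n : ℕ} {U V : ℂ[X]} (h : MulPoly W n U V) {P : W.Point} (hP : P ≠ 0)
    (h0 : n • P = 0) : V.eval (px W P) = 0 := by
  match P, hP with
  | .some x y h1, _ =>
    simpa [px] using h.tors W h1 h0

lemma finite_tors {n : ℕ} (hn : 0 < n) (s : Finset W.Point) (hs : ∀ P ∈ s, n • P = 0 ∧ P ≠ 0) :
    s.card ≤ 2 * (n ^ 2 - 1) := by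
  classical
  obtain ⟨U, V, h⟩ := exists_mulPoly W n
  have hV := h.V_ne W hn
  have h1 : s.card ≤ 2 * (s.image (px W)).card := by
    refine Finset.card_le_mul_card_image s 2 ?_
    intro a ha
    obtain ⟨P, hP, rfl⟩ := Finset.mem_image.1 ha
    refine (Finset.card_le_card (t := {P, -P}) ?_).trans Finset.card_le_two
    intro Q hQ
    rw [Finset.mem_filter] at hQ
    have := px_eq W (hs Q hQ.1).2 (hs P hP).2 hQ.2
    simpa using this
  have h2 : s.image (px W) ⊆ V.roots.toFinset := by
    intro a ha
    obtain ⟨P, hP, rfl⟩ := Finset.mem_image.1 ha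
    rw [Multiset.mem_toFinset, mem_roots hV]
    exact h.tors' W (hs P hP).2 (hs P hP).1
  have h3 := (Finset.card_le_card h2).trans ((Multiset.toFinset_card_le _).trans (card_roots' V))
  have h4 := h.degV
  rw [degree_eq_natDegree hV] at h4
  have := Nat.cast_lt.1 h4
  omega

lemma no_three (p : ℕ) (hp : p.Prime) (φ : (Fin 3 → ZMod p) →+ W.Point) :
    ¬ Function.Injective φ := by
  classical
  intro hφ
  haveI : NeZero p := ⟨hp.ne_zero⟩
  have := finite_tors W hp.pos ((Finset.univ.erase 0).image φ) (by
    intro P hP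
    obtain ⟨a, ha, rfl⟩ := Finset.mem_image.1 hP
    constructor
    · rw [← map_nsmul]
      have : p • a = 0 := by ext i; simp
      rw [this, _root_.map_zero]
    · intro h0
      rw [← _root_.map_zero φ] at h0
      exact (Finset.mem_erase.1 ha).1 (hφ h0))
  rw [Finset.card_image_of_injective _ hφ, Finset.card_erase_of_mem (Finset.mem_univ _)] at this
  simp [ZMod.card] at this
  have h2 := hp.two_le
  have h3 : 2 * p ^ 2 ≤ p ^ 3 := by nlinarith [sq_nonneg p]
  have h4 : 0 < p ^ 2 := pow_pos hp.pos 2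
  omega

lemma exists_fibre {n : ℕ} (hn : 0 < n) :
    ∃ s : Finset W.Point, n ^ 2 ≤ s.card ∧ ∀ P ∈ s, n • P = 0 := by
  classical
  obtain ⟨U, V, h⟩ := exists_mulPoly W n
  have hV := h.V_ne W hn
  have hn2 : 0 < n ^ 2 := pow_pos hn 2
  have hne : ∀ x : ℂ, U.eval x ≠ 0 ∨ V.eval x ≠ 0 := by
    have := (isCoprime_iff_aeval_ne_zero_of_isAlgClosed ℂ ℂ U V).1 h.cop
    simpa using this
  have hW : derivative U * V - U * derivative V ≠ 0 := by
    intro h0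
    have h1 : U ∣ derivative U * V := ⟨derivative V, by linear_combination h0⟩
    have h2 : U ∣ derivative U := h.cop.dvd_of_dvd_mul_right h1
    have h3 : derivative U = 0 := by
      refine eq_zero_of_dvd_of_degree_lt h2 (degree_derivative_lt h.monic.ne_zero)
    have := natDegree_eq_zero_of_derivative_eq_zero h3
    rw [h.deg] at this
    omega
  obtain ⟨c, hc⟩ := Infinite.exists_notMem_finset
    ((derivative U * V - U * derivative V).roots.toFinset.image (fun r => U.eval r / V.eval r))
  have hVr : ∀ x, (U - C c * V).eval x = 0 → V.eval x ≠ 0 := by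
    intro x hx h0
    simp [h0] at hx
    rcases hne x with h | h
    · exact h hx
    · exact h h0
  have hdeg : (U - C c * V).natDegree = n ^ 2 := by
    rw [natDegree_sub_eq_left_of_natDegree_lt, h.deg]
    rw [h.deg]
    refine (natDegree_C_mul_le _ _).trans_lt ?_
    have h4 := h.degV
    rw [degree_eq_natDegree hV] at h4
    exact_mod_cast h4
  have hsep : (U - C c * V).Separable := by
    rw [Separable, isCoprime_iff_aeval_ne_zero_of_isAlgClosed ℂ ℂ]
    intro x
    by_contra hcon
    push Not at hcon
    simp only [coe_aeval_eq_eval] at hcon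
    obtain ⟨e1, e2⟩ := hcon
    have hv := hVr x e1
    simp at e1 e2
    apply hc
    rw [Finset.mem_image]
    refine ⟨x, ?_, ?_⟩
    · rw [Multiset.mem_toFinset, mem_roots hW]
      simp only [IsRoot.def, eval_sub, eval_mul]
      linear_combination eval x V * e2 - eval x (derivative V) * e1
    · rw [div_eq_iff hv]; linear_combination e1
  have hcard : (U - C c * V).roots.toFinset.card = n ^ 2 := by
    rw [Multiset.toFinset_card_of_nodup (nodup_roots hsep), ← hdeg]
    exact (IsAlgClosed.splits _).natDegree_eq_card_roots.symm
  have hF0 : U - C c * V ≠ 0 := by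
    intro h0; rw [h0] at hdeg; simp at hdeg; omega
  obtain ⟨yq, hq⟩ := exists_point W c
  have hpt : ∀ x, (U - C c * V).eval x = 0 → ∃ P : W.Point, px W P = x ∧ n • P = .some c yq hq := by
    intro x hx
    have hv := hVr x hx
    obtain ⟨y, hxy⟩ := exists_point W x
    obtain ⟨k, hk, e0, e1⟩ := h.spec x y hxy
    have hnz : n • Point.some x y hxy ≠ 0 := by
      intro h0
      rw [h0] at e1
      simp [hk, hv] at e1
    have hpx : px W (n • Point.some x y hxy) = px W (.some c yq hq) := by
      rw [px, e0]
      have h1 : (n • Point.some x y hxy).xRep 1 = 1 := by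
        match hm : n • Point.some x y hxy, hnz with
        | .some _ _ _, _ => simp
      rw [h1] at e1
      simp at hx
      simp only [px, xRep_some, Matrix.cons_val_zero]
      linear_combination k * hx - c * e1
    rcases px_eq W hnz (by exact Point.some_ne_zero _) hpx with h1 | h1
    · exact ⟨_, by simp [px], h1⟩
    · refine ⟨-Point.some x y hxy, by simp only [px, xRep_neg]; simp, ?_⟩
      rw [neg_nsmul, h1, neg_neg]
  choose! f hf1 hf2 using hpt
  have hroot : ∀ x ∈ (U - C c * V).roots.toFinset, (U - C c * V).eval x = 0 := by
    intro x hx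
    rw [Multiset.mem_toFinset, mem_roots hF0] at hx
    exact hx
  have hne' : (U - C c * V).roots.toFinset.Nonempty := by
    rw [← Finset.card_pos]; omega
  obtain ⟨x0, hx0⟩ := hne'
  refine ⟨(U - C c * V).roots.toFinset.image (fun x => f x - f x0), ?_, ?_⟩
  · rw [Finset.card_image_of_injOn, hcard]
    intro a ha b hb hab
    have : f a = f b := by simpa using hab
    rw [← hf1 a (hroot a ha), ← hf1 b (hroot b hb), this]
  · intro P hP
    obtain ⟨x, hx, rfl⟩ := Finset.mem_image.1 hP
    rw [nsmul_sub, hf2 x (hroot x hx), hf2 x0 (hroot x0 hx0), sub_self]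

lemma exists_torsion {n : ℕ} (hn : 0 < n) :
    ∃ ψ : ZMod n × ZMod n →+ W.Point, Function.Injective ψ := by
  classical
  let T : AddSubgroup W.Point := (nsmulAddMonoidHom n : W.Point →+ W.Point).ker
  have hT : ∀ P : W.Point, P ∈ T ↔ n • P = 0 := fun P => by
    simp [T, AddMonoidHom.mem_ker]
  have hfin : Set.Finite {P : W.Point | P ∈ T ∧ P ≠ 0} := by
    by_contra hinf
    obtain ⟨s, hs, hc⟩ := Set.Infinite.exists_subset_card_eq hinf (2 * (n ^ 2 - 1) + 1)
    have := finite_tors W hn s (fun P hP => ⟨(hT P).1 (hs hP).1, (hs hP).2⟩)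
    omega
  haveI : Finite T := by
    refine Set.Finite.subset (hfin.insert 0) ?_
    intro P hP
    by_cases h : P = 0
    · exact Or.inl h
    · exact Or.inr ⟨hP, h⟩
  obtain ⟨a, b, ha, hb, ⟨e⟩⟩ := NetG.two_factors (H := T) (by
    intro p hp φ hφ
    exact no_three W p hp (T.subtype.comp φ) (Subtype.val_injective.comp hφ))
  haveI : NeZero a := ⟨ha.ne'⟩
  haveI : NeZero b := ⟨hb.ne'⟩
  have hcard : n ^ 2 ≤ a * b := by
    obtain ⟨s, hs, hs'⟩ := exists_fibre W hn
    have h1 : Nat.card T = a * b := by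
      rw [Nat.card_congr e.toEquiv]; simp
    rw [← h1]
    refine hs.trans ?_
    have : (s : Set W.Point) ⊆ T := fun P hP => (hT P).2 (hs' P hP)
    have h2 := Set.ncard_le_ncard this (Set.toFinite _)
    rw [Set.ncard_coe_finset] at h2
    exact h2.trans (le_of_eq rfl)
  have kill : ∀ z : ZMod a × ZMod b, n • z = 0 := by
    intro z
    apply e.symm.injective
    rw [map_nsmul, _root_.map_zero]
    ext
    exact (hT _).1 (e.symm z).2
  have hna : a ∣ n := by
    have := congrArg Prod.fst (kill (1, 0))
    simp at this
    exact (ZMod.natCast_eq_zero_iff n a).1 this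
  have hnb : b ∣ n := by
    have := congrArg Prod.snd (kill (0, 1))
    simp at this
    exact (ZMod.natCast_eq_zero_iff n b).1 this
  have hae := Nat.le_of_dvd hn hna
  have hbe := Nat.le_of_dvd hn hnb
  obtain rfl : a = n := by nlinarith
  obtain rfl : b = a := by nlinarith
  exact ⟨T.subtype.comp e.symm.toAddMonoidHom,
    Subtype.val_injective.comp e.symm.injective⟩

end NetE

/-! ### Vector form of nets -/

namespace Net3

/-- 3×3 determinant -/
def det3 (u v w : Fin 3 → ℂ) : ℂ :=
  u 0 * (v 1 * w 2 - v 2 * w 1) - u 1 * (v 0 * w 2 - v 2 * w 0) + u 2 * (v 0 * w 1 - v 1 * w 0)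

/-- net in vector form -/
def Net {H : Type} [AddCommGroup H] (A B C : H → Fin 3 → ℂ) : Prop :=
  ∀ x y z, det3 (A x) (B y) (C z) = 0 ↔ x + y + z = 0

lemma det3_eq_det (u v w : Fin 3 → ℂ) : det3 u v w = (Matrix.of ![u, v, w]).det := by
  rw [Matrix.det_fin_three]; simp [det3]; ring

lemma li_iff_det3 (u v w : Fin 3 → ℂ) : LinearIndependent ℂ ![u, v, w] ↔ det3 u v w ≠ 0 := by
  rw [det3_eq_det, ← isUnit_iff_ne_zero, ← Matrix.isUnit_iff_isUnit_det,
    ← Matrix.linearIndependent_rows_iff_isUnit]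
  rfl

lemma collin_iff (p q r : P2) : Collin p q r ↔ det3 p.rep q.rep r.rep = 0 := by
  have h := li_iff_det3 p.rep q.rep r.rep
  rw [linearIndependent_iff_card_eq_finrank_span] at h
  have hr : Set.range ![p.rep, q.rep, r.rep] = {p.rep, q.rep, r.rep} := by
    simp only [Matrix.range_cons, Matrix.range_empty, Set.union_empty, Set.singleton_union]
  rw [hr, Set.finrank] at h
  rw [Collin, ← not_iff_not, ← ne_eq (det3 _ _ _), ← h]
  have hle : Module.finrank ℂ (Submodule.span ℂ {p.rep, q.rep, r.rep} : Submodule ℂ (Fin 3 → ℂ))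
      ≤ 3 := by
    have := Submodule.finrank_le (Submodule.span ℂ {p.rep, q.rep, r.rep} : Submodule ℂ (Fin 3 → ℂ))
    simpa using this
  simp only [Fintype.card_fin]
  omega

lemma det3_smul1 (c : ℂ) (u v w : Fin 3 → ℂ) : det3 (c • u) v w = c * det3 u v w := by
  simp [det3]; ring
lemma det3_smul2 (c : ℂ) (u v w : Fin 3 → ℂ) : det3 u (c • v) w = c * det3 u v w := by
  simp [det3]; ring
lemma det3_smul3 (c : ℂ) (u v w : Fin 3 → ℂ) : det3 u v (c • w) = c * det3 u v w := by
  simp [det3]; ring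
lemma det3_cyc (u v w : Fin 3 → ℂ) : det3 v w u = det3 u v w := by simp [det3]; ring
lemma det3_swap (u v w : Fin 3 → ℂ) : det3 v u w = - det3 u v w := by simp [det3]; ring

variable {H : Type} [AddCommGroup H]

lemma Net.cyc {A B C : H → Fin 3 → ℂ} (h : Net A B C) : Net B C A := by
  intro x y z
  rw [det3_cyc, h, show z + x + y = x + y + z by abel]

lemma Net.swap {A B C : H → Fin 3 → ℂ} (h : Net A B C) : Net B A C := by
  intro x y z
  rw [det3_swap, neg_eq_zero, h, show y + x + z = x + y + z by abel]

lemma Net.ne_zero [Nontrivial H] {A B C : H → Fin 3 → ℂ} (h : Net A B C) (x : H) : A x ≠ 0 := by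
  intro h0
  obtain ⟨a, ha⟩ := exists_ne (0 : H)
  have h1 : det3 (A x) (B (-x)) (C a) = 0 := by rw [h0]; simp [det3]
  rw [h] at h1
  apply ha; simpa using h1

lemma Net.inj {A B C : H → Fin 3 → ℂ} (h : Net A B C) {x x' : H} {c : ℂ}
    (hx : A x = c • A x') : x = x' := by
  have h1 : det3 (A x) (B (-x')) (C 0) = 0 := by
    rw [hx, det3_smul1, (h x' (-x') 0).2 (by abel), mul_zero]
  rw [h] at h1
  have : x - x' = 0 := by rw [← h1]; abel
  exact sub_eq_zero.1 this

lemma Net.disj [Nontrivial H] {A B C : H → Fin 3 → ℂ} (h : Net A B C) (x y : H) (c : ℂ) :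
    A x ≠ c • B y := by
  intro hx
  obtain ⟨a, ha⟩ := exists_ne (0 : H)
  have h1 : det3 (A x) (B y) (C (a - x - y)) = 0 := by
    rw [hx]; simp [det3]; ring
  rw [h] at h1
  apply ha; rw [← h1]; abel

lemma realizes_of_net [Nontrivial H] {A B C : H → Fin 3 → ℂ} (h : Net A B C) :
    ∃ p₁ p₂ p₃ : H → P2, Realizes p₁ p₂ p₃ := by
  have hA : ∀ x, A x ≠ 0 := h.ne_zero
  have hB : ∀ x, B x ≠ 0 := h.cyc.ne_zero
  have hC : ∀ x, C x ≠ 0 := h.cyc.cyc.ne_zero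
  refine ⟨fun x => Projectivization.mk ℂ (A x) (hA x), fun x => Projectivization.mk ℂ (B x) (hB x),
    fun x => Projectivization.mk ℂ (C x) (hC x), ?_, ?_, ?_, ?_, ?_, ?_, ?_⟩
  · intro x y hxy
    obtain ⟨c, hc⟩ := (Projectivization.mk_eq_mk_iff' ..).1 hxy
    exact h.inj hc.symm
  · intro x y hxy
    obtain ⟨c, hc⟩ := (Projectivization.mk_eq_mk_iff' ..).1 hxy
    exact h.cyc.inj hc.symm
  · intro x y hxy
    obtain ⟨c, hc⟩ := (Projectivization.mk_eq_mk_iff' ..).1 hxy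
    exact h.cyc.cyc.inj hc.symm
  · rw [Set.disjoint_left]
    rintro _ ⟨x, rfl⟩ ⟨y, hxy⟩
    obtain ⟨c, hc⟩ := (Projectivization.mk_eq_mk_iff' ..).1 hxy.symm
    exact h.disj _ _ _ hc.symm
  · rw [Set.disjoint_left]
    rintro _ ⟨x, rfl⟩ ⟨y, hxy⟩
    obtain ⟨c, hc⟩ := (Projectivization.mk_eq_mk_iff' ..).1 hxy
    exact h.cyc.cyc.disj _ _ _ hc.symm
  · rw [Set.disjoint_left]
    rintro _ ⟨x, rfl⟩ ⟨y, hxy⟩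
    obtain ⟨c, hc⟩ := (Projectivization.mk_eq_mk_iff' ..).1 hxy.symm
    exact h.cyc.disj _ _ _ hc.symm
  · intro x y z
    rw [collin_iff, ← h x y z]
    obtain ⟨a, ha⟩ := Projectivization.exists_smul_eq_mk_rep ℂ (A x) (hA x)
    obtain ⟨b, hb⟩ := Projectivization.exists_smul_eq_mk_rep ℂ (B y) (hB y)
    obtain ⟨c, hc⟩ := Projectivization.exists_smul_eq_mk_rep ℂ (C z) (hC z)
    rw [← ha, ← hb, ← hc]
    simp only [Units.smul_def, det3_smul1, det3_smul2, det3_smul3]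
    simp

lemma net_of_realizes {p₁ p₂ p₃ : H → P2} (h : Realizes p₁ p₂ p₃) :
    Net (fun x => (p₁ x).rep) (fun x => (p₂ x).rep) (fun x => (p₃ x).rep) := by
  intro x y z
  rw [← collin_iff]
  exact h.2.2.2.2.2.2 x y z

open WeierstrassCurve WeierstrassCurve.Affine WeierstrassCurve.Affine.Point

/-- homogeneous coordinates of points of a Weierstrass curve -/
noncomputable def vec {W : WeierstrassCurve.Affine ℂ} : W.Point → Fin 3 → ℂ
  | 0 => ![0, 1, 0]
  | .some x y _ => ![x, y, 1]

lemma vec_zero {W : WeierstrassCurve.Affine ℂ} : vec (0 : W.Point) = ![0, 1, 0] := rfl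
lemma vec_some {W : WeierstrassCurve.Affine ℂ} {x y : ℂ} (h : W.Nonsingular x y) :
  vec (Point.some x y h) = ![x, y, 1] := rfl

lemma det_vec_affine {W : WeierstrassCurve.Affine ℂ} {x₁ y₁ x₂ y₂ x₃ y₃ : ℂ}
    (h₁ : W.Nonsingular x₁ y₁) (h₂ : W.Nonsingular x₂ y₂) (h₃ : W.Nonsingular x₃ y₃)
    (h12 : Point.some x₁ y₁ h₁ ≠ Point.some x₂ y₂ h₂)
    (h13 : Point.some x₁ y₁ h₁ ≠ Point.some x₃ y₃ h₃)
    (h23 : Point.some x₂ y₂ h₂ ≠ Point.some x₃ y₃ h₃) :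
    det3 (vec (Point.some x₁ y₁ h₁)) (vec (Point.some x₂ y₂ h₂)) (vec (Point.some x₃ y₃ h₃)) = 0 ↔
      Point.some x₁ y₁ h₁ + Point.some x₂ y₂ h₂ + Point.some x₃ y₃ h₃ = 0 := by
  simp only [vec_some, det3, Matrix.cons_val_zero, Matrix.cons_val_one, Matrix.cons_val]
  by_cases hx : x₁ = x₂
  · have hn := (X_eq_iff (h₁ := h₁) (h₂ := h₂)).1 hx
    have hn := hn.resolve_left h12
    rw [hn, neg_add_cancel, zero_add]
    refine iff_of_false ?_ (by exact Point.some_ne_zero _)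
    intro h0
    subst hx
    have hy : y₁ ≠ y₂ := by
      rintro rfl; exact h12 rfl
    have : (y₁ - y₂) * (x₁ - x₃) = 0 := by linear_combination -h0
    have hx3 : x₁ = x₃ := by
      rcases mul_eq_zero.1 this with h | h
      · exact absurd (sub_eq_zero.1 h) hy
      · exact sub_eq_zero.1 h
    rcases (X_eq_iff (h₁ := h₁) (h₂ := h₃)).1 hx3 with h | h
    · exact h13 h
    · rw [hn] at h
      exact h23 (neg_injective h)
  · have key := add_eq_zero_iff_eq_neg (a := Point.some x₁ y₁ h₁ + Point.some x₂ y₂ h₂)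
      (b := Point.some x₃ y₃ h₃)
    rw [key, add_some (fun hh => hx hh.1), neg_some, Point.some.injEq]
    have hd : x₁ - x₂ ≠ 0 := sub_ne_zero.2 hx
    have hsl := slope_of_X_ne (W := W) (y₁ := y₁) (y₂ := y₂) hx
    have hpoly := addPolynomial_slope h₁.1 h₂.1 (fun hh => hx hh.1)
    generalize W.slope x₁ x₂ y₁ y₂ = l at *
    rw [eq_div_iff hd] at hsl
    constructor
    · intro h0
      have hy3 : y₃ = l * (x₃ - x₁) + y₁ := by
        have : (x₁ - x₂) * (y₃ - (l * (x₃ - x₁) + y₁)) = 0 := by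
          linear_combination -h0 - (x₃ - x₁) * hsl
        have := (mul_eq_zero.1 this).resolve_left hd
        linear_combination this
      have hroot : (W.addPolynomial x₁ y₁ l).eval x₃ = 0 := by
        have := (equation_iff x₃ y₃).1 h₃.1
        rw [addPolynomial_eq]
        simp [Cubic.toPoly]
        rw [hy3] at this
        linear_combination this
      rw [hpoly] at hroot
      simp at hroot
      have hx3 : x₃ = W.addX x₁ x₂ l := by
        rcases hroot with (h | h) | h
        · exfalso
          have hx3 : x₃ = x₁ := sub_eq_zero.1 h
          subst hx3
          apply h13
          simp [hy3]
        · exfalso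
          have hx3 : x₃ = x₂ := sub_eq_zero.1 h
          apply h23
          have hy : y₃ = y₂ := by rw [hy3, hx3]; linear_combination -hsl
          simp [hx3, hy]
        · exact sub_eq_zero.1 h
      refine ⟨hx3.symm, ?_⟩
      rw [addY, negAddY, hy3, ← hx3]
    · intro h0
      obtain ⟨e1, e2⟩ := h0
      rw [addY, e1, negY, negY, negAddY, e1] at e2
      linear_combination (x₂ - x₁) * e2 - (x₃ - x₁) * hsl

lemma sum_zero_of_det {W : WeierstrassCurve.Affine ℂ} (P Q R : W.Point)
    (h12 : P ≠ Q) (h13 : P ≠ R) (h23 : Q ≠ R) (h : det3 (vec P) (vec Q) (vec R) = 0) :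
    P + Q + R = 0 := by
  match P, Q, R, h12, h13, h23, h with
  | .some x₁ y₁ h₁, .some x₂ y₂ h₂, .some x₃ y₃ h₃, h12, h13, h23, h =>
    exact (det_vec_affine h₁ h₂ h₃ h12 h13 h23).1 h
  | 0, .some x₂ y₂ h₂, .some x₃ y₃ h₃, h12, h13, h23, h =>
    simp [vec_zero, vec_some, det3] at h
    have := ((X_eq_iff (h₁ := h₂) (h₂ := h₃)).1 (by linear_combination -h)).resolve_left h23
    rw [this]; abel
  | .some x₁ y₁ h₁, 0, .some x₃ y₃ h₃, h12, h13, h23, h =>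
    simp [vec_zero, vec_some, det3] at h
    have := ((X_eq_iff (h₁ := h₁) (h₂ := h₃)).1 (by linear_combination h)).resolve_left h13
    rw [this]; abel
  | .some x₁ y₁ h₁, .some x₂ y₂ h₂, 0, h12, h13, h23, h =>
    simp [vec_zero, vec_some, det3] at h
    have := ((X_eq_iff (h₁ := h₁) (h₂ := h₂)).1 (by linear_combination -h)).resolve_left h12
    rw [this]; abel
  | 0, 0, _, h12, _, _, _ => exact absurd rfl h12
  | 0, _, 0, _, h13, _, _ => exact absurd rfl h13
  | _, 0, 0, _, _, h23, _ => exact absurd rfl h23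

lemma det_iff_of_ne_zero {W : WeierstrassCurve.Affine ℂ} (P Q R : W.Point)
    (h1 : P ≠ 0) (h2 : Q ≠ 0) (h3 : R ≠ 0)
    (h12 : P ≠ Q) (h13 : P ≠ R) (h23 : Q ≠ R) : det3 (vec P) (vec Q) (vec R) = 0 ↔
    P + Q + R = 0 := by
  match P, Q, R, h1, h2, h3 with
  | .some x₁ y₁ h₁, .some x₂ y₂ h₂, .some x₃ y₃ h₃, _, _, _ =>
    exact det_vec_affine h₁ h₂ h₃ h12 h13 h23

/-- the curve `y² = x³ - x`. -/
def W0 : WeierstrassCurve.Affine ℂ := ⟨0, 0, 0, -1, 0⟩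

instance : W0.IsElliptic := by
  refine ⟨?_⟩
  rw [isUnit_iff_ne_zero]
  simp [W0, WeierstrassCurve.Δ, WeierstrassCurve.b₂, WeierstrassCurve.b₄, WeierstrassCurve.b₆,
    WeierstrassCurve.b₈]

lemma mulHom_inj (a k : ℕ) (ha : 0 < a) (hk : 0 < k) :
    ∃ φ : ZMod a →+ ZMod (k * a), Function.Injective φ ∧ ∀ x, ∃ y, φ x = (k : ZMod (k * a)) * y := by
  have h0 : (a : ℤ) • ((k : ℕ) : ZMod (k * a)) = 0 := by
    rw [zsmul_eq_mul]
    norm_cast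
    rw [mul_comm, ZMod.natCast_self]
  refine ⟨ZMod.lift a ⟨zmultiplesHom _ ((k : ℕ) : ZMod (k * a)), by simpa using h0⟩, ?_, ?_⟩
  · rw [ZMod.lift_injective]
    intro m hm
    simp only [zmultiplesHom_apply, zsmul_eq_mul] at hm
    have : ((m * k : ℤ) : ZMod (k * a)) = 0 := by
      push_cast at hm ⊢; exact hm
    rw [ZMod.intCast_zmod_eq_zero_iff_dvd] at this
    rw [ZMod.intCast_zmod_eq_zero_iff_dvd]
    push_cast at this
    have hk' : (k : ℤ) ≠ 0 := by exact_mod_cast hk.ne'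
    rw [mul_comm m, mul_dvd_mul_iff_left hk'] at this
    exact this
  · intro x
    obtain ⟨m, rfl⟩ := ZMod.intCast_surjective x
    refine ⟨m, ?_⟩
    rw [ZMod.lift_coe]
    simp [mul_comm]

lemma exists_net (a b : ℕ) (ha : 0 < a) (hb : 0 < b) :
    ∃ A B C : ZMod a × ZMod b → Fin 3 → ℂ, Net A B C := by
  have hn : 0 < 7 * b * a := by positivity
  have h1 := mulHom_inj a (7 * b) ha (by positivity)
  have hcomm : 7 * a * b = 7 * b * a := by ring
  have h2 : ∃ φ : ZMod b →+ ZMod (7 * b * a), Function.Injective φ := by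
    rw [← hcomm]
    obtain ⟨φ₂, hφ₂, hd₂⟩ := mulHom_inj b (7 * a) hb (by positivity)
    exact ⟨φ₂, hφ₂⟩
  obtain ⟨N, hN⟩ : ∃ N, N = 7 * b * a := ⟨_, rfl⟩
  rw [← hN] at h1 h2 hn
  obtain ⟨ψ, hψ⟩ := NetE.exists_torsion W0 hn
  obtain ⟨φ₁, hφ₁, hd₁⟩ := h1
  obtain ⟨φ₂, hφ₂⟩ := h2
  have h7 : 7 ∣ N := ⟨b * a, by rw [hN]; ring⟩
  let r : ZMod N →+* ZMod 7 := ZMod.castHom h7 (ZMod 7)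
  have hr : ∀ x, r (φ₁ x) = 0 := by
    intro x
    obtain ⟨y, hy⟩ := hd₁ x
    rw [hy, map_mul, map_natCast]
    have : ((7 * b : ℕ) : ZMod 7) = 0 := by
      push_cast
      have : (7 : ZMod 7) = 0 := by decide
      rw [this, zero_mul]
    rw [this, zero_mul]
  let j : ZMod a × ZMod b → ZMod N × ZMod N := fun x => (φ₁ x.1, φ₂ x.2)
  have hj0 : ∀ x y z, j x + j y + j z = 0 ↔ x + y + z = 0 := by
    intro x y z
    have e : j x + j y + j z = (φ₁ (x + y + z).1, φ₂ (x + y + z).2) := by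
      simp [j, Prod.ext_iff]
    rw [e, Prod.mk_eq_zero, map_eq_zero_iff φ₁ hφ₁, map_eq_zero_iff φ₂ hφ₂, ← Prod.mk_eq_zero]
  let g : ZMod N × ZMod N := (1, 0)
  have hne : ∀ u v : ZMod N × ZMod N, r u.1 ≠ r v.1 → ψ u ≠ ψ v := by
    intro u v h1 h2
    exact h1 (by rw [hψ h2])
  have hne0 : ∀ u : ZMod N × ZMod N, r u.1 ≠ 0 → ψ u ≠ 0 := by
    intro u h1 h2
    refine hne u 0 ?_ (by rw [h2, _root_.map_zero])
    simpa using h1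
  refine ⟨fun x => vec (ψ (g + j x)), fun y => vec (ψ (g + g + j y)),
    fun z => vec (ψ (-(g + g + g) + j z)), ?_⟩
  intro x y z
  have r1 : r (g + j x).1 = 1 := by simp [g, j, hr]
  have r2 : r (g + g + j y).1 = 2 := by simp [g, j, hr]; decide
  have r3 : r (-(g + g + g) + j z).1 = 4 := by simp [g, j, hr]; decide
  show det3 (vec (ψ (g + j x))) (vec (ψ (g + g + j y))) (vec (ψ (-(g + g + g) + j z))) = 0 ↔ _
  rw [det_iff_of_ne_zero]
  · rw [← map_add, ← map_add, map_eq_zero_iff ψ hψ, ← hj0]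
    have : g + j x + (g + g + j y) + (-(g + g + g) + j z) = j x + j y + j z := by abel
    rw [this]
  · exact hne0 _ (by rw [r1]; decide)
  · exact hne0 _ (by rw [r2]; decide)
  · exact hne0 _ (by rw [r3]; decide)
  · exact hne _ _ (by rw [r1, r2]; decide)
  · exact hne _ _ (by rw [r1, r3]; decide)
  · exact hne _ _ (by rw [r2, r3]; decide)

lemma realizable_of_equiv [Nontrivial H] (a b : ℕ) (ha : 0 < a) (hb : 0 < b)
    (e : H ≃+ ZMod a × ZMod b) : ∃ p₁ p₂ p₃ : H → P2, Realizes p₁ p₂ p₃ := by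
  obtain ⟨A, B, C, h⟩ := exists_net a b ha hb
  refine realizes_of_net (A := fun x => A (e x)) (B := fun x => B (e x)) (C := fun x => C (e x)) ?_
  intro x y z
  show det3 (A (e x)) (B (e y)) (C (e z)) = 0 ↔ _
  rw [h, ← map_add, ← map_add, map_eq_zero_iff e e.injective]

end Net3

/-! ### Polynomials -/

namespace Net3
open MvPolynomial

/-- polynomial ring -/
abbrev R3 : Type := MvPolynomial (Fin 3) ℂ

/-- grading homomorphism `X i ↦ X i * T` -/
noncomputable def sg : R3 →ₐ[ℂ] Polynomial R3 :=
  MvPolynomial.aeval (fun i => Polynomial.X * Polynomial.C (X i))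

lemma sg_homog {F : R3} {n : ℕ} (h : F.IsHomogeneous n) :
    sg F = Polynomial.C F * Polynomial.X ^ n := by
  conv_lhs => rw [F.as_sum]
  conv_rhs => rw [F.as_sum]
  rw [map_sum, map_sum, Finset.sum_mul]
  refine Finset.sum_congr rfl fun d hd => ?_
  have hdeg := h.degree_eq_sum_deg_support hd
  rw [sg, aeval_monomial]
  rw [MvPolynomial.monomial_eq, Polynomial.C_mul]
  rw [Finsupp.prod, Finsupp.prod]
  simp only [mul_pow, Finset.prod_mul_distrib, Finset.prod_pow_eq_pow_sum]
  rw [map_prod, ← hdeg]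
  simp only [Polynomial.C_pow]
  rw [show (algebraMap ℂ (Polynomial R3)) (coeff d F) = Polynomial.C (C (coeff d F)) from rfl]
  ring

lemma sg_eq (F : R3) : sg F =
    ∑ i ∈ Finset.range (F.totalDegree + 1), Polynomial.C (homogeneousComponent i F) * Polynomial.X ^ i := by
  conv_lhs => rw [← sum_homogeneousComponent F]
  rw [map_sum]
  exact Finset.sum_congr rfl fun i _ => sg_homog (homogeneousComponent_isHomogeneous i F)

lemma homog_of_sg {F : R3} {n : ℕ} {c : R3} (h : sg F = Polynomial.C c * Polynomial.X ^ n) :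
    F.IsHomogeneous n := by
  rw [← sum_homogeneousComponent F]
  refine IsHomogeneous.sum _ _ _ fun i hi => ?_
  by_cases hin : i = n
  · subst hin; exact homogeneousComponent_isHomogeneous i F
  · have h1 : (sg F).coeff i = homogeneousComponent i F := by
      rw [sg_eq]
      simp only [Polynomial.finsetSum_coeff, Polynomial.coeff_C_mul, Polynomial.coeff_X_pow]
      simp [Finset.sum_ite_eq]
      intro h2
      rw [Finset.mem_range] at hi; omega
    rw [h] at h1
    rw [← h1]
    simp [Polynomial.coeff_X_pow, hin]
    exact isHomogeneous_zero _ _ _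

lemma homog_of_mul {P Q : R3} {n : ℕ} (h : (P * Q).IsHomogeneous n) (h0 : P * Q ≠ 0) :
    ∃ k l, k + l = n ∧ P.IsHomogeneous k ∧ Q.IsHomogeneous l := by
  have h1 := sg_homog h
  rw [map_mul] at h1
  have hne : sg P * sg Q ≠ 0 := by
    rw [h1]; exact mul_ne_zero (Polynomial.C_ne_zero.2 h0) (pow_ne_zero _ Polynomial.X_ne_zero)
  have hP : sg P ≠ 0 := left_ne_zero_of_mul hne
  have hQ : sg Q ≠ 0 := right_ne_zero_of_mul hne
  have e1 : (sg P).natDegree + (sg Q).natDegree = n := by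
    rw [← Polynomial.natDegree_mul hP hQ, h1, Polynomial.natDegree_C_mul_X_pow _ _ h0]
  have e2 : (sg P).natTrailingDegree + (sg Q).natTrailingDegree = n := by
    rw [← Polynomial.natTrailingDegree_mul hP hQ, h1, Polynomial.C_mul_X_pow_eq_monomial,
      Polynomial.natTrailingDegree_monomial h0]
  have l1 := (sg P).natTrailingDegree_le_natDegree
  have l2 := (sg Q).natTrailingDegree_le_natDegree
  have key : ∀ p : Polynomial R3, p.natTrailingDegree = p.natDegree →
      p = Polynomial.C (p.coeff p.natDegree) * Polynomial.X ^ p.natDegree := by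
    intro p hp
    ext1 i
    rw [Polynomial.coeff_C_mul, Polynomial.coeff_X_pow]
    rcases lt_trichotomy i p.natDegree with h | h | h
    · rw [Polynomial.coeff_eq_zero_of_lt_natTrailingDegree (by omega)]; simp [h.ne]
    · simp [h]
    · rw [Polynomial.coeff_eq_zero_of_natDegree_lt h]; simp [h.ne']
  exact ⟨_, _, e1, homog_of_sg (key _ (by omega)), homog_of_sg (key _ (by omega))⟩

/-- linear form -/
noncomputable def lin (a : Fin 3 → ℂ) : R3 := C (a 0) * X 0 + C (a 1) * X 1 + C (a 2) * X 2

lemma lin_eval (a v : Fin 3 → ℂ) : eval v (lin a) = a 0 * v 0 + a 1 * v 1 + a 2 * v 2 := by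
  simp [lin]

lemma lin_homog (a : Fin 3 → ℂ) : (lin a).IsHomogeneous 1 :=
  ((isHomogeneous_C_mul_X _ _).add (isHomogeneous_C_mul_X _ _)).add (isHomogeneous_C_mul_X _ _)

/-- sum of homogeneous polynomials expanded by exponents -/
lemma homog_eval {F : R3} {n : ℕ} (h : F.IsHomogeneous n) :
    ∃ c : ℕ → ℕ → ℂ, ∀ v, eval v F = ∑ i ∈ Finset.range (n+1), ∑ j ∈ Finset.range (n+1-i),
      c i j * v 0 ^ i * v 1 ^ j * v 2 ^ (n - i - j) := by
  have hmem : F ∈ Submodule.span ℂ ((fun d => monomial d (1:ℂ)) '' {d : Fin 3 →₀ ℕ | d 0 + d 1 + d 2 = n}) := by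
    rw [F.as_sum]
    refine Submodule.sum_mem _ fun d hd => ?_
    have hdeg := h (mem_support_iff.1 hd)
    rw [show monomial d (coeff d F) = coeff d F • monomial d (1:ℂ) by
      rw [smul_monomial, smul_eq_mul, mul_one]]
    refine Submodule.smul_mem _ _ (Submodule.subset_span ⟨d, ?_, rfl⟩)
    rw [← hdeg]
    simp [Finsupp.weight_apply, Finsupp.sum_fintype, Fin.sum_univ_three]
  clear h
  induction hmem using Submodule.span_induction with
  | mem x hx =>
    obtain ⟨d, hd, rfl⟩ := hx
    simp only [Set.mem_setOf_eq] at hd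
    refine ⟨fun i j => if i = d 0 ∧ j = d 1 then 1 else 0, fun v => ?_⟩
    rw [Finset.sum_eq_single (d 0), Finset.sum_eq_single (d 1)]
    · rw [eval_monomial, Finsupp.prod_fintype _ _ (by simp), Fin.prod_univ_three]
      simp only [and_self, if_true]
      rw [show n - d 0 - d 1 = d 2 by omega]
      ring
    · intro j _ hj; simp [hj]
    · intro hh; rw [Finset.mem_range] at hh; omega
    · intro i _ hi; simp [hi]
    · intro hh; rw [Finset.mem_range] at hh; omega
  | zero => exact ⟨fun _ _ => 0, fun v => by simp⟩
  | add x y _ _ hx hy =>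
    obtain ⟨c, hc⟩ := hx
    obtain ⟨c', hc'⟩ := hy
    refine ⟨fun i j => c i j + c' i j, fun v => ?_⟩
    simp only [map_add, hc, hc', add_mul, Finset.sum_add_distrib]
  | smul r x _ hx =>
    obtain ⟨c, hc⟩ := hx
    refine ⟨fun i j => r * c i j, fun v => ?_⟩
    simp only [smul_eval, hc, Finset.mul_sum, mul_assoc]

/-- forms of degree `d`, as functions -/
def IsForm (d : ℕ) (f : (Fin 3 → ℂ) → ℂ) : Prop :=
  ∃ p : R3, p.IsHomogeneous d ∧ ∀ v, f v = eval v p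

/-- cubic with given coefficients -/
def cub (c : Fin 10 → ℂ) (v : Fin 3 → ℂ) : ℂ :=
  c 0 * v 0 ^ 3 + c 1 * v 0 ^ 2 * v 1 + c 2 * v 0 ^ 2 * v 2 + c 3 * v 0 * v 1 ^ 2 +
  c 4 * v 0 * v 1 * v 2 + c 5 * v 0 * v 2 ^ 2 + c 6 * v 1 ^ 3 + c 7 * v 1 ^ 2 * v 2 +
  c 8 * v 1 * v 2 ^ 2 + c 9 * v 2 ^ 3

/-- quadratic form with given coefficients -/
def quad (c : Fin 6 → ℂ) (v : Fin 3 → ℂ) : ℂ :=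
  c 0 * v 0 ^ 2 + c 1 * v 0 * v 1 + c 2 * v 0 * v 2 + c 3 * v 1 ^ 2 +
  c 4 * v 1 * v 2 + c 5 * v 2 ^ 2

/-- dot product -/
def dot (a v : Fin 3 → ℂ) : ℂ := a 0 * v 0 + a 1 * v 1 + a 2 * v 2

/-- polynomial of a cubic -/
noncomputable def cubP (c : Fin 10 → ℂ) : R3 :=
  C (c 0) * (X 0 * X 0 * X 0) + C (c 1) * (X 0 * X 0 * X 1) + C (c 2) * (X 0 * X 0 * X 2)
  + C (c 3) * (X 0 * X 1 * X 1) + C (c 4) * (X 0 * X 1 * X 2) + C (c 5) * (X 0 * X 2 * X 2)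
  + C (c 6) * (X 1 * X 1 * X 1) + C (c 7) * (X 1 * X 1 * X 2) + C (c 8) * (X 1 * X 2 * X 2)
  + C (c 9) * (X 2 * X 2 * X 2)

lemma cubP_eval (c v) : eval v (cubP c) = cub c v := by
  simp [cubP, cub]; ring

lemma cubP_homog (c) : (cubP c).IsHomogeneous 3 := by
  have h : ∀ i j k : Fin 3, ∀ r : ℂ, (C r * (X i * X j * X k) : R3).IsHomogeneous 3 := fun i j k r =>
    (((isHomogeneous_X ℂ i).mul (isHomogeneous_X ℂ j)).mul (isHomogeneous_X ℂ k)).C_mul r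
  exact (((((((((h _ _ _ _).add (h _ _ _ _)).add (h _ _ _ _)).add (h _ _ _ _)).add (h _ _ _ _)).add
    (h _ _ _ _)).add (h _ _ _ _)).add (h _ _ _ _)).add (h _ _ _ _)).add (h _ _ _ _)

lemma cub_of_homog {F : R3} (h : F.IsHomogeneous 3) : ∃ c, ∀ v, eval v F = cub c v := by
  obtain ⟨c, hc⟩ := homog_eval h
  refine ⟨![c 3 0, c 2 1, c 2 0, c 1 2, c 1 1, c 1 0, c 0 3, c 0 2, c 0 1, c 0 0], fun v => ?_⟩
  rw [hc]
  simp [Finset.sum_range_succ, cub]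
  ring

lemma lin_of_homog {F : R3} (h : F.IsHomogeneous 1) : ∃ c, F = lin c := by
  obtain ⟨c, hc⟩ := homog_eval h
  refine ⟨![c 1 0, c 0 1, c 0 0], MvPolynomial.funext fun v => ?_⟩
  rw [hc, lin_eval]
  simp [Finset.sum_range_succ]
  ring

lemma IsForm.cub {f} (h : IsForm 3 f) : ∃ c, f = cub c := by
  obtain ⟨p, hp, hf⟩ := h
  obtain ⟨c, hc⟩ := cub_of_homog hp
  exact ⟨c, funext fun v => by rw [hf, hc]⟩

lemma isForm_cub (c) : IsForm 3 (cub c) := ⟨cubP c, cubP_homog c, fun v => (cubP_eval c v).symm⟩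

lemma IsForm.subst {d f} (h : IsForm d f) (e₁ e₂ e₃ : Fin 3 → ℂ) :
    IsForm d (fun v => f (v 0 • e₁ + v 1 • e₂ + v 2 • e₃)) := by
  obtain ⟨p, hp, hf⟩ := h
  refine ⟨aeval (fun i => lin ![e₁ i, e₂ i, e₃ i]) p, ?_, fun v => ?_⟩
  · simpa using hp.aeval (fun i => lin ![e₁ i, e₂ i, e₃ i]) (n := 1) (fun i => lin_homog _)
  · show f _ = _
    rw [hf]
    rw [show (eval v) (aeval (fun i => lin ![e₁ i, e₂ i, e₃ i]) p) =
      eval₂Hom (RingHom.id ℂ) v (bind₁ (fun i => lin ![e₁ i, e₂ i, e₃ i]) p) from rfl, eval₂Hom_bind₁]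
    show _ = eval _ p
    congr 2
    funext i
    show _ = eval v (lin _)
    rw [lin_eval]
    simp; ring

lemma cub_subst (c) (e₁ e₂ e₃ : Fin 3 → ℂ) :
    ∃ c', ∀ v, cub c (v 0 • e₁ + v 1 • e₂ + v 2 • e₃) = cub c' v := by
  obtain ⟨c', hc⟩ := ((isForm_cub c).subst e₁ e₂ e₃).cub
  exact ⟨c', fun v => congrFun hc v⟩

/-! intersection of two plane curves -/

lemma height_zero_ideal : 3 ≤ (vanishingIdeal ℂ ({0} : Set (Fin 3 → ℂ))).height := by
  let f1 : R3 →ₐ[ℂ] R3 := aeval ![0, X 1, X 2]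
  let f2 : R3 →ₐ[ℂ] R3 := aeval ![0, 0, X 2]
  let f3 : R3 →ₐ[ℂ] R3 := aeval ![0, 0, 0]
  have hc2 : ∀ p, f2 p = f2 (f1 p) := by
    intro p
    have : f2 = f2.comp f1 := by
      ext i; fin_cases i <;> simp [f1, f2]
    exact congrArg (fun g => g p) this
  have hc3 : ∀ p, f3 p = f3 (f2 p) := by
    intro p
    have : f3 = f3.comp f2 := by
      ext i; fin_cases i <;> simp [f2, f3]
    exact congrArg (fun g => g p) this
  let I1 := RingHom.ker f1
  let I2 := RingHom.ker f2
  have h0 : vanishingIdeal ℂ ({0} : Set (Fin 3 → ℂ)) = RingHom.ker f3 := by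
    ext p
    rw [mem_vanishingIdeal_singleton_iff, RingHom.mem_ker]
    have : f3 p = C (aeval (0 : Fin 3 → ℂ) p) := by
      have h : f3 = (Algebra.ofId ℂ R3).comp (aeval (0 : Fin 3 → ℂ)) := by
        ext i; fin_cases i <;> simp [f3]
      exact congrArg (fun g => g p) h
    rw [this]
    simp
  rw [h0]
  have l1 : (⊥ : Ideal R3) < I1 := by
    rw [bot_lt_iff_ne_bot]
    intro h
    have : (X 0 : R3) ∈ I1 := by simp [I1, f1, RingHom.mem_ker]
    rw [h] at this
    exact X_ne_zero (R := ℂ) (0 : Fin 3) (by simpa using this)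
  have l2 : I1 < I2 := by
    refine lt_of_le_of_ne ?_ ?_
    · intro p hp
      rw [RingHom.mem_ker] at hp ⊢
      rw [hc2, hp, map_zero]
    · intro h
      have : (X 1 : R3) ∈ I2 := by simp [I2, f2, RingHom.mem_ker]
      rw [← h] at this
      simp [I1, f1, RingHom.mem_ker] at this
  have l3 : I2 < RingHom.ker f3 := by
    refine lt_of_le_of_ne ?_ ?_
    · intro p hp
      rw [RingHom.mem_ker] at hp ⊢
      rw [hc3, hp, map_zero]
    · intro h
      have : (X 2 : R3) ∈ RingHom.ker f3 := by simp [f3, RingHom.mem_ker]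
      rw [← h] at this
      simp [I2, f2, RingHom.mem_ker] at this
  haveI : I1.IsPrime := RingHom.ker_isPrime _
  haveI : I2.IsPrime := RingHom.ker_isPrime _
  haveI : (RingHom.ker f3).IsPrime := RingHom.ker_isPrime _
  haveI : (⊥ : Ideal R3).IsPrime := Ideal.isPrime_bot
  have m1 := Ideal.height_add_one_le_of_lt_of_isPrime l1
  have m2 := Ideal.height_add_one_le_of_lt_of_isPrime l2
  have m3 := Ideal.height_add_one_le_of_lt_of_isPrime l3
  calc (3 : ℕ∞) = 0 + 1 + 1 + 1 := by norm_num
    _ ≤ (⊥ : Ideal R3).height + 1 + 1 + 1 := by gcongr; exact zero_le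
    _ ≤ I1.height + 1 + 1 := by gcongr
    _ ≤ I2.height + 1 := by gcongr
    _ ≤ _ := m3

lemma exists_common_zero (F G : R3) (hF : eval 0 F = 0) (hG : eval 0 G = 0) :
    ∃ v : Fin 3 → ℂ, v ≠ 0 ∧ eval v F = 0 ∧ eval v G = 0 := by
  by_contra hcon
  push Not at hcon
  let I : Ideal R3 := Ideal.span {F, G}
  have hz : zeroLocus ℂ I = {0} := by
    ext v
    rw [zeroLocus_span]
    simp only [Set.mem_setOf_eq, Set.mem_singleton_iff, Set.mem_insert_iff, forall_eq_or_imp, forall_eq]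
    constructor
    · rintro ⟨h1, h2⟩
      by_contra hv
      exact hcon v hv h1 h2
    · rintro rfl
      exact ⟨hF, hG⟩
  have hrad := vanishingIdeal_zeroLocus_eq_radical (k := ℂ) (K := ℂ) I
  rw [hz] at hrad
  have hmin : vanishingIdeal ℂ ({0} : Set (Fin 3 → ℂ)) ∈ I.minimalPrimes := by
    refine ⟨⟨inferInstance, ?_⟩, ?_⟩
    · rw [hrad]; exact Ideal.le_radical
    · intro J hJ _
      rw [hrad]
      exact hJ.1.radical_le_iff.2 hJ.2
  have h1 := Ideal.height_le_card_of_mem_minimalPrimes_span (Set.toFinite _) hmin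
  have h2 := height_zero_ideal
  have h3 : (({F, G} : Set R3).ncard : ℕ∞) ≤ 2 := by
    have : ({F, G} : Set R3).ncard ≤ 2 := by
      refine (Set.ncard_insert_le _ _).trans ?_
      rw [Set.ncard_singleton]
    exact_mod_cast this
  have := h2.trans (h1.trans h3)
  norm_num at this

end Net3

/-! ### Bezout for cubics -/

namespace Net3
open MvPolynomial

/-- graded pieces -/
noncomputable abbrev Sg (n : ℕ) : Submodule ℂ R3 := homogeneousSubmodule (Fin 3) ℂ n

lemma finrank_Sg (n : ℕ) : Module.finrank ℂ (Sg n) = (n + 2).choose n := by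
  have h : Sg n = restrictSupport ℂ {d : Fin 3 →₀ ℕ | d.degree = n} :=
    homogeneousSubmodule_eq_finsupp_supported (Fin 3) ℂ n
  rw [h, Module.finrank_eq_nat_card_basis (basisRestrictSupport ℂ _)]
  have h2 : {d : Fin 3 →₀ ℕ | d.degree = n} = ((Finset.univ : Finset (Fin 3)).finsuppAntidiag n : Set _) := by
    ext d
    simp [Finset.mem_finsuppAntidiag, Finsupp.degree_eq_sum]
  rw [h2, Nat.card_coe_set_eq, Set.ncard_coe_finset, Finset.card_finsuppAntidiag_nat_eq_choose]
  simp
  congr 1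
  omega

instance (n : ℕ) : Module.Finite ℂ (Sg n) := Module.Finite.iff_fg.2 (homogeneousSubmodule_fg _ _ n)

/-- two vectors are independent -/
def Indep (p q : Fin 3 → ℂ) : Prop := q ≠ 0 ∧ ∀ c : ℂ, p ≠ c • q

lemma Indep.sep {p q : Fin 3 → ℂ} (h : Indep p q) :
    ∃ a : Fin 3 → ℂ, dot a q = 0 ∧ dot a p ≠ 0 := by
  by_contra hc
  push Not at hc
  have h0 := hc ![0, q 2, - q 1] (by simp [dot]; ring)
  have h1 := hc ![q 2, 0, - q 0] (by simp [dot]; ring)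
  have h2 := hc ![q 1, - q 0, 0] (by simp [dot]; ring)
  simp [dot] at h0 h1 h2
  have : ∃ i, q i ≠ 0 := by
    by_contra hn; push Not at hn
    exact h.1 (funext hn)
  obtain ⟨i, hi⟩ := this
  refine h.2 (p i / q i) ?_
  funext j
  have : p j * q i = p i * q j := by
    fin_cases i <;> fin_cases j <;> simp <;> grind only
  simp
  field_simp
  exact this

lemma bezout {F G : R3} (hF : Irreducible F) (hF3 : F.IsHomogeneous 3) (hG3 : G.IsHomogeneous 3)
    (p : Fin 10 → Fin 3 → ℂ) (hp : ∀ i j, i ≠ j → Indep (p i) (p j))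
    (hpF : ∀ i, eval (p i) F = 0) (hpG : ∀ i, eval (p i) G = 0) : F ∣ G := by
  by_contra hdiv
  let Φ : (Sg 6 × Sg 6) →ₗ[ℂ] R3 :=
    ((LinearMap.mulRight ℂ F).comp (Sg 6).subtype).coprod
      ((LinearMap.mulRight ℂ G).comp (Sg 6).subtype)
  have hΦ : ∀ P, Φ P = P.1 * F + P.2 * G := fun P => rfl
  let Ψ : Sg 3 →ₗ[ℂ] (Sg 6 × Sg 6) :=
    LinearMap.prod
      (((LinearMap.mulRight ℂ (-G)).comp (Sg 3).subtype).codRestrict (Sg 6) (fun R => by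
        exact (R.2 : (R : R3).IsHomogeneous 3).mul hG3.neg))
      (((LinearMap.mulRight ℂ F).comp (Sg 3).subtype).codRestrict (Sg 6) (fun R => by
        exact (R.2 : (R : R3).IsHomogeneous 3).mul hF3))
  have hF0 : F ≠ 0 := hF.ne_zero
  have hker : LinearMap.ker Φ ≤ LinearMap.range Ψ := by
    rintro ⟨⟨P, hP⟩, ⟨Q, hQ⟩⟩ h
    rw [LinearMap.mem_ker, hΦ] at h
    simp only at h
    have hd : F ∣ Q * G := ⟨-P, by linear_combination h⟩
    have hd2 : F ∣ Q := (hF.prime.dvd_or_dvd hd).resolve_right hdiv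
    obtain ⟨R, rfl⟩ := hd2
    have hPR : P = R * (-G) := by
      have : F * (P + R * G) = 0 := by linear_combination h
      have := (mul_eq_zero.1 this).resolve_left hF0
      linear_combination this
    have hR : R.IsHomogeneous 3 := by
      by_cases h0 : R = 0
      · rw [h0]; exact isHomogeneous_zero _ _ _
      · obtain ⟨k, l, hkl, hk, hl⟩ := homog_of_mul hQ (mul_ne_zero hF0 h0)
        have := hk.inj_right hF3 hF0
        have : l = 3 := by omega
        subst this; exact hl
    refine ⟨⟨R, hR⟩, ?_⟩
    ext1
    · apply Subtype.ext; exact hPR.symm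
    · apply Subtype.ext; exact mul_comm R F
  let ev : Sg 9 →ₗ[ℂ] (Fin 10 → ℂ) :=
    (LinearMap.pi fun i => (aeval (p i)).toLinearMap).comp (Sg 9).subtype
  have hev : ∀ P i, ev P i = eval (p i) (P : R3) := fun P i => rfl
  have hsurj : Function.Surjective ev := by
    have hs : ∀ i j : Fin 10, ∃ a : Fin 3 → ℂ, i ≠ j → dot a (p j) = 0 ∧ dot a (p i) ≠ 0 := by
      intro i j
      by_cases h : i = j
      · exact ⟨0, fun h' => absurd h h'⟩
      · obtain ⟨a, ha⟩ := (hp i j h).sep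
        exact ⟨a, fun _ => ha⟩
    choose a ha using hs
    have hprod : ∀ i : Fin 10, (∏ j ∈ Finset.univ.erase i, lin (a i j)).IsHomogeneous 9 := by
      intro i
      have := IsHomogeneous.prod (Finset.univ.erase i) (fun j => lin (a i j)) (fun _ => 1)
        (fun j _ => lin_homog _)
      simpa using this
    let N : Fin 10 → Sg 9 := fun i => ⟨_, hprod i⟩
    have hN : ∀ i k, ev (N i) k = ∏ j ∈ Finset.univ.erase i, dot (a i j) (p k) := by
      intro i k
      rw [hev, map_prod]
      exact Finset.prod_congr rfl fun j _ => lin_eval _ _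
    have hN1 : ∀ i k, i ≠ k → ev (N i) k = 0 := by
      intro i k h
      rw [hN]
      exact Finset.prod_eq_zero (Finset.mem_erase.2 ⟨h.symm, Finset.mem_univ k⟩) (ha i k h).1
    have hN2 : ∀ i, ev (N i) i ≠ 0 := by
      intro i
      rw [hN]
      exact Finset.prod_ne_zero_iff.2 fun j hj => (ha i j (Finset.ne_of_mem_erase hj).symm).2
    intro w
    refine ⟨∑ i, (w i / ev (N i) i) • N i, ?_⟩
    rw [map_sum]
    funext k
    rw [Finset.sum_apply, Finset.sum_eq_single k]
    · simp [hN2 k]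
    · intro i _ hi
      simp [hN1 i k hi]
    · simp
  have hrange : LinearMap.range Φ ≤ (LinearMap.ker ev).map (Sg 9).subtype := by
    rintro _ ⟨P, rfl⟩
    refine ⟨⟨Φ P, ?_⟩, ?_, rfl⟩
    · rw [hΦ]
      exact IsHomogeneous.add ((P.1.2 : (P.1 : R3).IsHomogeneous 6).mul hF3)
        ((P.2.2 : (P.2 : R3).IsHomogeneous 6).mul hG3)
    · show _ ∈ LinearMap.ker ev
      rw [LinearMap.mem_ker]
      funext i
      rw [hev]
      simp only [hΦ, map_add, map_mul, hpF, hpG]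
      simp
  have d1 := LinearMap.finrank_range_add_finrank_ker Φ
  have d2 := LinearMap.finrank_range_add_finrank_ker ev
  have d3 : Module.finrank ℂ (LinearMap.ker Φ) ≤ 10 := by
    refine (Submodule.finrank_mono hker).trans ((LinearMap.finrank_range_le Ψ).trans ?_)
    rw [finrank_Sg]; decide
  have d4 := Submodule.finrank_mono hrange
  have d5 := Submodule.finrank_map_le (Sg 9).subtype (LinearMap.ker ev)
  rw [LinearMap.range_eq_top.2 hsurj, finrank_top, finrank_Sg] at d2
  rw [Module.finrank_prod, finrank_Sg] at d1
  simp [Nat.choose] at d1 d2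
  omega

/-- no line in the zero set -/
def NoLine (f : (Fin 3 → ℂ) → ℂ) : Prop :=
  ∀ a : Fin 3 → ℂ, a ≠ 0 → ∃ v, dot a v = 0 ∧ f v ≠ 0

lemma irreducible_of_noLine {F : R3} (hF3 : F.IsHomogeneous 3) (h : NoLine (fun v => eval v F)) :
    Irreducible F := by
  have hF0 : F ≠ 0 := by
    rintro rfl
    obtain ⟨v, _, hv⟩ := h ![1, 0, 0] (by intro h0; simpa using congrFun h0 0)
    simp at hv
  have key : ∀ P Q : R3, F = P * Q → P.IsHomogeneous 1 → False := by
    intro P Q e hP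
    obtain ⟨a, rfl⟩ := lin_of_homog hP
    have ha : a ≠ 0 := by
      rintro rfl
      apply hF0; rw [e]; simp [lin]
    obtain ⟨v, h1, h2⟩ := h a ha
    apply h2
    have : eval v (lin a) = 0 := by rw [lin_eval]; exact h1
    simp only [e, map_mul, this, zero_mul]
  have unit0 : ∀ P : R3, P ≠ 0 → P.IsHomogeneous 0 → IsUnit P := by
    intro P hP h0
    have := (totalDegree_zero_iff_isHomogeneous (Fin 3)).2 h0
    rw [totalDegree_eq_zero_iff_eq_C] at this
    rw [this]
    refine IsUnit.map C (isUnit_iff_ne_zero.2 ?_)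
    intro hc
    rw [hc, C_0] at this
    exact hP this
  refine ⟨?_, ?_⟩
  · intro hu
    rw [MvPolynomial.isUnit_iff_eq_C_of_isReduced] at hu
    obtain ⟨r, hr, rfl⟩ := hu
    have := (isHomogeneous_C (Fin 3) r).inj_right hF3 hF0
    omega
  · intro P Q e
    have hPQ : P * Q ≠ 0 := e ▸ hF0
    have hP0 := left_ne_zero_of_mul hPQ
    have hQ0 := right_ne_zero_of_mul hPQ
    obtain ⟨k, l, hkl, hk, hl⟩ := homog_of_mul (e ▸ hF3) hPQ
    have : k = 0 ∨ k = 1 ∨ l = 1 ∨ l = 0 := by omega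
    rcases this with rfl | rfl | rfl | rfl
    · exact Or.inl (unit0 _ hP0 hk)
    · exact (key P Q e hk).elim
    · exact (key Q P (by rw [e, mul_comm]) hl).elim
    · exact Or.inr (unit0 _ hQ0 hl)

/-- two cubics with ten common points, the first without lines -/
lemma bezout_cub {c c' : Fin 10 → ℂ} (h : NoLine (cub c)) (h' : c' ≠ 0)
    (p : Fin 10 → Fin 3 → ℂ) (hp : ∀ i j, i ≠ j → Indep (p i) (p j))
    (h1 : ∀ i, cub c (p i) = 0) (h2 : ∀ i, cub c' (p i) = 0) :
    ∀ v, cub c' v = 0 → cub c v = 0 := by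
  have hirr : Irreducible (cubP c) := irreducible_of_noLine (cubP_homog c) (by simpa [cubP_eval] using h)
  obtain ⟨R, hR⟩ := bezout hirr (cubP_homog c) (cubP_homog c') p hp (by simpa [cubP_eval] using h1)
    (by simpa [cubP_eval] using h2)
  have hne : cubP c' ≠ 0 := by
    intro h0
    apply h'
    have e : ∀ v, cub c' v = 0 := fun v => by rw [← cubP_eval, h0, map_zero]
    have q0 := e ![1, 0, 0]
    have q1 := e ![0, 1, 0]
    have q2 := e ![0, 0, 1]
    have q3 := e ![1, 1, 0]
    have q4 := e ![1, -1, 0]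
    have q5 := e ![1, 0, 1]
    have q6 := e ![1, 0, -1]
    have q7 := e ![0, 1, 1]
    have q8 := e ![0, 1, -1]
    have q9 := e ![1, 1, 1]
    simp [cub] at q0 q1 q2 q3 q4 q5 q6 q7 q8 q9
    funext i
    fin_cases i <;> simp <;> grind only
  rw [hR] at hne
  obtain ⟨k, l, hkl, hk, hl⟩ := homog_of_mul (hR ▸ cubP_homog c') hne
  have := hk.inj_right (cubP_homog c) (left_ne_zero_of_mul hne)
  have hl0 : l = 0 := by omega
  subst hl0
  have := (totalDegree_zero_iff_isHomogeneous (Fin 3)).2 hl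
  rw [totalDegree_eq_zero_iff_eq_C] at this
  intro v hv
  rw [← cubP_eval, hR, map_mul, this, eval_C, cubP_eval] at hv
  refine (mul_eq_zero.1 hv).resolve_right ?_
  intro h0
  rw [h0, C_0] at this
  exact right_ne_zero_of_mul hne this

end Net3

/-! ### Line lemmas, Cayley–Bacharach -/

namespace Net3

/-- gradient of a cubic -/
def grad (c : Fin 10 → ℂ) (v : Fin 3 → ℂ) : Fin 3 → ℂ :=
  ![quad ![3 * c 0, 2 * c 1, 2 * c 2, c 3, c 4, c 5] v,
    quad ![c 1, 2 * c 3, c 4, 3 * c 6, 2 * c 7, c 8] v,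
    quad ![c 2, c 4, 2 * c 5, c 7, 2 * c 8, 3 * c 9] v]

/-- polar of a quadric -/
def qgrad (c : Fin 6 → ℂ) (u : Fin 3 → ℂ) : Fin 3 → ℂ :=
  ![2 * c 0 * u 0 + c 1 * u 1 + c 2 * u 2, c 1 * u 0 + 2 * c 3 * u 1 + c 4 * u 2,
    c 2 * u 0 + c 4 * u 1 + 2 * c 5 * u 2]

/-- cross product -/
def crs (p q : Fin 3 → ℂ) : Fin 3 → ℂ :=
  ![p 1 * q 2 - p 2 * q 1, p 2 * q 0 - p 0 * q 2, p 0 * q 1 - p 1 * q 0]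

lemma dot_crs (p q v : Fin 3 → ℂ) : dot (crs p q) v = det3 p q v := by
  simp [dot, crs, det3]; ring

lemma cub_line (c) (p q : Fin 3 → ℂ) (s t : ℂ) : cub c (s • p + t • q) =
    s ^ 3 * cub c p + s ^ 2 * t * dot (grad c p) q + s * t ^ 2 * dot (grad c q) p + t ^ 3 * cub c q := by
  simp [cub, dot, grad, quad]; ring

lemma quad_line (c) (p q : Fin 3 → ℂ) (s t : ℂ) : quad c (s • p + t • q) =
    s ^ 2 * quad c p + s * t * dot (qgrad c p) q + t ^ 2 * quad c q := by
  simp [quad, dot, qgrad]; ring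

lemma dot_line (a) (p q : Fin 3 → ℂ) (s t : ℂ) : dot a (s • p + t • q) =
    s * dot a p + t * dot a q := by
  simp [dot]; ring

lemma dot_smul (a) (p : Fin 3 → ℂ) (s : ℂ) : dot a (s • p) = s * dot a p := by
  simp [dot]; ring
lemma cub_smul (c) (p : Fin 3 → ℂ) (s : ℂ) : cub c (s • p) = s ^ 3 * cub c p := by
  simp [cub]; ring
lemma quad_smul (c) (p : Fin 3 → ℂ) (s : ℂ) : quad c (s • p) = s ^ 2 * quad c p := by
  simp [quad]; ring

lemma exists_dot_one {a : Fin 3 → ℂ} (ha : a ≠ 0) : ∃ u, dot a u = 1 := by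
  obtain ⟨i, hi⟩ := Function.ne_iff.1 ha
  simp only [Pi.zero_apply] at hi
  refine ⟨fun j => if j = i then (a i)⁻¹ else 0, ?_⟩
  fin_cases i <;> simp_all [dot]

lemma quad_dvd {a : Fin 3 → ℂ} (ha : a ≠ 0) {q} (h : ∀ v, dot a v = 0 → quad q v = 0) :
    ∃ b, ∀ v, quad q v = dot a v * dot b v := by
  obtain ⟨u, hu⟩ := exists_dot_one ha
  refine ⟨qgrad q u - quad q u • a, fun v => ?_⟩
  have h1 := h (v + (-dot a v) • u) (by
    have := dot_line a v u 1 (-dot a v); rw [one_smul] at this; rw [this, hu]; ring)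
  have h2 := quad_line q v u 1 (-dot a v)
  rw [one_smul, h1] at h2
  have h3 : dot (qgrad q v) u = dot (qgrad q u) v := by simp [dot, qgrad]; ring
  have h4 : dot (qgrad q u - quad q u • a) v = dot (qgrad q u) v - quad q u * dot a v := by
    simp [dot]; ring
  rw [h4]
  linear_combination -h2 + dot a v * h3

/-- product of a linear and a quadratic form -/
def mulc (a : Fin 3 → ℂ) (q : Fin 6 → ℂ) : Fin 10 → ℂ :=
  ![a 0 * q 0, a 0 * q 1 + a 1 * q 0, a 0 * q 2 + a 2 * q 0, a 0 * q 3 + a 1 * q 1,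
    a 0 * q 4 + a 1 * q 2 + a 2 * q 1, a 0 * q 5 + a 2 * q 2, a 1 * q 3, a 1 * q 4 + a 2 * q 3,
    a 1 * q 5 + a 2 * q 4, a 2 * q 5]

/-- product of linear forms -/
def mulq (a b : Fin 3 → ℂ) : Fin 6 → ℂ :=
  ![a 0 * b 0, a 0 * b 1 + a 1 * b 0, a 0 * b 2 + a 2 * b 0, a 1 * b 1, a 1 * b 2 + a 2 * b 1,
    a 2 * b 2]

lemma mulc_eval (a q v) : cub (mulc a q) v = dot a v * quad q v := by
  simp [cub, mulc, dot, quad]; ring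

lemma mulq_eval (a b v) : quad (mulq a b) v = dot a v * dot b v := by
  simp [quad, mulq, dot]; ring

lemma cub_dvd {a : Fin 3 → ℂ} (ha : a ≠ 0) {c} (h : ∀ v, dot a v = 0 → cub c v = 0) :
    ∃ q, ∀ v, cub c v = dot a v * quad q v := by
  obtain ⟨u, hu⟩ := exists_dot_one ha
  refine ⟨(u 0 • ![3 * c 0, 2 * c 1, 2 * c 2, c 3, c 4, c 5]
    + u 1 • ![c 1, 2 * c 3, c 4, 3 * c 6, 2 * c 7, c 8]
    + u 2 • ![c 2, c 4, 2 * c 5, c 7, 2 * c 8, 3 * c 9]) - mulq a (grad c u) + cub c u • mulq a a, fun v => ?_⟩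
  have h1 := h (v + (-dot a v) • u) (by
    have := dot_line a v u 1 (-dot a v); rw [one_smul] at this; rw [this, hu]; ring)
  have h2 := cub_line c v u 1 (-dot a v)
  rw [one_smul, h1] at h2
  have h4 : ∀ (x y z : Fin 6 → ℂ) (s : ℂ), quad (x - y + s • z) v = quad x v - quad y v + s * quad z v := by
    intro x y z s; simp [quad]; ring
  have h5 : ∀ (x y z : Fin 6 → ℂ), quad (u 0 • x + u 1 • y + u 2 • z) v = dot ![quad x v, quad y v, quad z v] u := by
    intro x y z; simp [quad, dot]; ring
  rw [h4, h5, mulq_eval, mulq_eval]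
  change _ = dot a v * (dot (grad c v) u - _ + _)
  linear_combination -h2

lemma span_of_det {p q v w : Fin 3 → ℂ} (hw : det3 p q w ≠ 0) (hv : det3 p q v = 0) :
    ∃ s t : ℂ, v = s • p + t • q := by
  have h0 : p 1 * q 2 - p 2 * q 1 ≠ 0 ∨ p 2 * q 0 - p 0 * q 2 ≠ 0 ∨ p 0 * q 1 - p 1 * q 0 ≠ 0 := by
    by_contra! h
    apply hw
    rw [det3]; grind only
  rw [det3] at hv
  rcases h0 with h | h | h
  · refine ⟨(v 1 * q 2 - v 2 * q 1) / (p 1 * q 2 - p 2 * q 1), (p 1 * v 2 - p 2 * v 1) / (p 1 * q 2 - p 2 * q 1), ?_⟩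
    funext i
    fin_cases i <;> simp <;> field_simp <;> grind only
  · refine ⟨(v 2 * q 0 - v 0 * q 2) / (p 2 * q 0 - p 0 * q 2), (p 2 * v 0 - p 0 * v 2) / (p 2 * q 0 - p 0 * q 2), ?_⟩
    funext i
    fin_cases i <;> simp <;> field_simp <;> grind only
  · refine ⟨(v 0 * q 1 - v 1 * q 0) / (p 0 * q 1 - p 1 * q 0), (p 0 * v 1 - p 1 * v 0) / (p 0 * q 1 - p 1 * q 0), ?_⟩
    funext i
    fin_cases i <;> simp <;> field_simp <;> grind only

lemma crs_ne {p q w : Fin 3 → ℂ} (hw : det3 p q w ≠ 0) : crs p q ≠ 0 := by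
  intro h
  apply hw
  rw [← dot_crs, h]; simp [dot]

/-- four zeros on a line -/
lemma cub_vanish {c} {p q w : Fin 3 → ℂ} (hw : det3 p q w ≠ 0) (hp : cub c p = 0) (hq : cub c q = 0)
    {s t s' t' : ℂ} (hs : s ≠ 0) (ht : t ≠ 0) (hs' : s' ≠ 0) (ht' : t' ≠ 0) (hne : s * t' ≠ s' * t)
    (h1 : cub c (s • p + t • q) = 0) (h2 : cub c (s' • p + t' • q) = 0) :
    ∀ v, dot (crs p q) v = 0 → cub c v = 0 := by
  intro v hv
  rw [dot_crs] at hv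
  obtain ⟨x, y, rfl⟩ := span_of_det hw hv
  rw [cub_line, hp, hq] at h1 h2 ⊢
  have e1 : s * dot (grad c p) q + t * dot (grad c q) p = 0 := by
    have : s * t * (s * dot (grad c p) q + t * dot (grad c q) p) = 0 := by linear_combination h1
    simpa [hs, ht] using this
  have e2 : s' * dot (grad c p) q + t' * dot (grad c q) p = 0 := by
    have : s' * t' * (s' * dot (grad c p) q + t' * dot (grad c q) p) = 0 := by linear_combination h2
    simpa [hs', ht'] using this
  have e3 : dot (grad c p) q = 0 := by
    have : (s * t' - s' * t) * dot (grad c p) q = 0 := by linear_combination t' * e1 - t * e2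
    exact (mul_eq_zero.1 this).resolve_left (sub_ne_zero.2 hne)
  have e4 : dot (grad c q) p = 0 := by
    rw [e3] at e1; simpa [ht] using e1
  rw [e3, e4]; ring

lemma quad_vanish {c} {p q w : Fin 3 → ℂ} (hw : det3 p q w ≠ 0) (hp : quad c p = 0) (hq : quad c q = 0)
    {s t : ℂ} (hs : s ≠ 0) (ht : t ≠ 0)
    (h1 : quad c (s • p + t • q) = 0) :
    ∀ v, dot (crs p q) v = 0 → quad c v = 0 := by
  intro v hv
  rw [dot_crs] at hv
  obtain ⟨x, y, rfl⟩ := span_of_det hw hv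
  rw [quad_line, hp, hq] at h1 ⊢
  have e1 : dot (qgrad c p) q = 0 := by
    have : s * t * (dot (qgrad c p) q) = 0 := by linear_combination h1
    simpa [hs, ht] using this
  rw [e1]; ring

lemma det3_line3 (p q u v : Fin 3 → ℂ) (s t : ℂ) :
    det3 u v (s • p + t • q) = s * det3 u v p + t * det3 u v q := by
  simp [det3]; ring

lemma det3_rep1 (p q : Fin 3 → ℂ) : det3 p q p = 0 := by simp [det3]; ring
lemma det3_rep2 (p q : Fin 3 → ℂ) : det3 p q q = 0 := by simp [det3]; ring

lemma cayley_bacharach {c} {p11 p12 p13 p21 p22 p23 p31 p32 p33 : Fin 3 → ℂ}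
    (f11 : cub c p11 = 0) (f12 : cub c p12 = 0) (f13 : cub c p13 = 0)
    (f21 : cub c p21 = 0) (f22 : cub c p22 = 0) (f23 : cub c p23 = 0)
    (f31 : cub c p31 = 0) (f32 : cub c p32 = 0)
    (r1 : det3 p11 p12 p13 = 0) (r2 : det3 p21 p22 p23 = 0) (r3 : det3 p31 p32 p33 = 0)
    (c1 : det3 p11 p21 p31 = 0) (c2 : det3 p12 p22 p32 = 0) (c3 : det3 p13 p23 p33 = 0)
    (g1 : det3 p11 p12 p21 ≠ 0) (g2 : det3 p11 p12 p22 ≠ 0) (g3 : det3 p11 p12 p23 ≠ 0)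
    (g4 : det3 p11 p12 p31 ≠ 0) (g5 : det3 p11 p12 p32 ≠ 0)
    (g6 : det3 p21 p22 p31 ≠ 0) (g7 : det3 p21 p22 p32 ≠ 0) (g8 : det3 p31 p32 p11 ≠ 0)
    (k1 : det3 p11 p21 p12 ≠ 0) (k2 : det3 p11 p21 p13 ≠ 0)
    (k3 : det3 p12 p22 p11 ≠ 0) (k4 : det3 p12 p22 p13 ≠ 0)
    (k6 : det3 p13 p23 p12 ≠ 0)
    (k7 : det3 p11 p21 p23 ≠ 0) (k8 : det3 p12 p22 p23 ≠ 0) : cub c p33 = 0 := by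
  obtain ⟨s, t, rfl⟩ := span_of_det g1 r1
  have ht : t ≠ 0 := by
    rintro rfl; apply k2; rw [det3_line3, det3_rep1]; ring
  have hs : s ≠ 0 := by
    rintro rfl; apply k4; rw [det3_line3, det3_rep1]; ring
  set C : Fin 10 → ℂ := mulc (crs p11 p21) (mulq (crs p12 p22) (crs (s • p11 + t • p12) p23)) with hC
  have hCe : ∀ v, cub C v = det3 p11 p21 v * (det3 p12 p22 v * det3 (s • p11 + t • p12) p23 v) := by
    intro v; rw [hC, mulc_eval, mulq_eval, dot_crs, dot_crs, dot_crs]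
  have hr : cub C (s • p11 + (2 * t) • p12) ≠ 0 := by
    rw [hCe, det3_line3, det3_line3, det3_rep1, det3_rep1]
    have : s • p11 + (2 * t) • p12 = (1 : ℂ) • (s • p11 + t • p12) + t • p12 := by module
    rw [this, det3_line3, det3_rep1]
    simp [hs, ht, k1, k3, k6]
  set k := cub c (s • p11 + (2 * t) • p12) / cub C (s • p11 + (2 * t) • p12) with hk
  have hG : ∀ v, cub (c - k • C) v = cub c v - k * cub C v := by
    intro v; simp [cub]; ring
  have z : ∀ v, cub C v = 0 → cub c v = 0 → cub (c - k • C) v = 0 := by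
    intro v h1 h2; rw [hG, h1, h2]; ring
  have hv := cub_vanish (c := c - k • C) g1 (z _ (by rw [hCe, det3_rep1]; ring) f11)
    (z _ (by rw [hCe, det3_rep1]; ring) f12) hs ht hs (mul_ne_zero two_ne_zero ht)
    (by intro h; apply mul_ne_zero hs ht; linear_combination h)
    (z _ (by rw [hCe, det3_rep1]; ring) f13)
    (by rw [hG, hk]; field_simp; ring)
  obtain ⟨q, hq⟩ := cub_dvd (crs_ne g1) hv
  simp only [dot_crs] at hq
  have zq : ∀ v, cub C v = 0 → cub c v = 0 → det3 p11 p12 v ≠ 0 → quad q v = 0 := by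
    intro v h1 h2 h3
    have := z v h1 h2
    rw [hq] at this
    exact (mul_eq_zero.1 this).resolve_left h3
  have q1 := zq p21 (by rw [hCe, det3_rep2]; ring) f21 g1
  have q2 := zq p22 (by rw [hCe, det3_rep2]; ring) f22 g2
  have q3 := zq p23 (by rw [hCe, det3_rep2]; ring) f23 g3
  have q4 := zq p31 (by rw [hCe, c1]; ring) f31 g4
  have q5 := zq p32 (by rw [hCe, c2]; ring) f32 g5
  have hC33 : cub C p33 = 0 := by rw [hCe, c3]; ring
  clear_value C k
  obtain ⟨s', t', rfl⟩ := span_of_det g6 r2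
  have ht' : t' ≠ 0 := by
    rintro rfl; apply k7; rw [det3_line3, det3_rep2]; ring
  have hs' : s' ≠ 0 := by
    rintro rfl; apply k8; rw [det3_line3, det3_rep2]; ring
  obtain ⟨b, hb⟩ := quad_dvd (crs_ne g6) (quad_vanish g6 q1 q2 hs' ht' q3)
  simp only [dot_crs] at hb
  rw [hb] at q4 q5
  have b4 := (mul_eq_zero.1 q4).resolve_left g6
  have b5 := (mul_eq_zero.1 q5).resolve_left g7
  obtain ⟨s2, t2, rfl⟩ := span_of_det g8 r3
  have := hq (s2 • p31 + t2 • p32)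
  rw [hb, dot_line, b4, b5, hG, hC33] at this
  linear_combination this

variable {H : Type} [AddCommGroup H]

lemma Net.exists_indep [Nontrivial H] {A B C : H → Fin 3 → ℂ} (h : Net A B C) (x y : H) :
    ∃ w, det3 (A x) (B y) w ≠ 0 := by
  obtain ⟨z, hz⟩ := exists_ne (-x-y)
  refine ⟨C z, fun h0 => hz ?_⟩
  have := (h x y z).1 h0
  rw [← sub_eq_zero]
  rw [← this]; abel

lemma Net.off [Nontrivial H] {A B C : H → Fin 3 → ℂ} (h : Net A B C) {x x' : H} (y : H) (hx : x ≠ x') :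
    det3 (A x) (B y) (A x') ≠ 0 := by
  intro h0
  apply hx
  obtain ⟨w, hw⟩ := h.exists_indep x y
  obtain ⟨s, t, e⟩ := span_of_det hw h0
  have h1 := (h x y (-x-y)).2 (by abel)
  have h2 := (h x' y (-x-y)).1 (by
    obtain ⟨s', t', e'⟩ := span_of_det hw ((h x y (-x-y)).2 (by abel))
    rw [e, e']; simp [det3]; ring)
  rw [← sub_eq_zero, ← neg_inj, neg_zero, ← h2]; abel

lemma Net.off2 [Nontrivial H] {A B C : H → Fin 3 → ℂ} (h : Net A B C) {x x' : H} (y : H) (hx : x ≠ x') :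
    det3 (A x) (C y) (A x') ≠ 0 := by
  exact h.swap.cyc.off (A := A) (B := C) (C := B) y hx
end Net3

/-! ### The window argument -/
namespace Net3
variable {H : Type} [AddCommGroup H] [Nontrivial H]

lemma Net.cb {A B C : H → Fin 3 → ℂ} (n : Net A B C) {h x y z : H} (h1 : h ≠ 0) (h2 : 2 • h ≠ 0)
    (hs : x + y + z + 3 • h = 0) {c}
    (a0 : cub c (A x) = 0) (a1 : cub c (A (x + h)) = 0) (a2 : cub c (A (x + 2 • h)) = 0)
    (b0 : cub c (B y) = 0) (b1 : cub c (B (y + h)) = 0) (b2 : cub c (B (y + 2 • h)) = 0)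
    (c1 : cub c (C (z + h)) = 0) (c2 : cub c (C (z + 2 • h)) = 0) : cub c (C z) = 0 := by
  have hz : z = - x - y - 3 • h := by
    rw [← sub_eq_zero, ← hs]; abel
  have e01 : ∀ w : H, w ≠ w + h := fun w => by simpa using h1
  have e02 : ∀ w : H, w ≠ w + 2 • h := fun w => by simpa using h2
  have e12 : ∀ w : H, w + h ≠ w + 2 • h := fun w e => h1 (by
    have := congrArg (fun t => t - w - h) e
    simp only [two_smul] at this
    abel_nf at this
    simpa using this.symm)
  have nA : ∀ i j k : H, i + j + k ≠ 0 → det3 (A i) (B j) (C k) ≠ 0 := fun i j k h h' => h ((n i j k).1 h')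
  have nB : ∀ i j k : H, i + j + k ≠ 0 → det3 (B j) (C k) (A i) ≠ 0 := fun i j k h h' =>
    h ((n i j k).1 (by rw [← det3_cyc]; exact h'))
  have nC : ∀ i j k : H, i + j + k ≠ 0 → det3 (C k) (A i) (B j) ≠ 0 := fun i j k h h' =>
    h ((n i j k).1 (by rw [← det3_cyc, ← det3_cyc]; exact h'))
  have mA : ∀ i j k : H, i + j + k = 0 → det3 (A i) (B j) (C k) = 0 := fun i j k h => ((n i j k).2 h)
  have mB : ∀ i j k : H, i + j + k = 0 → det3 (B j) (C k) (A i) = 0 := fun i j k h => by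
    rw [det3_cyc]; exact (n i j k).2 h
  have mC : ∀ i j k : H, i + j + k = 0 → det3 (C k) (A i) (B j) = 0 := fun i j k h => by
    rw [det3_cyc, det3_cyc]; exact (n i j k).2 h
  have sw : ∀ u v w, det3 u v w ≠ 0 → det3 v u w ≠ 0 := fun u v w h => by
    rw [det3_swap]; simpa using h
  refine cayley_bacharach (p11 := B y) (p12 := C (z + h)) (p13 := A (x + 2 • h))
    (p21 := C (z + 2 • h)) (p22 := A x) (p23 := B (y + h)) (p31 := A (x + h)) (p32 := B (y + 2 • h))
    b0 c1 a2 c2 a0 b1 a1 b2 (mB _ _ _ ?_) (mC _ _ _ ?_) (mA _ _ _ ?_) (mB _ _ _ ?_) (mC _ _ _ ?_)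
    (mA _ _ _ ?_) (sw _ _ _ (n.cyc.swap.off _ (e12 _))) (nB _ _ _ ?_) (n.cyc.off _ (e01 _))
    (nB _ _ _ ?_) (n.cyc.off _ (e02 _)) (sw _ _ _ (n.off2 _ (e01 _))) (nC _ _ _ ?_)
    (sw _ _ _ (n.swap.off _ (e02 _).symm)) (sw _ _ _ (n.cyc.swap.off _ (e12 _).symm)) (nB _ _ _ ?_)
    (nC _ _ _ ?_) (sw _ _ _ (n.off2 _ (e02 _))) (nA _ _ _ ?_) (n.cyc.off _ (e01 _)) (nC _ _ _ ?_)
  · rw [hz]; abel1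
  · rw [hz]; abel1
  · rw [hz]; abel1
  · rw [hz]; abel1
  · rw [hz]; abel1
  · rw [hz]; abel1
  · rw [hz]; intro e; apply h2; rw [← neg_eq_zero, ← e]; abel1
  · rw [hz]; intro e; apply h1; rw [← neg_eq_zero, ← e]; abel1
  · rw [hz]; intro e; apply h1; rw [← e]; abel1
  · rw [hz]; intro e; apply h1; rw [← e]; abel1
  · rw [hz]; intro e; apply h2; rw [← neg_eq_zero, ← e]; abel1
  · rw [hz]; intro e; apply h1; rw [← e]; abel1
  · rw [hz]; intro e; apply h1; rw [← neg_eq_zero, ← e]; abel1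

lemma window_logic {a b c : ℤ → Prop}
    (w1 : ∀ i j k : ℤ, i + j + k = -3 → a i → a (i+1) → a (i+2) → b j → b (j+1) → b (j+2) → c (k+1) →
      c (k+2) → c k)
    (w2 : ∀ i j k : ℤ, i + j + k = -3 → a i → a (i+1) → b j → b (j+1) → b (j+2) → c k → c (k+1) →
      c (k+2) → a (i+2))
    (w3 : ∀ i j k : ℤ, i + j + k = -3 → a i → a (i+1) → a (i+2) → b j → b (j+1) → c k → c (k+1) →
      c (k+2) → b (j+2))
    (a0 : a 0) (a1 : a 1) (a2 : a 2) (a3 : a 3) (b0 : b 0) (b1 : b 1) (b2 : b 2) (c1 : c (-1))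
    (c2 : c (-2)) (n : ℕ) : a n ∧ b n ∧ c (-n-1) := by
  have c3 : c (-3) := w1 0 0 (-3) (by norm_num) a0 a1 a2 b0 b1 b2 c2 c1
  have c4 : c (-4) := w1 1 0 (-4) (by norm_num) a1 a2 a3 b0 b1 b2 c3 c2
  have b3 : b 3 := w3 0 1 (-4) (by norm_num) a0 a1 a2 b1 b2 c4 c3 c2
  have key : ∀ n : ℕ, 3 ≤ n → ∀ m : ℕ, m ≤ n → a m ∧ b m ∧ c (-m-1) := by
    intro n hn
    induction n, hn using Nat.le_induction with
    | base => intro m hm; interval_cases m <;> simp_all <;> norm_num <;> assumption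
    | succ n hn ih =>
      have A : ∀ i : ℤ, 0 ≤ i → i ≤ n → a i := fun i h h' => by
        obtain ⟨m, rfl⟩ := Int.eq_ofNat_of_zero_le h; exact (ih m (by exact_mod_cast h')).1
      have B : ∀ i : ℤ, 0 ≤ i → i ≤ n → b i := fun i h h' => by
        obtain ⟨m, rfl⟩ := Int.eq_ofNat_of_zero_le h; exact (ih m (by exact_mod_cast h')).2.1
      have C : ∀ i : ℤ, i ≤ -1 → - n - 1 ≤ i → c i := fun i h h' => by
        obtain ⟨m, hm⟩ := Int.eq_ofNat_of_zero_le (a := -i-1) (by omega)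
        have := (ih m (by omega)).2.2
        convert this using 1; rw [← hm]; ring
      have cn : c (-n-2) := w1 (n-2) 1 (-n-2) (by ring) (A _ (by omega) (by omega)) (A _ (by omega) (by omega))
        (A _ (by omega) (by omega)) (B _ (by omega) (by omega)) (B _ (by omega) (by omega))
        (B _ (by omega) (by omega)) (C _ (by omega) (by omega)) (C _ (by omega) (by omega))
      have an := w2 (n-1) 0 (-n-2) (by ring) (A _ (by omega) (by omega)) (A _ (by omega) (by omega))
        (B _ (by omega) (by omega)) (B _ (by omega) (by omega))
        (B _ (by omega) (by omega)) cn (C _ (by omega) (by omega)) (C _ (by omega) (by omega))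
      have bn := w3 0 (n-1) (-n-2) (by ring) (A _ (by omega) (by omega)) (A _ (by omega) (by omega))
        (A _ (by omega) (by omega)) (B _ (by omega) (by omega)) (B _ (by omega) (by omega))
         cn (C _ (by omega) (by omega)) (C _ (by omega) (by omega))
      intro m hm
      rcases Nat.lt_or_ge m (n+1) with h | h
      · exact ih m (by omega)
      · have : m = n + 1 := by omega
        subst this
        refine ⟨?_, ?_, ?_⟩
        · convert an using 1; push_cast; ring
        · convert bn using 1; push_cast; ring
        · convert cn using 1; push_cast; ring
  exact key (n+3) (by omega) n (by omega)

lemma exists_cub (p : Fin 9 → Fin 3 → ℂ) : ∃ c, c ≠ 0 ∧ ∀ i, cub c (p i) = 0 := by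
  let L : (Fin 10 → ℂ) →ₗ[ℂ] (Fin 9 → ℂ) :=
    { toFun := fun c i => cub c (p i)
      map_add' := by intro x y; funext i; simp [cub]; ring
      map_smul' := by intro x y; funext i; simp [cub]; ring }
  have : LinearMap.ker L ≠ ⊥ := LinearMap.ker_ne_bot_of_finrank_lt (by simp)
  obtain ⟨c, hc, h0⟩ := Submodule.exists_mem_ne_zero_of_ne_bot this
  exact ⟨c, h0, fun i => congrFun (LinearMap.mem_ker.1 hc) i⟩

/-- each coset triple lies on a nonzero cubic -/
lemma Net.exists_cubic [Finite H] {A B C : H → Fin 3 → ℂ} (n : Net A B C) {h : H} (h1 : h ≠ 0) (h2 : 2 • h ≠ 0)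
    (x y : H) : ∃ c, c ≠ 0 ∧ (∀ k : ℤ, cub c (A (x + k • h)) = 0) ∧ (∀ k : ℤ, cub c (B (y + k • h)) = 0) ∧
      (∀ k : ℤ, cub c (C (- x - y + k • h)) = 0) := by
  set z := - x - y with hz
  obtain ⟨c, hc, hp⟩ := exists_cub ![A (x + (0:ℤ) • h), A (x + (1:ℤ) • h), A (x + (2:ℤ) • h), A (x + (3:ℤ) • h),
    B (y + (0:ℤ) • h), B (y + (1:ℤ) • h), B (y + (2:ℤ) • h), C (z + (-1:ℤ) • h), C (z + (-2:ℤ) • h)]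
  refine ⟨c, hc, ?_⟩
  have nh1 : -h ≠ 0 := by simpa using h1
  have nh2 : 2 • (-h) ≠ 0 := by simpa using h2
  have key := window_logic (a := fun k => cub c (A (x + k • h)) = 0) (b := fun k => cub c (B (y + k • h)) = 0)
    (c := fun k => cub c (C (z + k • h)) = 0) ?_ ?_ ?_ (hp 0) (hp 1) (hp 2) (hp 3) (hp 4) (hp 5) (hp 6)
    (hp 7) (hp 8)
  · classical
    have hfin : ∀ k : ℤ, ∃ m : ℕ, k • h = m • h := by
      intro k
      obtain ⟨m, hm⟩ := mem_zmultiples_iff_mem_range_addOrderOf.1 (⟨k, rfl⟩ : k • h ∈ AddSubgroup.zmultiples h) |> Finset.mem_image.1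
      exact ⟨m, hm.2.symm⟩
    refine ⟨fun k => ?_, fun k => ?_, fun k => ?_⟩
    · obtain ⟨m, hm⟩ := hfin k
      rw [hm]; have := (key m).1; simpa using this
    · obtain ⟨m, hm⟩ := hfin k
      rw [hm]; have := (key m).2.1; simpa using this
    · obtain ⟨m, hm⟩ := hfin (-k-1)
      have := (key m).2.2
      convert this using 4
      rw [sub_smul, neg_smul, natCast_zsmul, ← hm, sub_smul, neg_smul]; simp
  · intro i j k hs a0 a1 a2 b0 b1 b2 c1 c2
    have e1 : ∀ (w : H) (i : ℤ), w + i • h + h = w + (i + 1) • h := by intro w i; module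
    have e2 : ∀ (w : H) (i : ℤ), w + i • h + 2 • h = w + (i + 2) • h := by intro w i; module
    refine n.cb (h := h) (x := x + i • h) (y := y + j • h) (z := z + k • h) h1 h2 ?_ a0
      ?_ ?_ b0 ?_ ?_ ?_ ?_ <;> try simp only [e1, e2]
    all_goals try assumption
    have : k = -3 - i - j := by omega
    rw [hz, this]; module
  · intro i j k hs a0 a1 b0 b1 b2 c0 c1 c2
    have e1 : ∀ (w : H) (i : ℤ), w + (i+2) • h + -h = w + (i + 1) • h := by intro w i; module
    have e2 : ∀ (w : H) (i : ℤ), w + (i+2) • h + 2 • -h = w + i • h := by intro w i; module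
    refine n.cyc.cb (h := -h) (x := y + (j+2) • h) (y := z + (k+2) • h) (z := x + (i+2) • h) nh1 nh2 ?_ b2
      ?_ ?_ c2 ?_ ?_ ?_ ?_ <;> try simp only [e1, e2]
    all_goals try assumption
    have : k = -3 - i - j := by omega
    rw [hz, this]; module
  · intro i j k hs a0 a1 a2 b0 b1 c0 c1 c2
    have e1 : ∀ (w : H) (i : ℤ), w + (i+2) • h + -h = w + (i + 1) • h := by intro w i; module
    have e2 : ∀ (w : H) (i : ℤ), w + (i+2) • h + 2 • -h = w + i • h := by intro w i; module
    refine n.cyc.cyc.cb (h := -h) (x := z + (k+2) • h) (y := x + (i+2) • h) (z := y + (j+2) • h) nh1 nh2 ?_ c2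
      ?_ ?_ a2 ?_ ?_ ?_ ?_ <;> try simp only [e1, e2]
    all_goals try assumption
    have : k = -3 - i - j := by omega
    rw [hz, this]; module
end Net3

/-! ### Multiplicative lemma; singular irreducible cubics -/
namespace Net3
variable {H : Type} [AddCommGroup H] 

lemma cyclic_of_mul [Finite H] (f g k : H → ℂ) (K : ℂ) (hf : ∀ x, f x ≠ 0) (hg : ∀ x, g x ≠ 0)
    (hk : ∀ x, k x ≠ 0) (h : ∀ x y z, x + y + z = 0 → f x * g y * k z = K)
    (inj : Function.Injective f) :
    ∃ a b : ℕ, 0 < a ∧ 0 < b ∧ Nonempty (H ≃+ ZMod a × ZMod b) := by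
  have h1 : ∀ x y, f (x + y) * f 0 = f x * f y := by
    intro x y
    have e1 := h x y (-x-y) (by abel)
    have e2 := h (x + y) 0 (-x-y) (by abel)
    have e3 := h 0 y (-y) (by abel)
    have e4 := h y 0 (-y) (by abel)
    have e5 : f x * g y = f (x + y) * g 0 := mul_right_cancel₀ (hk (-x-y)) (by rw [e1, e2])
    have e6 : f 0 * g y = f y * g 0 := mul_right_cancel₀ (hk (-y)) (by rw [e3, e4])
    apply mul_right_cancel₀ (hg 0)
    linear_combination f x * e6 - f 0 * e5
  let φ : Multiplicative H →* ℂ :=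
    { toFun := fun x => f x.toAdd / f 0
      map_one' := by simp [hf]
      map_mul' := by
        intro x y
        have := h1 x.toAdd y.toAdd
        have h0 := hf 0
        rw [toAdd_mul]; field_simp; exact this }
  have hφ : Function.Injective φ := by
    intro x y hxy
    have : f x.toAdd / f 0 = f y.toAdd / f 0 := hxy
    have := (div_left_inj' (hf 0)).1 this
    exact Multiplicative.toAdd.injective (inj this)
  have := isCyclic_of_subgroup_isDomain φ hφ
  have : IsAddCyclic H := isCyclic_multiplicative_iff.1 this
  exact NetG.two_factors_of_cyclic

lemma no_add [Finite H] [Nontrivial H] (f g k : H → ℂ) (K : ℂ)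
    (h : ∀ x y z, x + y + z = 0 → f x + g y + k z = K)
    (inj : Function.Injective f) : False := by
  have h1 : ∀ x y, f (x + y) + f 0 = f x + f y := by
    intro x y
    have e1 := h x y (-x-y) (by abel)
    have e2 := h (x + y) 0 (-x-y) (by abel)
    have e3 := h 0 y (-y) (by abel)
    have e4 := h y 0 (-y) (by abel)
    linear_combination e2 - e1 +e3 - e4
  obtain ⟨a, ha⟩ := exists_ne (0 : H)
  have h2 : ∀ n : ℕ, f (n • a) - f 0 = n * (f a - f 0) := by
    intro n
    induction n with
    | zero => simp
    | succ n ih =>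
      rw [succ_nsmul]; push_cast; linear_combination ih + h1 (n • a) a
  have h3 := h2 (addOrderOf a)
  rw [addOrderOf_nsmul_eq_zero, sub_self] at h3
  have h4 : (addOrderOf a : ℂ) ≠ 0 := by
    exact_mod_cast (addOrderOf_pos a).ne'
  have := (mul_eq_zero.1 h3.symm).resolve_left h4
  exact ha (inj (sub_eq_zero.1 this))

/-- A net on an irreducible cubic -/
def Good (c : Fin 10 → ℂ) (A B C : H → Fin 3 → ℂ) : Prop :=
  Net A B C ∧ NoLine (cub c) ∧ (∀ x, cub c (A x) = 0) ∧ (∀ x, cub c (B x) = 0) ∧ (∀ x, cub c (C x) = 0)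

lemma Good.cyc {c} {A B C : H → Fin 3 → ℂ} (h : Good c A B C) : Good c B C A :=
  ⟨h.1.cyc, h.2.1, h.2.2.2.1, h.2.2.2.2, h.2.2.1⟩

/-- linear combination -/
def comb (e₁ e₂ e₃ v : Fin 3 → ℂ) : Fin 3 → ℂ := v 0 • e₁ + v 1 • e₂ + v 2 • e₃

lemma exists_coords {e₁ e₂ e₃ : Fin 3 → ℂ} (hd : det3 e₁ e₂ e₃ ≠ 0) (v : Fin 3 → ℂ) :
    ∃ v', v = comb e₁ e₂ e₃ v' := by
  refine ⟨![det3 v e₂ e₃ / det3 e₁ e₂ e₃, det3 e₁ v e₃ / det3 e₁ e₂ e₃, det3 e₁ e₂ v / det3 e₁ e₂ e₃], ?_⟩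
  funext i
  simp only [comb]
  fin_cases i <;> simp <;> field_simp <;> simp only [det3] <;> ring

lemma det3_comb (e₁ e₂ e₃ u v w : Fin 3 → ℂ) : det3 (comb e₁ e₂ e₃ u) (comb e₁ e₂ e₃ v) (comb e₁ e₂ e₃ w)
    = det3 e₁ e₂ e₃ * det3 u v w := by
  simp [det3, comb]; ring

lemma net_change {A B C : H → Fin 3 → ℂ} (n : Net A B C) {e₁ e₂ e₃ : Fin 3 → ℂ} (hd : det3 e₁ e₂ e₃ ≠ 0) :
    ∃ A' B' C' : H → Fin 3 → ℂ, Net A' B' C' ∧ (∀ x, A x = comb e₁ e₂ e₃ (A' x)) ∧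
      (∀ x, B x = comb e₁ e₂ e₃ (B' x)) ∧ (∀ x, C x = comb e₁ e₂ e₃ (C' x)) := by
  choose A' hA using fun x => exists_coords hd (A x)
  choose B' hB using fun x => exists_coords hd (B x)
  choose C' hC using fun x => exists_coords hd (C x)
  refine ⟨A', B', C', fun x y z => ?_, hA, hB, hC⟩
  rw [← n x y z, hA, hB, hC, det3_comb]
  simp [hd]

lemma noLine_change {c c'} {e₁ e₂ e₃ : Fin 3 → ℂ} (hd : det3 e₁ e₂ e₃ ≠ 0) (h : NoLine (cub c))
    (hc : ∀ v, cub c' v = cub c (comb e₁ e₂ e₃ v)) : NoLine (cub c') := by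
  intro a ha
  set b := a 0 • crs e₂ e₃ + a 1 • crs e₃ e₁ + a 2 • crs e₁ e₂ with hb
  have hdot : ∀ v, dot b (comb e₁ e₂ e₃ v) = det3 e₁ e₂ e₃ * dot a v := by
    intro v; simp [hb, dot, comb, crs, det3]; ring
  obtain ⟨u, hu⟩ := exists_dot_one ha
  obtain ⟨v, hv, hv'⟩ := h b (by
    intro h0
    have := hdot u
    rw [h0, hu, mul_one] at this
    apply hd; rw [← this]; simp [dot])
  obtain ⟨w, rfl⟩ := exists_coords hd v
  refine ⟨w, ?_, by rwa [hc]⟩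
  rw [hdot] at hv
  exact (mul_eq_zero.1 hv).resolve_left hd

lemma Good.change {c} {A B C : H → Fin 3 → ℂ} (h : Good c A B C) {e₁ e₂ e₃ : Fin 3 → ℂ}
    (hd : det3 e₁ e₂ e₃ ≠ 0) {c'} (hc : ∀ v, cub c' v = cub c (comb e₁ e₂ e₃ v)) :
    ∃ A' B' C' : H → Fin 3 → ℂ, Good c' A' B' C' := by
  obtain ⟨A', B', C', n, hA, hB, hC⟩ := net_change h.1 hd
  refine ⟨A', B', C', n, noLine_change hd h.2.1 hc, fun x => ?_, fun x => ?_, fun x => ?_⟩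
  · rw [hc, ← hA]; exact h.2.2.1 x
  · rw [hc, ← hB]; exact h.2.2.2.1 x
  · rw [hc, ← hC]; exact h.2.2.2.2 x

lemma exists_basis {O : Fin 3 → ℂ} (h : O ≠ 0) : ∃ e₁ e₂, det3 e₁ e₂ O ≠ 0 := by
  obtain ⟨i, hi⟩ := Function.ne_iff.1 h
  simp only [Pi.zero_apply] at hi
  fin_cases i
  · refine ⟨![0,1,0], ![0,0,1], ?_⟩; simp [det3]; simpa using hi
  · refine ⟨![1,0,0], ![0,0,1], ?_⟩; simp [det3]; simpa using hi
  · refine ⟨![1,0,0], ![0,1,0], ?_⟩; simp [det3]; simpa using hi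

lemma cub_euler (c v) : dot (grad c v) v = 3 * cub c v := by
  simp [dot, grad, quad, cub]; ring

/-- net points are not singular points -/
lemma Good.ne_sing [Nontrivial H] {c} {A B C : H → Fin 3 → ℂ} (h : Good c A B C) {O : Fin 3 → ℂ}
    (hO : grad c O = 0) (x : H) (k : ℂ) : A x ≠ k • O := by
  intro hx
  have hk : k ≠ 0 := by
    rintro rfl; rw [zero_smul] at hx; exact h.1.ne_zero x hx
  obtain ⟨w, hw⟩ := h.1.exists_indep x 0
  have h1 := (h.1 x 0 (-x)).2 (by abel)
  obtain ⟨s, t, e⟩ := span_of_det hw h1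
  have ht : t ≠ 0 := by
    rintro rfl; rw [zero_smul, add_zero] at e
    exact h.1.cyc.cyc.disj _ _ _ e
  have hs : s ≠ 0 := by
    rintro rfl; rw [zero_smul, zero_add] at e
    exact h.1.cyc.swap.disj _ _ _ e
  have hg : grad c (A x) = 0 := by
    have : grad c (k • O) = k ^ 2 • grad c O := by
      funext i; fin_cases i <;> simp [grad, quad] <;> ring
    rw [hx, this, hO, smul_zero]
  have hC := h.2.2.2.2 (-x)
  rw [e, cub_line, h.2.2.1, h.2.2.2.1, hg] at hC
  have h0 : dot 0 (B 0) = 0 := by simp [dot]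
  have h2 : dot (grad c (B 0)) (A x) = 0 := by
    have : s * t ^ 2 * dot (grad c (B 0)) (A x) = 0 := by
      linear_combination hC - s ^ 2 * t * h0
    simpa [hs, ht] using this
  obtain ⟨v, hv, hv'⟩ := h.2.1 _ (crs_ne hw)
  rw [dot_crs] at hv
  obtain ⟨s', t', rfl⟩ := span_of_det hw hv
  apply hv'
  rw [cub_line, h.2.2.1, h.2.2.2.1, hg, h2, h0]; ring

lemma cub_ext {c c'} (h : ∀ v, cub c v = cub c' v) : c = c' := by
  have e1 := h ![1,0,0]
  have e2 := h ![0,1,0]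
  have e3 := h ![0,0,1]
  have e4 := h ![1,1,0]
  have e5 := h ![1,-1,0]
  have e6 := h ![1,0,1]
  have e7 := h ![1,0,-1]
  have e8 := h ![0,1,1]
  have e9 := h ![0,1,-1]
  have e10 := h ![1,1,1]
  simp [cub] at *
  funext i
  fin_cases i <;> simp <;> grind only
end Net3

/-! ### Singular irreducible cubics -/
namespace Net3
variable {H : Type} [AddCommGroup H] 

lemma param {P : Fin 3 → ℂ} (h : P 0 ≠ 0) : P = P 0 • ![1, P 1 / P 0, P 2 / P 0] := by
  funext i; fin_cases i <;> simp <;> field_simp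

lemma det3_param {P Q R : Fin 3 → ℂ} (hP : P 0 ≠ 0) (hQ : Q 0 ≠ 0) (hR : R 0 ≠ 0) (h : det3 P Q R = 0) :
    det3 ![1, P 1 / P 0, P 2 / P 0] ![1, Q 1 / Q 0, Q 2 / Q 0] ![1, R 1 / R 0, R 2 / R 0] = 0 := by
  rw [param hP, param hQ, param hR, det3_smul1, det3_smul2, det3_smul3] at h
  simpa [hP, hQ, hR] using h

lemma node_alg {a0 a1 a3 a6 t1 t2 t3 w1 w2 w3 : ℂ} (h6 : a6 ≠ 0)
    (f1 : t1 * w1 + a0 + a1 * t1 + a3 * t1 ^ 2 + a6 * t1 ^ 3 = 0)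
    (f2 : t2 * w2 + a0 + a1 * t2 + a3 * t2 ^ 2 + a6 * t2 ^ 3 = 0)
    (f3 : t3 * w3 + a0 + a1 * t3 + a3 * t3 ^ 2 + a6 * t3 ^ 3 = 0)
    (h12 : t1 ≠ t2) (h13 : t1 ≠ t3) (h23 : t2 ≠ t3) (hd : det3 ![1, t1, w1] ![1, t2, w2] ![1, t3, w3] = 0) :
    t1 * t2 * t3 = - a0 / a6 := by
  simp [det3] at hd
  have : (t1 - t2) * (t1 - t3) * (t2 - t3) * (a0 + a6 * (t1 * t2 * t3)) = 0 := by
    first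
    | linear_combination t1*t2*t3*hd - t2*t3*(t3-t2)*f1 + t1*t3*(t3-t1)*f2 - t1*t2*(t2-t1)*f3
    | linear_combination -(t1*t2*t3*hd - t2*t3*(t3-t2)*f1 + t1*t3*(t3-t1)*f2 - t1*t2*(t2-t1)*f3)
  have := (mul_eq_zero.1 this).resolve_left
    (mul_ne_zero (mul_ne_zero (sub_ne_zero.2 h12) (sub_ne_zero.2 h13)) (sub_ne_zero.2 h23))
  field_simp; linear_combination this

lemma cusp_alg {a0 a1 a3 a6 t1 t2 t3 w1 w2 w3 : ℂ} (h6 : a6 ≠ 0)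
    (f1 : w1 + a0 + a1 * t1 + a3 * t1 ^ 2 + a6 * t1 ^ 3 = 0)
    (f2 : w2 + a0 + a1 * t2 + a3 * t2 ^ 2 + a6 * t2 ^ 3 = 0)
    (f3 : w3 + a0 + a1 * t3 + a3 * t3 ^ 2 + a6 * t3 ^ 3 = 0)
    (h12 : t1 ≠ t2) (h13 : t1 ≠ t3) (h23 : t2 ≠ t3) (hd : det3 ![1, t1, w1] ![1, t2, w2] ![1, t3, w3] = 0) :
    t1 + t2 + t3 = - a3 / a6 := by
  simp [det3] at hd
  have : (t1 - t2) * (t1 - t3) * (t2 - t3) * (a3 + a6 * (t1 + t2 + t3)) = 0 := by grind only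
  have := (mul_eq_zero.1 this).resolve_left
    (mul_ne_zero (mul_ne_zero (sub_ne_zero.2 h12) (sub_ne_zero.2 h13)) (sub_ne_zero.2 h23))
  field_simp; linear_combination this

/-- the data extracted from a parametrised cubic -/
lemma Good.node [Nontrivial H] [Finite H] {a0 a1 a3 a6 : ℂ} {A B C : H → Fin 3 → ℂ}
    (h : Good ![a0,a1,0,a3,1,0,a6,0,0,0] A B C) :
    ∃ a b : ℕ, 0 < a ∧ 0 < b ∧ Nonempty (H ≃+ ZMod a × ZMod b) := by
  set c : Fin 10 → ℂ := ![a0,a1,0,a3,1,0,a6,0,0,0] with hc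
  have hF : ∀ P, cub c P = P 0 * P 1 * P 2 + a0 * P 0 ^ 3 + a1 * P 0 ^ 2 * P 1 + a3 * P 0 * P 1 ^ 2 + a6 * P 1 ^ 3 := by
    intro P; simp [cub, hc]; ring
  have hO : grad c ![0,0,1] = 0 := by
    funext i; fin_cases i <;> simp [grad, quad, hc]
  have h6 : a6 ≠ 0 := by
    intro h0
    obtain ⟨v, hv, hv'⟩ := h.2.1 ![1,0,0] (fun e => by simpa using congrFun e 0)
    apply hv'; simp [dot] at hv; rw [hF, hv, h0]; ring
  have h0 : a0 ≠ 0 := by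
    intro h0
    obtain ⟨v, hv, hv'⟩ := h.2.1 ![0,1,0] (fun e => by simpa using congrFun e 1)
    apply hv'; simp [dot] at hv; rw [hF, hv, h0]; ring
  have nz : ∀ P : Fin 3 → ℂ, cub c P = 0 → (∀ k : ℂ, P ≠ k • ![0,0,1]) → P 0 ≠ 0 ∧ P 1 ≠ 0 := by
    intro P hP hk
    rw [hF] at hP
    have : ¬ (P 0 = 0 ∧ P 1 = 0) := by
      rintro ⟨e0, e1⟩
      apply hk (P 2); funext i; fin_cases i <;> simp [e0, e1]
    refine ⟨fun e => this ⟨e, ?_⟩, fun e => this ⟨?_, e⟩⟩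
    · rw [e] at hP; simpa [h6] using hP
    · rw [e] at hP; simpa [h0] using hP
  have fw : ∀ P : Fin 3 → ℂ, cub c P = 0 → P 0 ≠ 0 →
      (P 1 / P 0) * (P 2 / P 0) + a0 + a1 * (P 1 / P 0) + a3 * (P 1 / P 0) ^ 2 + a6 * (P 1 / P 0) ^ 3 = 0 := by
    intro P hP e0
    rw [hF] at hP
    field_simp; linear_combination hP
  have same : ∀ P Q : Fin 3 → ℂ, cub c P = 0 → cub c Q = 0 → P 0 ≠ 0 → P 1 ≠ 0 → Q 0 ≠ 0 → P 1 / P 0 = Q 1 / Q 0 →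
      ∃ k : ℂ, P = k • Q := by
    intro P Q hP hQ p0 p1 q0 e
    have f1 := fw P hP p0
    have f2 := fw Q hQ q0
    have ew : P 2 / P 0 = Q 2 / Q 0 := by
      apply mul_left_cancel₀ (div_ne_zero p1 p0)
      rw [← e] at f2
      linear_combination f1 - f2
    refine ⟨P 0 / Q 0, ?_⟩
    rw [param p0, param q0, e, ew, smul_smul]; simp [q0]
  have nA := fun x => nz _ (h.2.2.1 x) (h.ne_sing hO x)
  have nB := fun x => nz _ (h.2.2.2.1 x) (h.cyc.ne_sing hO x)
  have nC := fun x => nz _ (h.2.2.2.2 x) (h.cyc.cyc.ne_sing hO x)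
  refine cyclic_of_mul (fun x => A x 1 / A x 0) (fun x => B x 1 / B x 0) (fun x => C x 1 / C x 0) (- a0 / a6)
    (fun x => div_ne_zero (nA x).2 (nA x).1) (fun x => div_ne_zero (nB x).2 (nB x).1)
    (fun x => div_ne_zero (nC x).2 (nC x).1) ?_ ?_
  · intro x y z hs
    refine node_alg h6 (fw _ (h.2.2.1 x) (nA x).1) (fw _ (h.2.2.2.1 y) (nB y).1) (fw _ (h.2.2.2.2 z) (nC z).1) ?_ ?_ ?_
      (det3_param (nA x).1 (nB y).1 (nC z).1 ((h.1 x y z).2 hs))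
    · intro e
      obtain ⟨k, hk⟩ := same _ _ (h.2.2.1 x) (h.2.2.2.1 y) (nA x).1 (nA x).2 (nB y).1 e
      exact h.1.disj _ _ _ hk
    · intro e
      obtain ⟨k, hk⟩ := same _ _ (h.2.2.1 x) (h.2.2.2.2 z) (nA x).1 (nA x).2 (nC z).1 e
      exact h.1.swap.cyc.disj _ _ _ hk
    · intro e
      obtain ⟨k, hk⟩ := same _ _ (h.2.2.2.1 y) (h.2.2.2.2 z) (nB y).1 (nB y).2 (nC z).1 e
      exact h.1.cyc.disj _ _ _ hk
  · intro x y e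
    obtain ⟨k, hk⟩ := same _ _ (h.2.2.1 x) (h.2.2.1 y) (nA x).1 (nA x).2 (nA y).1 e
    exact h.1.inj hk

lemma Good.cusp [Nontrivial H] [Finite H] {a0 a1 a3 a6 : ℂ} {A B C : H → Fin 3 → ℂ}
    (h : Good ![a0,a1,1,a3,0,0,a6,0,0,0] A B C) : False := by
  set c : Fin 10 → ℂ := ![a0,a1,1,a3,0,0,a6,0,0,0] with hc
  have hF : ∀ P, cub c P = P 0 ^ 2 * P 2 + a0 * P 0 ^ 3 + a1 * P 0 ^ 2 * P 1 + a3 * P 0 * P 1 ^ 2 + a6 * P 1 ^ 3 := by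
    intro P; simp [cub, hc]; ring
  have hO : grad c ![0,0,1] = 0 := by
    funext i; fin_cases i <;> simp [grad, quad, hc]
  have h6 : a6 ≠ 0 := by
    intro h0
    obtain ⟨v, hv, hv'⟩ := h.2.1 ![1,0,0] (fun e => by simpa using congrFun e 0)
    apply hv'; simp [dot] at hv; rw [hF, hv, h0]; ring
  have nz : ∀ P : Fin 3 → ℂ, cub c P = 0 → (∀ k : ℂ, P ≠ k • ![0,0,1]) → P 0 ≠ 0 := by
    intro P hP hk e0
    rw [hF, e0] at hP
    have e1 : P 1 = 0 := by simpa [h6] using hP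
    apply hk (P 2); funext i; fin_cases i <;> simp [e0, e1]
  have fw : ∀ P : Fin 3 → ℂ, cub c P = 0 → P 0 ≠ 0 →
      (P 2 / P 0) + a0 + a1 * (P 1 / P 0) + a3 * (P 1 / P 0) ^ 2 + a6 * (P 1 / P 0) ^ 3 = 0 := by
    intro P hP e0
    rw [hF] at hP
    field_simp; linear_combination hP
  have same : ∀ P Q : Fin 3 → ℂ, cub c P = 0 → cub c Q = 0 → P 0 ≠ 0 → Q 0 ≠ 0 → P 1 / P 0 = Q 1 / Q 0 →
      ∃ k : ℂ, P = k • Q := by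
    intro P Q hP hQ p0 q0 e
    have f1 := fw P hP p0
    have f2 := fw Q hQ q0
    have ew : P 2 / P 0 = Q 2 / Q 0 := by
      rw [← e] at f2
      linear_combination f1 - f2
    refine ⟨P 0 / Q 0, ?_⟩
    rw [param p0, param q0, e, ew, smul_smul]; simp [q0]
  have nA := fun x => nz _ (h.2.2.1 x) (h.ne_sing hO x)
  have nB := fun x => nz _ (h.2.2.2.1 x) (h.cyc.ne_sing hO x)
  have nC := fun x => nz _ (h.2.2.2.2 x) (h.cyc.cyc.ne_sing hO x)
  refine no_add (fun x => A x 1 / A x 0) (fun x => B x 1 / B x 0) (fun x => C x 1 / C x 0) (- a3 / a6) ?_ ?_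
  · intro x y z hs
    refine cusp_alg h6 (fw _ (h.2.2.1 x) (nA x)) (fw _ (h.2.2.2.1 y) (nB y)) (fw _ (h.2.2.2.2 z) (nC z)) ?_ ?_ ?_
      (det3_param (nA x) (nB y) (nC z) ((h.1 x y z).2 hs))
    · intro e
      obtain ⟨k, hk⟩ := same _ _ (h.2.2.1 x) (h.2.2.2.1 y) (nA x) (nB y) e
      exact h.1.disj _ _ _ hk
    · intro e
      obtain ⟨k, hk⟩ := same _ _ (h.2.2.1 x) (h.2.2.2.2 z) (nA x) (nC z) e
      exact h.1.swap.cyc.disj _ _ _ hk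
    · intro e
      obtain ⟨k, hk⟩ := same _ _ (h.2.2.2.1 y) (h.2.2.2.2 z) (nB y) (nC z) e
      exact h.1.cyc.disj _ _ _ hk
  · intro x y e
    obtain ⟨k, hk⟩ := same _ _ (h.2.2.1 x) (h.2.2.1 y) (nA x) (nA y) e
    exact h.1.inj hk

lemma binary_quad (a b c : ℂ) : ∃ p q p' q' : ℂ, a = p * p' ∧ b = p * q' + p' * q ∧ c = q * q' := by
  by_cases ha : a = 0
  · exact ⟨0, 1, b, c, by simp [ha], by ring, by ring⟩
  · obtain ⟨r, hr⟩ := IsAlgClosed.exists_root (Polynomial.C a * Polynomial.X ^ 2 + Polynomial.C b * Polynomial.X + Polynomial.C c)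
      (by rw [Polynomial.degree_quadratic ha]; norm_num)
    simp at hr
    refine ⟨a, -a * r, 1, b / a + r, by ring, by field_simp; ring, ?_⟩
    field_simp; linear_combination hr

lemma binary_cubic_root (a b c d : ℂ) : ∃ x y : ℂ, (x ≠ 0 ∨ y ≠ 0) ∧
    a * x ^ 3 + b * x ^ 2 * y + c * x * y ^ 2 + d * y ^ 3 = 0 := by
  by_cases ha : a = 0
  · exact ⟨1, 0, by simp, by simp [ha]⟩
  · obtain ⟨r, hr⟩ := IsAlgClosed.exists_root (Polynomial.C a * Polynomial.X ^ 3 + Polynomial.C b * Polynomial.X ^ 2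
      + Polynomial.C c * Polynomial.X + Polynomial.C d)
      (by rw [Polynomial.degree_cubic ha]; norm_num)
    simp at hr
    exact ⟨r, 1, by simp, by linear_combination hr⟩

lemma Good.sing2 [Nontrivial H] [Finite H] {c} {A B C : H → Fin 3 → ℂ}
    (h : Good c A B C) (h5 : c 5 = 0) (h8 : c 8 = 0) (h9 : c 9 = 0) :
    ∃ a b : ℕ, 0 < a ∧ 0 < b ∧ Nonempty (H ≃+ ZMod a × ZMod b) := by
  have hF : ∀ v, cub c v = v 2 * (c 2 * v 0 ^ 2 + c 4 * v 0 * v 1 + c 7 * v 1 ^ 2) +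
      (c 0 * v 0 ^ 3 + c 1 * v 0 ^ 2 * v 1 + c 3 * v 0 * v 1 ^ 2 + c 6 * v 1 ^ 3) := by
    intro v; simp only [cub, h5, h8, h9]; ring
  have hne : ¬ (c 2 = 0 ∧ c 4 = 0 ∧ c 7 = 0) := by
    rintro ⟨e2, e4, e7⟩
    obtain ⟨x, y, hxy, hr⟩ := binary_cubic_root (c 0) (c 1) (c 3) (c 6)
    obtain ⟨v, hv, hv'⟩ := h.2.1 ![y, -x, 0] (by
      intro e
      have e0 := congrFun e 0
      have e1 := congrFun e 1
      simp at e0 e1; simp [e0, e1] at hxy)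
    apply hv'
    simp [dot] at hv
    rw [hF, e2, e4, e7]
    have : ∃ s, v 0 = s * x ∧ v 1 = s * y := by
      rcases hxy with h | h
      · exact ⟨v 0 / x, by field_simp, by field_simp; linear_combination -hv⟩
      · exact ⟨v 1 / y, by field_simp; linear_combination hv, by field_simp⟩
    obtain ⟨s, e0, e1⟩ := this
    rw [e0, e1]; linear_combination s ^ 3 * hr
  obtain ⟨p, q, p', q', g2, g4, g7⟩ := binary_quad (c 2) (c 4) (c 7)
  by_cases hD : p * q' - p' * q = 0
  · have hpq : p ≠ 0 ∨ q ≠ 0 := by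
      by_contra! e; apply hne; simp [g2, g4, g7, e.1, e.2]
    have hpq' : p' ≠ 0 ∨ q' ≠ 0 := by
      by_contra! e; apply hne; simp [g2, g4, g7, e.1, e.2]
    obtain ⟨m, m1, m2⟩ : ∃ m, p' = m * p ∧ q' = m * q := by
      rcases hpq with h | h
      · exact ⟨p' / p, by field_simp, by field_simp; linear_combination hD⟩
      · exact ⟨q' / q, by field_simp; linear_combination -hD, by field_simp⟩
    have hm : m ≠ 0 := by
      rintro rfl; simp [m1, m2] at hpq'
    obtain ⟨α, β, hl⟩ : ∃ α β, p * α + q * β = 1 := by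
      rcases hpq with h | h
      · exact ⟨1 / p, 0, by field_simp; ring⟩
      · exact ⟨0, 1 / q, by field_simp; ring⟩
    subst m1 m2
    let γ := -q
    let δ := p
    obtain ⟨A', B', C', g⟩ := h.change (e₁ := ![α, β, 0]) (e₂ := ![-q, p, 0]) (e₃ := ![0,0,1/m])
      (by
        have : det3 ![α, β, 0] ![-q, p, 0] ![0,0,1/m] = 1 / m := by
          simp [det3]; linear_combination m⁻¹ * hl
        rw [this]; exact one_div_ne_zero hm)
      (c' := ![c 0*α^3+c 1*α^2*β+c 3*α*β^2+c 6*β^3,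
        3*c 0*α^2*γ+c 1*(α^2*δ+2*α*γ*β)+c 3*(β^2*γ+2*α*β*δ)+3*c 6*β^2*δ, 1,
        3*c 0*α*γ^2+c 1*(γ^2*β+2*α*γ*δ)+c 3*(δ^2*α+2*β*γ*δ)+3*c 6*β*δ^2, 0, 0,
        c 0*γ^3+c 1*γ^2*δ+c 3*γ*δ^2+c 6*δ^3, 0, 0, 0])
      (by
        intro v
        rw [hF]
        simp only [cub, comb, γ, δ, g2, g4, g7]
        simp
        field_simp
        have e : p * (v 0 * α - v 1 * q) + q * (v 0 * β + v 1 * p) = v 0 := by linear_combination v 0 * hl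
        have e2 : v 2 * (p * (v 0 * α - v 1 * q) + q * (v 0 * β + v 1 * p)) ^ 2 = v 2 * v 0 ^ 2 := by rw [e]
        linear_combination - e2)
    exact g.cusp.elim
  · obtain ⟨D, hDD⟩ : ∃ D, D * (p * q' - p' * q) = 1 := ⟨1 / (p * q' - p' * q), by field_simp⟩
    have hD0 : D ≠ 0 := by rintro rfl; simp at hDD
    let α := D * q'
    let β := -D * p'
    let γ := -D * q
    let δ := D * p
    obtain ⟨A', B', C', g⟩ := h.change (e₁ := ![α, β, 0]) (e₂ := ![γ, δ, 0]) (e₃ := ![0,0,1])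
      (by
        simp [det3, α, β, γ, δ]; intro e; apply hD0; linear_combination e - D * hDD)
      (c' := ![c 0*α^3+c 1*α^2*β+c 3*α*β^2+c 6*β^3,
        3*c 0*α^2*γ+c 1*(α^2*δ+2*α*γ*β)+c 3*(β^2*γ+2*α*β*δ)+3*c 6*β^2*δ, 0,
        3*c 0*α*γ^2+c 1*(γ^2*β+2*α*γ*δ)+c 3*(δ^2*α+2*β*γ*δ)+3*c 6*β*δ^2, 1, 0,
        c 0*γ^3+c 1*γ^2*δ+c 3*γ*δ^2+c 6*δ^3, 0, 0, 0])
      (by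
        intro v
        rw [hF]
        have e1 : p * (v 0 * α + v 1 * γ) + q * (v 0 * β + v 1 * δ) = v 0 := by
          simp only [α, β, γ, δ]; linear_combination v 0 * hDD
        have e2 : p' * (v 0 * α + v 1 * γ) + q' * (v 0 * β + v 1 * δ) = v 1 := by
          simp only [α, β, γ, δ]; linear_combination v 1 * hDD
        have e3 : v 2 * ((p * (v 0 * α + v 1 * γ) + q * (v 0 * β + v 1 * δ)) *
          (p' * (v 0 * α + v 1 * γ) + q' * (v 0 * β + v 1 * δ))) = v 2 * (v 0 * v 1) := by rw [e1, e2]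
        clear_value α β γ δ
        simp only [cub, comb, g2, g4, g7]
        simp
        linear_combination - e3)
    exact g.node

lemma Good.sing [Nontrivial H] [Finite H] {c} {A B C : H → Fin 3 → ℂ}
    (h : Good c A B C) {O : Fin 3 → ℂ} (h0 : O ≠ 0) (hO : grad c O = 0) :
    ∃ a b : ℕ, 0 < a ∧ 0 < b ∧ Nonempty (H ≃+ ZMod a × ZMod b) := by
  obtain ⟨e₁, e₂, hd⟩ := exists_basis h0
  obtain ⟨c', hc⟩ := cub_subst c e₁ e₂ O
  obtain ⟨A', B', C', g⟩ := h.change hd (c' := c') (fun v => (hc v).symm)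
  have hFO : cub c O = 0 := by
    have := cub_euler c O
    rw [hO] at this
    simp [dot] at this; exact this
  have k1 : ∀ t : ℂ, cub c' ![1, 0, t] = cub c e₁ + t * dot (grad c e₁) O := by
    intro t
    rw [← hc]
    have := cub_line c e₁ O 1 t
    rw [hO, hFO] at this
    simp [dot] at this ⊢; rw [this]
  have k2 : ∀ t : ℂ, cub c' ![0, 1, t] = cub c e₂ + t * dot (grad c e₂) O := by
    intro t
    rw [← hc]
    have := cub_line c e₂ O 1 t
    rw [hO, hFO] at this
    simp [dot] at this ⊢; rw [this]
  have k3 : cub c' ![0, 0, 1] = 0 := by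
    rw [← hc]; simp [hFO]
  have a1 := k1 0
  have a2 := k1 1
  have a3 := k1 (-1)
  have b1 := k2 0
  have b2 := k2 1
  have b3 := k2 (-1)
  simp [cub] at a1 a2 a3 b1 b2 b3 k3
  exact g.sing2 (by grind only) (by grind only) k3
end Net3

/-! ### Nonsingular cubics -/
namespace Net3
open MvPolynomial WeierstrassCurve.Affine
variable {H : Type} [AddCommGroup H] 

lemma weier_sing (W : WeierstrassCurve ℂ) (h : W.Δ = 0) : ∃ x y : ℂ,
    y ^ 2 + W.a₁ * x * y + W.a₃ * y = x ^ 3 + W.a₂ * x ^ 2 + W.a₄ * x + W.a₆ ∧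
    2 * y + W.a₁ * x + W.a₃ = 0 ∧ W.a₁ * y = 3 * x ^ 2 + 2 * W.a₂ * x + W.a₄ := by
  have ha : W.twoTorsionPolynomial.a ≠ 0 := by
    simp [WeierstrassCurve.twoTorsionPolynomial]
  obtain ⟨x, y, z, h3⟩ := (Cubic.splits_iff_roots_eq_three (φ := RingHom.id ℂ) ha).1 (IsAlgClosed.splits _)
  have hd := Cubic.discr_eq_prod_three_roots ha h3
  have hb := Cubic.b_eq_three_roots ha h3
  have hc := Cubic.c_eq_three_roots ha h3
  have hdd := Cubic.d_eq_three_roots ha h3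
  rw [WeierstrassCurve.twoTorsionPolynomial_discr, h] at hd
  simp only [RingHom.id_apply] at hb hc hdd
  have key : ∃ r s, W.b₂ = -4 * (2 * r + s) ∧ 2 * W.b₄ = 4 * (r ^ 2 + 2 * r * s) ∧ W.b₆ = -4 * r ^ 2 * s := by
    replace hd := hd.symm
    simp [ha, sub_eq_zero] at hd
    simp only [WeierstrassCurve.twoTorsionPolynomial] at hb hc hdd
    rcases hd with (h | h) | h
    · exact ⟨x, z, by rw [hb, h]; ring, by rw [hc, h]; ring, by rw [hdd, h]; ring⟩
    · exact ⟨x, y, by rw [hb, h]; ring, by rw [hc, h]; ring, by rw [hdd, h]; ring⟩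
    · exact ⟨y, x, by rw [hb, h]; ring, by rw [hc, h]; ring, by rw [hdd, h]; ring⟩
  obtain ⟨r, s, k1, k2, k3⟩ := key
  simp only [WeierstrassCurve.b₂, WeierstrassCurve.b₄, WeierstrassCurve.b₆] at k1 k2 k3
  refine ⟨r, -(W.a₁ * r + W.a₃) / 2, ?_, by ring, ?_⟩
  · linear_combination -(r ^ 2 * k1 + r * k2 + k3) / 4
  · linear_combination -(2 * r * k1 + k2) / 4

lemma Good.weier [Nontrivial H] [Finite H] {a1 a2 a3 a4 a6 : ℂ} {A B C : H → Fin 3 → ℂ}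
    (h : Good ![-1,0,-a2,0,a1,-a4,0,1,a3,-a6] A B C) :
    ∃ a b : ℕ, 0 < a ∧ 0 < b ∧ Nonempty (H ≃+ ZMod a × ZMod b) := by
  set c : Fin 10 → ℂ := ![-1,0,-a2,0,a1,-a4,0,1,a3,-a6] with hc
  let W : WeierstrassCurve.Affine ℂ := ⟨a1, a2, a3, a4, a6⟩
  by_cases hΔ : W.Δ = 0
  · obtain ⟨x, y, e1, e2, e3⟩ := weier_sing W hΔ
    simp only [W] at e1 e2 e3
    refine h.sing (O := ![x, y, 1]) (fun e => by simpa using congrFun e 2) ?_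
    funext i; fin_cases i <;> simp [grad, quad, hc]
    · linear_combination e3
    · linear_combination e2
    · linear_combination 3 * e1 - x * e3 - y * e2
  haveI : W.IsElliptic := ⟨isUnit_iff_ne_zero.2 hΔ⟩
  have pt : ∀ P : Fin 3 → ℂ, P ≠ 0 → cub c P = 0 → ∃ (Q : W.Point) (k : ℂ), k ≠ 0 ∧ P = k • vec Q := by
    intro P hP0 hP
    simp [cub, hc] at hP
    by_cases h2 : P 2 = 0
    · simp [h2] at hP
      refine ⟨0, P 1, ?_, ?_⟩
      · intro h1; apply hP0; funext i; fin_cases i <;> simp [h1, h2, hP]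
      · funext i; fin_cases i <;> simp [h2, hP, vec_zero]
    · have he : W.Equation (P 0 / P 2) (P 1 / P 2) := by
        rw [equation_iff]; simp only [W]; field_simp; linear_combination hP
      refine ⟨Point.some _ _ (equation_iff_nonsingular.1 he), P 2, h2, ?_⟩
      rw [vec_some]
      funext i; fin_cases i <;> simp <;> field_simp
  choose QA kA hA0 hA using fun x => pt _ (h.1.ne_zero x) (h.2.2.1 x)
  choose QB kB hB0 hB using fun x => pt _ (h.1.cyc.ne_zero x) (h.2.2.2.1 x)
  choose QC kC hC0 hC using fun x => pt _ (h.1.cyc.cyc.ne_zero x) (h.2.2.2.2 x)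
  have hsame : ∀ {P Q : Fin 3 → ℂ} {X Y : W.Point} {k l : ℂ}, P = k • vec X → l ≠ 0 → Q = l • vec Y → X = Y →
      P = (k / l) • Q := by
    intro P Q X Y k l e1 hl e2 e
    rw [e1, e2, e, smul_smul]; field_simp
  have hsum : ∀ x y z, x + y + z = 0 → QA x + QB y + QC z = 0 := by
    intro x y z hs
    apply sum_zero_of_det
    · intro e; exact h.1.disj _ _ _ (hsame (hA x) (hB0 y) (hB y) e)
    · intro e; exact h.1.swap.cyc.disj _ _ _ (hsame (hA x) (hC0 z) (hC z) e)
    · intro e; exact h.1.cyc.disj _ _ _ (hsame (hB y) (hC0 z) (hC z) e)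
    · have := (h.1 x y z).2 hs
      rw [hA, hB, hC, det3_smul1, det3_smul2, det3_smul3] at this
      simpa [hA0, hB0, hC0] using this
  let φ : H →+ W.Point :=
    { toFun := fun x => QA x - QA 0
      map_zero' := sub_self _
      map_add' := by
        intro x y
        have e1 := hsum x y (-x-y) (by abel)
        have e2 := hsum (x + y) 0 (-x-y) (by abel)
        have e3 := hsum 0 y (-y) (by abel)
        have e4 := hsum y 0 (-y) (by abel)
        have : QA (x+y) - QA 0 - (QA x - QA 0 + (QA y - QA 0)) =
          (QA (x + y) + QB 0 + QC (-x-y)) - (QA x + QB y + QC (-x-y)) + (QA 0 + QB y + QC (-y))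
            - (QA y + QB 0 + QC (-y)) := by abel
        rw [e1, e2, e3, e4] at this
        rw [← sub_eq_zero, this]; abel }
  have hφ : Function.Injective φ := by
    intro x y hxy
    have : QA x = QA y := sub_left_inj.1 hxy
    exact h.1.inj (hsame (hA x) (hA0 y) (hA y) this)
  apply NetG.two_factors
  intro p hp ψ hψ
  exact NetE.no_three W p hp (φ.comp ψ) (hφ.comp hψ)

lemma Good.smul {c} {A B C : H → Fin 3 → ℂ} (h : Good c A B C) {k : ℂ} (hk : k ≠ 0) : Good (k • c) A B C := by
  have e : ∀ v, cub (k • c) v = k * cub c v := by intro v; simp [cub]; ring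
  refine ⟨h.1, ?_, fun x => ?_, fun x => ?_, fun x => ?_⟩
  · intro a ha
    obtain ⟨v, h1, h2⟩ := h.2.1 a ha
    exact ⟨v, h1, by rw [e]; exact mul_ne_zero hk h2⟩
  · rw [e, h.2.2.1, mul_zero]
  · rw [e, h.2.2.2.1, mul_zero]
  · rw [e, h.2.2.2.2, mul_zero]

lemma Good.flex [Nontrivial H] [Finite H] {c} {A B C : H → Fin 3 → ℂ}
    (h : Good c A B C) (h1 : c 1 = 0) (h3 : c 3 = 0) (h6 : c 6 = 0) :
    ∃ a b : ℕ, 0 < a ∧ 0 < b ∧ Nonempty (H ≃+ ZMod a × ZMod b) := by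
  by_cases h7 : c 7 = 0
  · refine h.sing (O := ![0,1,0]) (fun e => by simpa using congrFun e 1) ?_
    funext i; fin_cases i <;> simp [grad, quad, *]
  have h0 : c 0 ≠ 0 := by
    intro h0
    obtain ⟨v, hv, hv'⟩ := h.2.1 ![0,0,1] (fun e => by simpa using congrFun e 2)
    simp [dot] at hv
    apply hv'; simp [cub, *]
  have hk : 1 / (c 7 ^ 3 * c 0 ^ 4) ≠ 0 := one_div_ne_zero (mul_ne_zero (pow_ne_zero _ h7) (pow_ne_zero _ h0))
  obtain ⟨A', B', C', g⟩ := (h.smul hk).change (e₁ := ![-(c 7 * c 0), 0, 0]) (e₂ := ![0, c 7 * c 0 ^ 2, 0])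
    (e₃ := ![0,0,1]) (by simp [det3, h0, h7])
    (c' := ![-1, 0, -(-c 2 / (c 7 * c 0 ^ 2)), 0, -c 4 / (c 7 * c 0), -(c 5 / (c 7 ^ 2 * c 0 ^ 3)), 0, 1,
      c 8 / (c 7 ^ 2 * c 0 ^ 2), -(-c 9 / (c 7 ^ 3 * c 0 ^ 4))])
    (by intro v; simp [cub, comb, *]; field_simp)
  exact g.weier

/-- rows of the Hessian -/
def hess (c : Fin 10 → ℂ) : Fin 3 → Fin 3 → Fin 3 → ℂ :=
  ![![![6 * c 0, 2 * c 1, 2 * c 2], ![2 * c 1, 2 * c 3, c 4], ![2 * c 2, c 4, 2 * c 5]],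
    ![![2 * c 1, 2 * c 3, c 4], ![2 * c 3, 6 * c 6, 2 * c 7], ![c 4, 2 * c 7, 2 * c 8]],
    ![![2 * c 2, c 4, 2 * c 5], ![c 4, 2 * c 7, 2 * c 8], ![2 * c 5, 2 * c 8, 6 * c 9]]]

/-- the Hessian matrix at a point -/
def hessM (c : Fin 10 → ℂ) (v : Fin 3 → ℂ) (i : Fin 3) : Fin 3 → ℂ := fun j => dot (hess c i j) v

lemma exists_ker {r : Fin 3 → Fin 3 → ℂ} (h : det3 (r 0) (r 1) (r 2) = 0) :
    ∃ u : Fin 3 → ℂ, u ≠ 0 ∧ ∀ i, dot (r i) u = 0 := by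
  rw [det3_eq_det] at h
  obtain ⟨u, hu, hu'⟩ := Matrix.exists_mulVec_eq_zero_iff.2 h
  refine ⟨u, hu, fun i => ?_⟩
  have := congrFun hu' i
  fin_cases i <;> simpa [Matrix.mulVec, dotProduct, Fin.sum_univ_three, dot] using this

lemma exists_flex (c) : ∃ P u : Fin 3 → ℂ, P ≠ 0 ∧ u ≠ 0 ∧ cub c P = 0 ∧ ∀ i, dot (hessM c P i) u = 0 := by
  let G : R3 := (Matrix.of fun i j => lin (hess c i j)).det
  have hG : ∀ v, eval v G = det3 (hessM c v 0) (hessM c v 1) (hessM c v 2) := by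
    intro v
    have : ∀ i j, eval v (lin (hess c i j)) = hessM c v i j := fun i j => lin_eval _ _
    simp only [G, Matrix.det_fin_three, Matrix.of_apply, map_sub, map_add, map_mul, this, det3]
    ring
  obtain ⟨P, hP, h1, h2⟩ := exists_common_zero (cubP c) G (by rw [cubP_eval]; simp [cub])
    (by rw [hG]; simp [hessM, det3, dot])
  rw [hG] at h2
  rw [cubP_eval] at h1
  obtain ⟨u, hu, hu'⟩ := exists_ker h2
  exact ⟨P, u, hP, hu, h1, hu'⟩

theorem Good.main [Nontrivial H] [Finite H] {c} {A B C : H → Fin 3 → ℂ}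
    (h : Good c A B C) :
    ∃ a b : ℕ, 0 < a ∧ 0 < b ∧ Nonempty (H ≃+ ZMod a × ZMod b) := by
  obtain ⟨P, u, hP, hu, hF, hk⟩ := exists_flex c
  have k0 := hk 0
  have k1 := hk 1
  have k2 := hk 2
  have d1 : dot (grad c P) u = 0 := by
    simp [dot, hessM, hess, grad, quad] at k0 k1 k2 ⊢
    linear_combination (P 0 * k0 + P 1 * k1 + P 2 * k2) / 2
  have d2 : dot (grad c u) P = 0 := by
    simp [dot, hessM, hess, grad, quad] at k0 k1 k2 ⊢
    linear_combination (u 0 * k0 + u 1 * k1 + u 2 * k2) / 2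
  by_cases hpar : ∃ k : ℂ, u = k • P
  · obtain ⟨k, rfl⟩ := hpar
    have hk0 : k ≠ 0 := by rintro rfl; simp at hu
    refine h.sing hP ?_
    have e : ∀ i, dot (hessM c P i) (k • P) = 2 * k * grad c P i := by
      intro i; fin_cases i <;> simp [dot, hessM, hess, grad, quad] <;> ring
    funext i
    have := hk i
    rw [e] at this
    simpa [hk0] using this
  · obtain ⟨w, hw⟩ : ∃ w, det3 u P w ≠ 0 := by
      obtain ⟨a, ha, ha'⟩ := Indep.sep (p := u) (q := P) ⟨hP, by push Not at hpar; exact hpar⟩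
      by_contra! h0
      apply hP
      have e0 := h0 ![1,0,0]
      have e1 := h0 ![0,1,0]
      have e2 := h0 ![0,0,1]
      simp [det3] at e0 e1 e2
      simp only [dot] at ha ha'
      funext i
      fin_cases i <;> simp <;> apply mul_left_cancel₀ ha'
      · linear_combination u 0 * ha - a 1 * e2 + a 2 * e1
      · linear_combination u 1 * ha + a 0 * e2 - a 2 * e0
      · linear_combination u 2 * ha - a 0 * e1 + a 1 * e0
    obtain ⟨c', hc⟩ := cub_subst c u P w
    obtain ⟨A', B', C', g⟩ := h.change hw (c' := c') (fun v => (hc v).symm)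
    have k1 : ∀ s t : ℂ, cub c' ![s, t, 0] = s ^ 3 * cub c u := by
      intro s t
      rw [← hc]
      have := cub_line c u P s t
      rw [d1, d2, hF] at this
      simp at this ⊢; rw [this]
    have a1 := k1 1 0
    have a2 := k1 1 1
    have a3 := k1 1 (-1)
    have a4 := k1 0 1
    simp [cub] at a1 a2 a3 a4
    exact g.flex (by grind only) (by grind only) (by grind only)
end Net3

/-! ### Reducible cubics: first reductions -/
namespace Net3
variable {H : Type} [AddCommGroup H] 

lemma pick3 : ∀ a b : Fin 5, ∃ i j k : Fin 5, i < j ∧ j < k ∧ i ≠ a ∧ j ≠ a ∧ k ≠ a ∧ i ≠ b ∧ j ≠ b ∧ k ≠ b := by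
  decide

lemma smul_ne {h : H} (hd : ∀ i : ℤ, 0 < i → i < 10 → i • h ≠ 0) {i j : ℤ} (h1 : i < j) (h2 : j < i + 10) :
    i • h ≠ j • h := by
  intro e
  apply hd (j - i) (by omega) (by omega)
  rw [sub_smul, e, sub_self]

lemma one_bad {P : Fin 5 → Prop} (h : ∀ i j, P i → P j → i = j) : ∃ a, ∀ i, i ≠ a → ¬ P i := by
  by_cases h0 : ∃ a, P a
  · obtain ⟨a, ha⟩ := h0
    exact ⟨a, fun i hi hp => hi (h _ _ hp ha)⟩
  · push Not at h0
    exact ⟨0, fun i _ => h0 i⟩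

lemma Net.red_claim [Nontrivial H] {A B C : H → Fin 3 → ℂ} (n : Net A B C) {h : H}
    (hd : ∀ i : ℤ, 0 < i → i < 10 → i • h ≠ 0) {a : Fin 3 → ℂ} {q : Fin 6 → ℂ} (hq : ∃ v, quad q v ≠ 0)
    (qA : ∀ k : ℤ, dot a (A (k • h)) ≠ 0 → quad q (A (k • h)) = 0)
    (qB : ∀ k : ℤ, dot a (B (k • h)) ≠ 0 → quad q (B (k • h)) = 0)
    (qC : ∀ k : ℤ, dot a (C (k • h)) ≠ 0 → quad q (C (k • h)) = 0)
    (uB : ∀ i j : ℤ, dot a (B (i • h)) = 0 → dot a (B (j • h)) = 0 → i • h = j • h)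
    (uC : ∀ i j : ℤ, dot a (C (i • h)) = 0 → dot a (C (j • h)) = 0 → i • h = j • h) (i : ℤ) :
    dot a (A (i • h)) = 0 := by
  by_contra hi
  have inj : ∀ r s : Fin 5, ((r : ℕ) : ℤ) • h = ((s : ℕ) : ℤ) • h → r = s := by
    intro r s e
    rcases lt_trichotomy r s with hl | hl | hl
    · exact absurd e (smul_ne hd (by exact_mod_cast hl) (by omega))
    · exact hl
    · exact absurd e.symm (smul_ne hd (by exact_mod_cast hl) (by omega))
  obtain ⟨b, hb⟩ := one_bad (P := fun r : Fin 5 => dot a (B (((r : ℕ) : ℤ) • h)) = 0) (fun r s h1 h2 => inj _ _ (uB _ _ h1 h2))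
  obtain ⟨c, hc⟩ := one_bad (P := fun r : Fin 5 => dot a (C ((-i - ((r : ℕ) : ℤ)) • h)) = 0) (fun r s h1 h2 => inj _ _ (by
    have := uC _ _ h1 h2
    rw [sub_smul, sub_smul] at this
    exact sub_right_injective this))
  obtain ⟨r1, r2, r3, l1, l2, b1, b2, b3, c1, c2, c3⟩ := pick3 b c
  have n12 : ((r1 : ℕ) : ℤ) • h ≠ ((r2 : ℕ) : ℤ) • h := fun e => l1.ne (inj _ _ e)
  have n13 : ((r1 : ℕ) : ℤ) • h ≠ ((r3 : ℕ) : ℤ) • h := fun e => (l1.trans l2).ne (inj _ _ e)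
  have n23 : ((r2 : ℕ) : ℤ) • h ≠ ((r3 : ℕ) : ℤ) • h := fun e => l2.ne (inj _ _ e)
  have qb1 := qB _ (hb _ b1)
  have qb2 := qB _ (hb _ b2)
  have qb3 := qB _ (hb _ b3)
  have qc1 := qC _ (hc _ c1)
  have qc2 := qC _ (hc _ c2)
  have qa := qA _ hi
  generalize ((r1 : ℕ) : ℤ) = j1 at *
  generalize ((r2 : ℕ) : ℤ) = j2 at *
  generalize ((r3 : ℕ) : ℤ) = j3 at *
  have e12 : det3 (A (i • h)) (B (j1 • h)) (B (j2 • h)) ≠ 0 := by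
    rw [det3_swap, neg_ne_zero]; exact n.swap.off _ n12
  have e13 : det3 (A (i • h)) (B (j1 • h)) (B (j3 • h)) ≠ 0 := by
    rw [det3_swap, neg_ne_zero]; exact n.swap.off _ n13
  have e23 : det3 (A (i • h)) (B (j2 • h)) (B (j3 • h)) ≠ 0 := by
    rw [det3_swap, neg_ne_zero]; exact n.swap.off _ n23
  have e1c : det3 (A (i • h)) (B (j1 • h)) (C ((-i-j2) • h)) ≠ 0 := by
    intro e
    have := (n _ _ _).1 e
    apply n12
    rw [← sub_eq_zero, ← this, sub_smul, neg_smul]; abel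
  have z1 := (n (i • h) (j1 • h) ((-i-j1) • h)).2 (by rw [sub_smul, neg_smul]; abel)
  have z2 := (n (i • h) (j2 • h) ((-i-j2) • h)).2 (by rw [sub_smul, neg_smul]; abel)
  obtain ⟨s, t, e⟩ := span_of_det e12 z1
  have ht : t ≠ 0 := by
    rintro rfl; rw [zero_smul, add_zero] at e
    exact n.cyc.cyc.disj _ _ _ e
  have hs : s ≠ 0 := by
    rintro rfl; rw [zero_smul, zero_add] at e
    exact n.cyc.swap.disj _ _ _ e
  obtain ⟨l, hl⟩ := quad_dvd (crs_ne e12) (quad_vanish e12 qa qb1 hs ht (by rw [← e]; exact qc1))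
  simp only [dot_crs] at hl
  rw [hl] at qb2 qb3 qc2
  have y2 := (mul_eq_zero.1 qb2).resolve_left e12
  have y3 := (mul_eq_zero.1 qb3).resolve_left e13
  have yc := (mul_eq_zero.1 qc2).resolve_left e1c
  obtain ⟨s2, t2, e2⟩ := span_of_det e23 z2
  have hs2 : s2 ≠ 0 := by
    rintro rfl; rw [zero_smul, zero_add] at e2
    exact n.cyc.swap.disj _ _ _ e2
  rw [e2, dot_line, y2] at yc
  have ya : dot l (A (i • h)) = 0 := by simpa [hs2] using yc
  obtain ⟨v, hv⟩ := hq
  apply hv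
  obtain ⟨v', rfl⟩ := exists_coords e23 v
  rw [hl]
  have : ∀ p q r : Fin 3 → ℂ, dot l (comb p q r v') = v' 0 * dot l p + v' 1 * dot l q + v' 2 * dot l r := by
    intro p q r; simp [dot, comb]; ring
  rw [this, ya, y2, y3]; ring

/-- reduced situation: one class of the coset on a line, the two others on a quadric -/
def Red (A B C : H → Fin 3 → ℂ) (h : H) : Prop :=
  ∃ (a : Fin 3 → ℂ) (q : Fin 6 → ℂ), (∃ v, quad q v ≠ 0) ∧ (∀ k : ℤ, dot a (A (k • h)) = 0) ∧
    (∀ y, dot a (B y) ≠ 0) ∧ (∀ z, dot a (C z) ≠ 0) ∧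
    (∀ k : ℤ, quad q (B (k • h)) = 0) ∧ (∀ k : ℤ, quad q (C (k • h)) = 0)

lemma line_off [Nontrivial H] {A B C : H → Fin 3 → ℂ} (n : Net A B C) {a : Fin 3 → ℂ} (ha : a ≠ 0) {x x' : H} (hx : x ≠ x')
    (h1 : dot a (A x) = 0) (h2 : dot a (A x') = 0) (y : H) : dot a (B y) ≠ 0 := by
  intro h3
  have := n.off y hx
  obtain ⟨u, hu⟩ := exists_dot_one ha
  obtain ⟨v', rfl⟩ := exists_coords this u
  have : ∀ p q r : Fin 3 → ℂ, dot a (comb p q r v') = v' 0 * dot a p + v' 1 * dot a q + v' 2 * dot a r := by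
    intro p q r; simp [dot, comb]; ring
  rw [this, h1, h2, h3] at hu
  simp at hu

lemma line_off2 [Nontrivial H] {A B C : H → Fin 3 → ℂ} (n : Net A B C) {a : Fin 3 → ℂ} (ha : a ≠ 0) {x x' : H} (hx : x ≠ x')
    (h1 : dot a (A x) = 0) (h2 : dot a (A x') = 0) (y : H) : dot a (C y) ≠ 0 :=
  line_off n.swap.cyc ha hx h1 h2 y

lemma Net.red_aux [Nontrivial H] {A B C : H → Fin 3 → ℂ} (n : Net A B C) {h : H}
    (hd : ∀ i : ℤ, 0 < i → i < 10 → i • h ≠ 0) {a : Fin 3 → ℂ} (ha : a ≠ 0)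
    {q : Fin 6 → ℂ} (hq : ∃ v, quad q v ≠ 0)
    (qA : ∀ k : ℤ, dot a (A (k • h)) ≠ 0 → quad q (A (k • h)) = 0)
    (qB : ∀ k : ℤ, dot a (B (k • h)) ≠ 0 → quad q (B (k • h)) = 0)
    (qC : ∀ k : ℤ, dot a (C (k • h)) ≠ 0 → quad q (C (k • h)) = 0)
    (i j : ℤ) (hij : i • h ≠ j • h) (hi : dot a (A (i • h)) = 0) (hj : dot a (A (j • h)) = 0) :
    Red A B C h := by
  have oB := line_off n ha hij hi hj
  have oC := line_off2 n ha hij hi hj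
  refine ⟨a, q, hq, ?_, oB, oC, fun k => qB k (oB _), fun k => qC k (oC _)⟩
  exact n.red_claim hd hq qA qB qC (fun i j h1 _ => absurd h1 (oB _)) (fun i j h1 _ => absurd h1 (oC _))

lemma Net.red [Nontrivial H] {A B C : H → Fin 3 → ℂ} (n : Net A B C) {h : H}
    (hd : ∀ i : ℤ, 0 < i → i < 10 → i • h ≠ 0) {c} (hc : c ≠ 0)
    (fA : ∀ k : ℤ, cub c (A (k • h)) = 0) (fB : ∀ k : ℤ, cub c (B (k • h)) = 0)
    (fC : ∀ k : ℤ, cub c (C (k • h)) = 0) (hl : ¬ NoLine (cub c)) :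
    Red A B C h ∨ Red B C A h ∨ Red C A B h := by
  unfold NoLine at hl
  push Not at hl
  obtain ⟨a, ha, hl⟩ := hl
  obtain ⟨q, hq⟩ := cub_dvd ha hl
  have hq0 : ∃ v, quad q v ≠ 0 := by
    by_contra! h0
    apply hc
    apply cub_ext
    intro v; rw [hq, h0]; simp [cub]
  have qz : ∀ v, cub c v = 0 → dot a v ≠ 0 → quad q v = 0 := by
    intro v h1 h2; rw [hq] at h1; exact (mul_eq_zero.1 h1).resolve_left h2
  have qA := fun k => qz _ (fA k)
  have qB := fun k => qz _ (fB k)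
  have qC := fun k => qz _ (fC k)
  by_cases uB : ∀ i j : ℤ, dot a (B (i • h)) = 0 → dot a (B (j • h)) = 0 → i • h = j • h
  · by_cases uC : ∀ i j : ℤ, dot a (C (i • h)) = 0 → dot a (C (j • h)) = 0 → i • h = j • h
    · left
      have := n.red_claim hd hq0 qA qB qC uB uC
      exact n.red_aux hd ha hq0 qA qB qC 0 1 (smul_ne hd (by norm_num) (by norm_num)) (this _) (this _)
    · right; right
      push Not at uC
      obtain ⟨i, j, h1, h2, h3⟩ := uC
      exact n.cyc.cyc.red_aux hd ha hq0 qC qA qB i j h3 h1 h2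
  · right; left
    push Not at uB
    obtain ⟨i, j, h1, h2, h3⟩ := uB
    exact n.cyc.red_aux hd ha hq0 qB qC qA i j h3 h1 h2

/-- the irreducible case -/
lemma Net.irred [Nontrivial H] [Finite H] {A B C : H → Fin 3 → ℂ} (n : Net A B C) {h : H}
    (hd : ∀ i : ℤ, 0 < i → i < 10 → i • h ≠ 0) {c} (hl : NoLine (cub c))
    (fA : ∀ k : ℤ, cub c (A (k • h)) = 0) (fB : ∀ k : ℤ, cub c (B (k • h)) = 0)
    (_fC : ∀ k : ℤ, cub c (C (k • h)) = 0) :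
    ∃ a b : ℕ, 0 < a ∧ 0 < b ∧ Nonempty (H ≃+ ZMod a × ZMod b) := by
  have h1 : h ≠ 0 := by simpa using hd 1 (by norm_num) (by norm_num)
  have h2 : 2 • h ≠ 0 := by
    have := hd 2 (by norm_num) (by norm_num)
    intro e; apply this; rw [← e]; module
  have ind : ∀ {A B C : H → Fin 3 → ℂ}, Net A B C → ∀ r s : Fin 10, r ≠ s →
      Indep (A (((r : ℕ) : ℤ) • h)) (A (((s : ℕ) : ℤ) • h)) := by
    intro A B C n r s hrs
    refine ⟨n.ne_zero _, fun k e => ?_⟩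
    have := n.inj e
    rcases lt_trichotomy r s with hl | hl | hl
    · exact smul_ne hd (by exact_mod_cast hl) (by omega) this
    · exact hrs hl
    · exact smul_ne hd (by exact_mod_cast hl) (by omega) this.symm
  have k1 : ∀ y : H, cub c (B y) = 0 ∧ cub c (C (-y)) = 0 := by
    intro y
    obtain ⟨c', hc', a', b', c''⟩ := n.exists_cubic h1 h2 0 y
    simp only [zero_add] at a'
    have := bezout_cub hl hc' (fun r => A (((r : ℕ) : ℤ) • h)) (ind n) (fun r => fA _) (fun r => a' _)
    exact ⟨this _ (by simpa using b' 0), this _ (by simpa using c'' 0)⟩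
  have k2 : ∀ x : H, cub c (A x) = 0 := by
    intro x
    obtain ⟨c', hc', a', b', c''⟩ := n.exists_cubic h1 h2 x 0
    simp only [zero_add] at b'
    have := bezout_cub hl hc' (fun r => B (((r : ℕ) : ℤ) • h)) (ind n.cyc) (fun r => fB _) (fun r => b' _)
    exact this _ (by simpa using a' 0)
  exact Good.main (c := c) ⟨n, hl, k2, fun y => (k1 y).1, fun z => by simpa using (k1 (-z)).2⟩
end Net3

/-! ### Reducible cubics: normal form -/
namespace Net3
variable {H : Type} [AddCommGroup H] 

lemma Net.scale {A B C : H → Fin 3 → ℂ} (n : Net A B C) {β γ : H → ℂ} (hβ : ∀ y, β y ≠ 0) (hγ : ∀ z, γ z ≠ 0) :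
    Net A (fun y => β y • B y) (fun z => γ z • C z) := by
  intro x y z
  rw [det3_smul2, det3_smul3, ← n x y z]
  simp [hβ, hγ]

lemma quad_subst (q : Fin 6 → ℂ) (e₁ e₂ e₃ v : Fin 3 → ℂ) : quad q (comb e₁ e₂ e₃ v) =
    quad ![quad q e₁, dot (qgrad q e₁) e₂, dot (qgrad q e₁) e₃, quad q e₂, dot (qgrad q e₂) e₃, quad q e₃] v := by
  simp [quad, dot, qgrad, comb]; ring

/-- normalized reducible configuration -/
def Nrm (q : Fin 6 → ℂ) (A B C : H → Fin 3 → ℂ) (h : H) : Prop :=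
  Net A B C ∧ (∃ v, quad q v ≠ 0) ∧ (∀ y, B y 2 = 1) ∧ (∀ z, C z 2 = 1) ∧ (∀ k : ℤ, A (k • h) 2 = 0) ∧
  (∀ k : ℤ, quad q (B (k • h)) = 0) ∧ (∀ k : ℤ, quad q (C (k • h)) = 0)

lemma Red.nrm [Nontrivial H] {A B C : H → Fin 3 → ℂ} (n : Net A B C) {h : H} (h1 : h ≠ 0) (r : Red A B C h) :
    ∃ q A B C, Nrm (H := H) q A B C h := by
  obtain ⟨a, q, ⟨v, hv⟩, dA, dB, dC, qB, qC⟩ := r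
  have hd : det3 (A 0) (A h) (B 0) ≠ 0 := by
    have := n.off (x := h) (x' := 0) 0 h1
    rw [← det3_cyc]
    exact this
  obtain ⟨A', B', C', n', hA, hB, hC⟩ := net_change n hd
  have d0 : dot a (A 0) = 0 := by simpa using dA 0
  have d1 : dot a (A h) = 0 := by simpa using dA 1
  have key : ∀ v, dot a (comb (A 0) (A h) (B 0) v) = v 2 * dot a (B 0) := by
    intro v
    simp only [dot, comb] at d0 d1 ⊢
    simp
    linear_combination v 0 * d0 + v 1 * d1
  have tB : ∀ y, B' y 2 ≠ 0 := by
    intro y e; apply dB y; rw [hB, key, e, zero_mul]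
  have tC : ∀ y, C' y 2 ≠ 0 := by
    intro y e; apply dC y; rw [hC, key, e, zero_mul]
  refine ⟨![quad q (A 0), dot (qgrad q (A 0)) (A h), dot (qgrad q (A 0)) (B 0), quad q (A h), dot (qgrad q (A h)) (B 0), quad q (B 0)],
    A', _, _, n'.scale (β := fun y => (B' y 2)⁻¹) (γ := fun y => (C' y 2)⁻¹) (fun y => inv_ne_zero (tB y)) (fun y => inv_ne_zero (tC y)), ?_, ?_, ?_, ?_, ?_, ?_⟩
  · obtain ⟨v', rfl⟩ := exists_coords hd v
    rw [quad_subst] at hv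
    exact ⟨v', hv⟩
  · intro y; simp [tB]
  · intro y; simp [tC]
  · intro k
    have := dA k
    rw [hA, key] at this
    exact (mul_eq_zero.1 this).resolve_right (dB 0)
  · intro k
    have := qB k
    rw [hB, quad_subst] at this
    rw [quad_smul, this, mul_zero]
  · intro k
    have := qC k
    rw [hC, quad_subst] at this
    rw [quad_smul, this, mul_zero]

lemma Nrm.change {q} {A B C : H → Fin 3 → ℂ} {h : H} (n : Nrm q A B C h) {a b c d : ℂ} (hd : a * d - b * c ≠ 0) :
    ∃ A' B' C' : H → Fin 3 → ℂ, Nrm ![quad q ![a,b,0], dot (qgrad q ![a,b,0]) ![c,d,0], dot (qgrad q ![a,b,0]) ![0,0,1], quad q ![c,d,0],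
      dot (qgrad q ![c,d,0]) ![0,0,1], quad q ![0,0,1]] A' B' C' h ∧ (∀ x, A x = comb ![a,b,0] ![c,d,0] ![0,0,1] (A' x)) := by
  obtain ⟨n, ⟨v, hv⟩, b2, c2, a2, qB, qC⟩ := n
  have hd' : det3 ![a,b,0] ![c,d,0] ![0,0,1] ≠ 0 := by
    simpa [det3] using hd
  obtain ⟨A', B', C', n', hA, hB, hC⟩ := net_change n hd'
  refine ⟨A', B', C', ⟨n', ?_, ?_, ?_, ?_, ?_, ?_⟩, hA⟩
  · obtain ⟨v', rfl⟩ := exists_coords hd' v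
    rw [quad_subst] at hv
    exact ⟨v', hv⟩
  · intro y; have := b2 y; rw [hB] at this; simpa [comb] using this
  · intro y; have := c2 y; rw [hC] at this; simpa [comb] using this
  · intro y; have := a2 y; rw [hA] at this; simpa [comb] using this
  · intro k; have := qB k; rwa [hB, quad_subst] at this
  · intro k; have := qC k; rwa [hC, quad_subst] at this

lemma Nrm.binary {q} {A B C : H → Fin 3 → ℂ} {h : H} (n : Nrm q A B C h) :
    ∃ (q : Fin 6 → ℂ) (A B C : H → Fin 3 → ℂ), Nrm q A B C h ∧ q 3 = 0 ∧ ((q 0 = 0 ∧ q 1 = 1) ∨ q 1 = 0) := by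
  obtain ⟨p, r, p', r', e0, e1, e3⟩ := binary_quad (q 0) (q 1) (q 3)
  by_cases d : p * r' - p' * r = 0
  · by_cases hp : p = 0
    · by_cases hr : r = 0
      · refine ⟨q, A, B, C, n, ?_, Or.inr ?_⟩
        · rw [e3, hr]; ring
        · rw [e1, hr, hp]; ring
      · obtain ⟨A', B', C', n', -⟩ := n.change (a := 0) (b := 1/r) (c := -r) (d := p) (by field_simp; simp)
        refine ⟨_, A', B', C', n', ?_, Or.inr ?_⟩
        · simp [quad]; rw [e3, e1, e0]; subst hp; ring
        · simp [dot, qgrad]; rw [e3, e1]; subst hp; field_simp; grind only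
    · obtain ⟨A', B', C', n', -⟩ := n.change (a := 1/p) (b := 0) (c := -r) (d := p) (by field_simp; simp)
      refine ⟨_, A', B', C', n', ?_, Or.inr ?_⟩
      · simp [quad]; rw [e3, e1, e0]; ring
      · simp [dot, qgrad]; rw [e1, e0]; field_simp; grind only
  · obtain ⟨A', B', C', n', -⟩ := n.change (a := r'/(p * r' - p' * r)) (b := -p'/(p * r' - p' * r)) (c := -r/(p * r' - p' * r)) (d := p/(p * r' - p' * r)) (by
      field_simp
      rw [show r' * p - p' * r = p * r' - p' * r by ring]
      field_simp; simpa using d)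
    refine ⟨_, A', B', C', n', ?_, Or.inl ⟨?_, ?_⟩⟩
    · simp [quad]; rw [e3, e1, e0]; field_simp; ring
    · simp [quad]; rw [e3, e1, e0]; field_simp; ring
    · simp [dot, qgrad]; rw [e3, e1, e0]; field_simp; ring
end Net3

/-! ### Reducible cubics: the affine normal form -/
namespace Net3
variable {H : Type} [AddCommGroup H] 

lemma arith_const {t f g : ℤ → ℂ} (ht : ∀ j k : ℤ, t (-j-k) = f j + g k) {m : ℕ} (hm : m ≠ 0) (hp : t m = t 0) : t 1 = t 0 := by
  have key : ∀ i : ℤ, t (i + 1) - t i = g (-1) - g 0 := by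
    intro i
    have h1 := ht (-i) (-1)
    have h2 := ht (-i) 0
    rw [show - -i - -1 = i + 1 by ring] at h1
    rw [show - -i - 0 = i by ring] at h2
    rw [h1, h2]; ring
  have : ∀ n : ℕ, t n = t 0 + n * (g (-1) - g 0) := by
    intro n
    induction n with
    | zero => simp
    | succ n ih => push_cast; linear_combination ih + key n
  have h1 := this m
  rw [hp] at h1
  have h2 : (m : ℂ) ≠ 0 := by exact_mod_cast hm
  have h3 : g (-1) - g 0 = 0 := by
    have : (m : ℂ) * (g (-1) - g 0) = 0 := by linear_combination -h1
    exact (mul_eq_zero.1 this).resolve_left h2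
  have := key 0
  rw [h3] at this
  simpa [sub_eq_zero] using this

lemma geom_seq {s g : ℤ → ℂ} (hs : ∀ i, s i ≠ 0) (hg : g 0 ≠ 0) (h : ∀ j k : ℤ, s (-j-k) * g k = s (-j) * g 0) :
    ∃ l : ℂ, l ≠ 0 ∧ ∀ i : ℤ, s i = s 0 * l ^ i := by
  have h1 : ∀ i : ℤ, s (i + 1) * g (-1) = s i * g 0 := by
    intro i
    have := h (-i) (-1)
    rwa [show - -i - -1 = i + 1 by ring, neg_neg] at this
  have hg1 : g (-1) ≠ 0 := by
    intro e
    have := h1 0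
    rw [e, mul_zero] at this
    exact mul_ne_zero (hs 0) hg this.symm
  have h2 : ∀ i : ℤ, s (i + 1) = s i * (g 0 / g (-1)) := by
    intro i; field_simp; exact h1 i
  have hl : g 0 / g (-1) ≠ 0 := div_ne_zero hg hg1
  refine ⟨_, hl, fun i => ?_⟩
  induction i using Int.induction_on with
  | zero => simp
  | succ n ih => rw [h2, ih, zpow_add_one₀ hl]; ring
  | pred n ih =>
    have := h2 (-n - 1)
    rw [sub_add_cancel, ih] at this
    rw [zpow_sub_one₀ hl]
    field_simp at this ⊢
    exact this.symm

/-- affine form -/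
def Aff (l : ℂ) (A B C : H → Fin 3 → ℂ) (h : H) : Prop :=
  Net A B C ∧ (∀ y, B y 2 = 1) ∧ (∀ z, C z 2 = 1) ∧ l ≠ 0 ∧ ∀ i : ℤ, A (i • h) = A (i • h) 0 • ![1, - l ^ i, 0]

lemma Nrm.det {q} {A B C : H → Fin 3 → ℂ} {h : H} (n : Nrm q A B C h) {i j k : ℤ} (e : i + j + k = 0) :
    A (i • h) 0 * (B (j • h) 1 - C (k • h) 1) = A (i • h) 1 * (B (j • h) 0 - C (k • h) 0) := by
  obtain ⟨n, -, b2, c2, a2, -, -⟩ := n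
  have := (n (i • h) (j • h) (k • h)).2 (by rw [← add_smul, ← add_smul, e, zero_smul])
  simp only [det3, b2, c2, a2] at this
  linear_combination this

lemma Nrm.polar [Nontrivial H] {q} {A B C : H → Fin 3 → ℂ} {h : H} (n : Nrm q A B C h) {i j k : ℤ} (e : i + j + k = 0) :
    2 * q 0 * A (i • h) 0 * (B (j • h) 0 + C (k • h) 0) + q 1 * (A (i • h) 0 * (B (j • h) 1 + C (k • h) 1) +
      A (i • h) 1 * (B (j • h) 0 + C (k • h) 0)) + 2 * q 2 * A (i • h) 0 + 2 * q 3 * A (i • h) 1 * (B (j • h) 1 + C (k • h) 1)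
      + 2 * q 4 * A (i • h) 1 = 0 := by
  have d := n.det e
  obtain ⟨n, -, b2, c2, a2, qB, qC⟩ := n
  have qb := qB j
  have qc := qC k
  have hne := n.cyc.disj (j • h) (k • h) 1
  have hb2 := b2 (j • h)
  have hc2 := c2 (k • h)
  by_contra hE
  apply hne
  simp only [quad, hb2, hc2] at qb qc
  funext t
  fin_cases t
  · simp
    apply sub_eq_zero.1
    apply (mul_eq_zero.1 _).resolve_right hE
    linear_combination 2 * A (i • h) 0 * (qb - qc) - (q 1 * (B (j • h) 0 + C (k • h) 0) + 2 * q 3 * (B (j • h) 1 + C (k • h) 1) + 2 * q 4) * d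
  · simp
    apply sub_eq_zero.1
    apply (mul_eq_zero.1 _).resolve_right hE
    linear_combination 2 * A (i • h) 1 * (qb - qc) + (2 * q 0 * (B (j • h) 0 + C (k • h) 0) + q 1 * (B (j • h) 1 + C (k • h) 1) + 2 * q 2) * d
  · simp [hb2, hc2]

lemma no_line [Nontrivial H] {A B C : H → Fin 3 → ℂ} (n : Net A B C) {h : H} (h1 : h ≠ 0) {a : Fin 3 → ℂ} (ha : a ≠ 0)
    (e0 : dot a (B ((0:ℤ) • h)) = 0) (e1 : dot a (B ((1:ℤ) • h)) = 0) {k : ℤ} (e2 : dot a (C (k • h)) = 0) : False := by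
  refine line_off n.cyc ha (x := (0:ℤ) • h) (x' := (1:ℤ) • h) ?_ e0 e1 _ e2
  simpa using h1.symm

lemma Nrm.lin0 [Nontrivial H] {q} {A B C : H → Fin 3 → ℂ} {h : H} (n : Nrm q A B C h) (h1 : h ≠ 0) {u : ℂ} {k : ℤ}
    (e0 : B ((0:ℤ) • h) 0 = u) (e1 : B ((1:ℤ) • h) 0 = u) (e2 : C (k • h) 0 = u) : False := by
  obtain ⟨n, -, b2, c2, -⟩ := n
  refine no_line n h1 (a := ![1, 0, -u]) (k := k) (fun e => ?_) ?_ ?_ ?_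
  · simpa using congrFun e 0
  · simp only [dot, b2, e0]; simp
  · simp only [dot, b2, e1]; simp
  · simp [dot, c2, e2]

lemma Nrm.lin1 [Nontrivial H] {q} {A B C : H → Fin 3 → ℂ} {h : H} (n : Nrm q A B C h) (h1 : h ≠ 0) {u : ℂ} {k : ℤ}
    (e0 : B ((0:ℤ) • h) 1 = u) (e1 : B ((1:ℤ) • h) 1 = u) (e2 : C (k • h) 1 = u) : False := by
  obtain ⟨n, -, b2, c2, -⟩ := n
  refine no_line n h1 (a := ![0, 1, -u]) (k := k) (fun e => ?_) ?_ ?_ ?_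
  · simpa using congrFun e 1
  · simp only [dot, b2, e0]; simp
  · simp only [dot, b2, e1]; simp
  · simp [dot, c2, e2]

lemma Nrm.A_ne [Nontrivial H] {q} {A B C : H → Fin 3 → ℂ} {h : H} (n : Nrm q A B C h) (i : ℤ) : A (i • h) 0 = 0 → A (i • h) 1 ≠ 0 := by
  intro h0 h1
  apply n.1.ne_zero (i • h)
  funext t; fin_cases t <;> simp [h0, h1, n.2.2.2.2.1]

lemma Nrm.A_inj [Nontrivial H] {q} {A B C : H → Fin 3 → ℂ} {h : H} (n : Nrm q A B C h) {i j : ℤ}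
    (e : A (i • h) 0 * A (j • h) 1 = A (i • h) 1 * A (j • h) 0) : i • h = j • h := by
  have a2 := n.2.2.2.2.1
  have hi := n.A_ne i
  have hj := n.A_ne j
  by_cases h0 : A (j • h) 0 = 0
  · refine n.1.inj (c := A (i • h) 1 / A (j • h) 1) ?_
    have := hj h0
    funext t; fin_cases t
    · simp [h0]; grind only
    · simp; field_simp
    · simp [a2]
  · refine n.1.inj (c := A (i • h) 0 / A (j • h) 0) ?_
    funext t; fin_cases t
    · simp; field_simp
    · simp; field_simp; linear_combination -e
    · simp [a2]

lemma Nrm.case2 [Nontrivial H] [Finite H] {q} {A B C : H → Fin 3 → ℂ} {h : H} (n : Nrm q A B C h) 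
    (hd : ∀ i : ℤ, 0 < i → i < 10 → i • h ≠ 0) (h3 : q 3 = 0) (hq1 : q 1 = 0) (h0 : q 0 ≠ 0) : False := by
  have h1 : h ≠ 0 := by simpa using hd 1 (by norm_num) (by norm_num)
  have P : ∀ i j k : ℤ, i + j + k = 0 → A (i • h) 0 * (q 0 * (B (j • h) 0 + C (k • h) 0) + q 2) + q 4 * A (i • h) 1 = 0 := by
    intro i j k e
    have := n.polar e
    rw [h3, hq1] at this
    linear_combination this / 2
  have D := fun i j k (e : i + j + k = 0) => n.det e
  have hm := (isOfFinAddOrder_of_finite h).addOrderOf_pos.ne'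
  have hp : ((addOrderOf h : ℕ) : ℤ) • h = (0:ℤ) • h := by simp
  have arith : ∀ f g : ℤ → ℂ, (∀ i : ℤ, A (i • h) 0 ≠ 0) → 
      (∀ j k : ℤ, A ((-j-k) • h) 1 / A ((-j-k) • h) 0 = f j + g k) → False := by
    intro f g hne ht
    have := arith_const (t := fun i => A (i • h) 1 / A (i • h) 0) (f := f) (g := g) ht hm (by simp only [hp])
    have n0 := hne 0
    have n1 := hne 1
    have := n.A_inj (i := 1) (j := 0) (by field_simp at this; linear_combination -this)
    apply h1; simpa using this
  by_cases h4 : q 4 = 0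
  · by_cases ha : ∀ i : ℤ, A (i • h) 0 ≠ 0
    · have P' : ∀ j k : ℤ, q 0 * (B (j • h) 0 + C (k • h) 0) + q 2 = 0 := by
        intro j k
        have := P (-j-k) j k (by ring)
        rw [h4, zero_mul, add_zero] at this
        exact (mul_eq_zero.1 this).resolve_left (ha _)
      have hB : ∀ j : ℤ, B (j • h) 0 = B ((0:ℤ) • h) 0 := by
        intro j
        apply mul_left_cancel₀ h0
        linear_combination P' j 0 - P' 0 0
      have hC : ∀ j : ℤ, C (j • h) 0 = C ((0:ℤ) • h) 0 := by
        intro j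
        apply mul_left_cancel₀ h0
        linear_combination P' 0 j - P' 0 0
      by_cases hs : B ((0:ℤ) • h) 0 = C ((0:ℤ) • h) 0
      · exact n.lin0 h1 rfl (hB 1) hs.symm
      · have hs' := sub_ne_zero.2 hs
        refine arith (fun j => B (j • h) 1 / (B ((0:ℤ) • h) 0 - C ((0:ℤ) • h) 0))
          (fun k => - C (k • h) 1 / (B ((0:ℤ) • h) 0 - C ((0:ℤ) • h) 0)) ha ?_
        intro j k
        have := D (-j-k) j k (by ring)
        rw [hB, hC] at this
        have := ha (-j-k)
        field_simp
        grind only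
    · push Not at ha
      obtain ⟨i, hi⟩ := ha
      have hi1 := n.A_ne i hi
      have E : ∀ j k : ℤ, i + j + k = 0 → B (j • h) 0 = C (k • h) 0 := by
        intro j k e
        have := D i j k e
        rw [hi, zero_mul] at this
        exact sub_eq_zero.1 ((mul_eq_zero.1 this.symm).resolve_left hi1)
      have F : ∀ i' j k : ℤ, i' + j + k = 0 → i < i' + 5 → i' < i + 5 → i ≠ i' → q 0 * (B (j • h) 0 + C (k • h) 0) + q 2 = 0 := by
        intro i' j k e l1 l2 l3
        have := P _ j k e
        rw [h4, zero_mul, add_zero] at this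
        refine (mul_eq_zero.1 this).resolve_left (fun e' => ?_)
        have := n.A_inj (i := i) (j := i') (by rw [hi, e']; ring)
        rcases lt_or_gt_of_ne l3 with h' | h'
        · exact smul_ne hd h' (by omega) this
        · exact smul_ne hd h' (by omega) this.symm
      have e1 := E 0 (-i) (by ring)
      have e2 := E 1 (-i-1) (by ring)
      have f1 := F (i-1) 1 (-i) (by ring) (by omega) (by omega) (by omega)
      have f2 := F (i+2) 0 (-i-2) (by ring) (by omega) (by omega) (by omega)
      have f3 := F (i+1) 1 (-i-2) (by ring) (by omega) (by omega) (by omega)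
      refine n.lin0 h1 (k := -i) rfl ?_ e1.symm
      apply mul_left_cancel₀ h0
      linear_combination f3 - f2
  · have ha : ∀ i : ℤ, A (i • h) 0 ≠ 0 := by
      intro i hi
      have := P i (-i) 0 (by ring)
      rw [hi, zero_mul, zero_add] at this
      exact mul_ne_zero h4 (n.A_ne i hi) this
    refine arith (fun j => -(q 0 * B (j • h) 0 + q 2) / q 4) (fun j => -(q 0 * C (j • h) 0) / q 4) ha ?_
    intro j k
    have := P (-j-k) j k (by ring)
    have := ha (-j-k)
    field_simp
    linear_combination P (-j-k) j k (by ring)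

lemma Nrm.case1 [Nontrivial H] [Finite H] {q} {A B C : H → Fin 3 → ℂ} {h : H} (n : Nrm q A B C h) 
    (h1 : h ≠ 0) (h3 : q 3 = 0) (hq1 : q 1 = 1) (h0 : q 0 = 0) : ∃ l A B C, Aff (H := H) l A B C h := by
  have D := fun i j k (e : i + j + k = 0) => n.det e
  have P := fun i j k (e : i + j + k = 0) => n.polar e
  rw [h3, hq1, h0] at P
  have E1 : ∀ i j k : ℤ, i + j + k = 0 → A (i • h) 0 * (B (j • h) 1 + q 2) + A (i • h) 1 * (C (k • h) 0 + q 4) = 0 := by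
    intro i j k e
    linear_combination (P i j k e + D i j k e) / 2
  have E2 : ∀ i j k : ℤ, i + j + k = 0 → A (i • h) 0 * (C (k • h) 1 + q 2) + A (i • h) 1 * (B (j • h) 0 + q 4) = 0 := by
    intro i j k e
    linear_combination (P i j k e - D i j k e) / 2
  have ha : ∀ i : ℤ, A (i • h) 0 ≠ 0 := by
    intro i hi
    have hi1 := n.A_ne i hi
    refine n.lin0 h1 (u := - q 4) (k := -i) ?_ ?_ ?_
    · have := E2 i 0 (-i) (by ring); grind only
    · have := E2 i 1 (-i-1) (by ring); grind only
    · have := E1 i 0 (-i) (by ring); grind only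
  have hb : ∀ i : ℤ, A (i • h) 1 ≠ 0 := by
    intro i hi
    have hi1 := ha i
    refine n.lin1 h1 (u := - q 2) (k := -i) ?_ ?_ ?_
    · have := E1 i 0 (-i) (by ring); grind only
    · have := E1 i 1 (-i-1) (by ring); grind only
    · have := E2 i 0 (-i) (by ring); grind only
  set s : ℤ → ℂ := fun i => - A (i • h) 1 / A (i • h) 0 with hs
  have sne : ∀ i, s i ≠ 0 := fun i => div_ne_zero (neg_ne_zero.2 (hb i)) (ha i)
  have As : ∀ i : ℤ, A (i • h) 1 = - s i * A (i • h) 0 := by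
    intro i; have := ha i; simp only [hs]; field_simp
  have F1 : ∀ j k : ℤ, B (j • h) 1 + q 2 = s (-j-k) * (C (k • h) 0 + q 4) := by
    intro j k
    have := E1 (-j-k) j k (by ring)
    rw [As] at this
    apply mul_left_cancel₀ (ha (-j-k))
    linear_combination this
  have F2 : ∀ j k : ℤ, C (k • h) 1 + q 2 = s (-j-k) * (B (j • h) 0 + q 4) := by
    intro j k
    have := E2 (-j-k) j k (by ring)
    rw [As] at this
    apply mul_left_cancel₀ (ha (-j-k))
    linear_combination this
  clear_value s
  have : ∃ l : ℂ, l ≠ 0 ∧ ∀ i : ℤ, s i = s 0 * l ^ i := by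
    by_cases hc : C ((0:ℤ) • h) 0 + q 4 = 0
    · have hb1 : ∀ j : ℤ, B (j • h) 1 + q 2 = 0 := by
        intro j; rw [F1 j 0, hc, mul_zero]
      have hbb : B ((0:ℤ) • h) 0 + q 4 ≠ 0 := by
        intro e
        refine n.lin1 h1 (u := - q 2) (k := 0) ?_ ?_ ?_
        · linear_combination hb1 0
        · linear_combination hb1 1
        · linear_combination F2 0 0 + s (-0-0) * e
      refine geom_seq sne (g := fun j => B (j • h) 0 + q 4) hbb ?_
      intro j k
      have e1 := F2 k j
      have e2 := F2 0 j
      rw [show -k-j = -j-k by ring] at e1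
      rw [show -0-j = -j by ring] at e2
      rw [← e1, ← e2]
    · refine geom_seq sne (g := fun j => C (j • h) 0 + q 4) hc ?_
      intro j k
      have e1 := F1 j k
      have e2 := F1 j 0
      rw [sub_zero] at e2
      rw [← e1, ← e2]
  obtain ⟨l, hl, hsl⟩ := this
  obtain ⟨A', B', C', n', hA⟩ := n.change (a := 1) (b := 0) (c := 0) (d := s 0) (by simpa using sne 0)
  refine ⟨l, A', B', C', n'.1, n'.2.2.1, n'.2.2.2.1, hl, fun i => ?_⟩
  have e1 := As i
  rw [hA] at e1
  have e2 := n'.2.2.2.2.1 i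
  funext t
  fin_cases t
  · simp
  · simp [comb] at e1 ⊢
    rw [hsl i] at e1
    apply mul_left_cancel₀ (sne 0)
    linear_combination e1
  · simp [e2]

lemma Red.aff [Nontrivial H] [Finite H] {A B C : H → Fin 3 → ℂ} (n : Net A B C) {h : H}
    (hd : ∀ i : ℤ, 0 < i → i < 10 → i • h ≠ 0) (r : Red A B C h) : ∃ l A B C, Aff (H := H) l A B C h := by
  have h1 : h ≠ 0 := by simpa using hd 1 (by norm_num) (by norm_num)
  obtain ⟨q, A, B, C, r⟩ := r.nrm n h1
  obtain ⟨q, A, B, C, r, h3, ⟨h0, hq1⟩ | hq1⟩ := r.binary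
  · exact r.case1 h1 h3 hq1 h0
  · by_cases h0 : q 0 = 0
    · exfalso
      obtain ⟨n, ⟨v, hv⟩, b2, c2, a2, qB, qC⟩ := r
      have b0 := qB 0
      have b1 := qB 1
      have c0 := qC 0
      simp only [quad, h0, hq1, h3, b2, c2] at b0 b1 c0 hv
      refine no_line n h1 (a := ![q 2, q 4, q 5]) (k := 0) (fun e => ?_) ?_ ?_ ?_
      · have e0 := congrFun e 0
        have e1 := congrFun e 1
        have e2 := congrFun e 2
        simp at e0 e1 e2
        apply hv; rw [e0, e1, e2]; ring
      · simp [dot, b2]; simpa using b0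
      · simp [dot, b2]; simpa using b1
      · simp [dot, c2]; simpa using c0
    · exact (r.case2 hd h3 hq1 h0).elim
end Net3

/-! ### Reducible cubics: conclusion -/
namespace Net3
variable {H : Type} [AddCommGroup H] 

lemma quart_zero {c0 c1 c2 c3 c4 : ℂ} {f : Fin 5 → ℂ} (hf : Function.Injective f)
    (h : ∀ i, c4 * f i ^ 4 + c3 * f i ^ 3 + c2 * f i ^ 2 + c1 * f i + c0 = 0) :
    c4 = 0 ∧ c3 = 0 ∧ c2 = 0 ∧ c1 = 0 ∧ c0 = 0 := by
  let p : Polynomial ℂ := Polynomial.C c4 * Polynomial.X ^ 4 + Polynomial.C c3 * Polynomial.X ^ 3 +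
    Polynomial.C c2 * Polynomial.X ^ 2 + Polynomial.C c1 * Polynomial.X + Polynomial.C c0
  have hp : p = 0 := by
    refine Polynomial.eq_zero_of_natDegree_lt_card_of_eval_eq_zero p hf (fun i => ?_) ?_
    · simpa [p] using h i
    · have : p.natDegree ≤ 4 := by simp only [p]; compute_degree
      simp; omega
  have e : ∀ n, p.coeff n = 0 := by intro n; rw [hp]; simp
  have e0 := e 0
  have e1 := e 1
  have e2 := e 2
  have e3 := e 3
  have e4 := e 4
  simp [p, Polynomial.coeff_X, Polynomial.coeff_C] at e0 e1 e2 e3 e4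
  exact ⟨e4, e3, e2, e1, e0⟩

lemma Aff.A_ne [Nontrivial H] {l} {A B C : H → Fin 3 → ℂ} {h : H} (n : Aff l A B C h) (i : ℤ) : A (i • h) 0 ≠ 0 := by
  intro e
  apply n.1.ne_zero (i • h)
  rw [n.2.2.2.2 i, e, zero_smul]

lemma Aff.pow_inj [Nontrivial H] {l} {A B C : H → Fin 3 → ℂ} {h : H} (n : Aff l A B C h) {i j : ℤ} (e : l ^ i = l ^ j) :
    i • h = j • h := by
  refine n.1.inj (c := A (i • h) 0 / A (j • h) 0) ?_
  have := n.A_ne j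
  conv_lhs => rw [n.2.2.2.2 i, e]
  conv_rhs => rw [n.2.2.2.2 j]
  rw [smul_smul]
  congr 1
  simp
  field_simp

lemma Aff.rel [Nontrivial H] {l} {A B C : H → Fin 3 → ℂ} {h : H} (n : Aff l A B C h) (y : H) (j k : ℤ) :
    l ^ j * l ^ k * (B (y + j • h) 1 - C (-y + k • h) 1) + B (y + j • h) 0 - C (-y + k • h) 0 = 0 := by
  have := (n.1 ((-j-k) • h) (y + j • h) (-y + k • h)).2 (by module)
  have h0 := n.A_ne (-j-k)
  have hl := n.2.2.2.1
  rw [n.2.2.2.2, det3_smul1] at this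
  have := (mul_eq_zero.1 this).resolve_left h0
  have e : l ^ (-j-k) = (l ^ j)⁻¹ * (l ^ k)⁻¹ := by rw [zpow_sub₀ hl, zpow_neg]; field_simp
  have hj : l ^ j ≠ 0 := zpow_ne_zero _ hl
  have hk : l ^ k ≠ 0 := zpow_ne_zero _ hl
  simp [det3, n.2.1, n.2.2.1, e] at this
  field_simp at this
  linear_combination this

lemma Aff.param [Nontrivial H] {l} {A B C : H → Fin 3 → ℂ} {h : H} (n : Aff l A B C h) (h1 : h ≠ 0) (y : H) :
    ∃ μ ν κ w : ℂ, ∀ j : ℤ, B (y + j • h) = ![μ + ν * l ^ j, w + κ / l ^ j, 1] ∧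
      C (-y + j • h) = ![μ + κ * l ^ j, w + ν / l ^ j, 1] := by
  have hl := n.2.2.2.1
  have hl1 : l - 1 ≠ 0 := by
    intro e
    have e : l = 1 := sub_eq_zero.1 e
    have := n.pow_inj (i := 1) (j := 0) (by simp [e])
    apply h1; simpa using this
  have R := n.rel y
  obtain ⟨w, hw⟩ : ∃ w, w = (l * C (-y + (1:ℤ) • h) 1 - C (-y + (0:ℤ) • h) 1) / (l - 1) := ⟨_, rfl⟩
  obtain ⟨κ, hκ⟩ : ∃ w, w = (C (-y + (1:ℤ) • h) 0 - C (-y + (0:ℤ) • h) 0) / (l - 1) := ⟨_, rfl⟩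
  have hw' : w * (l - 1) = l * C (-y + (1:ℤ) • h) 1 - C (-y + (0:ℤ) • h) 1 := by rw [hw]; field_simp
  have hκ' : κ * (l - 1) = C (-y + (1:ℤ) • h) 0 - C (-y + (0:ℤ) • h) 0 := by rw [hκ]; field_simp
  obtain ⟨ν, hν⟩ : ∃ ν, ν = C (-y + (0:ℤ) • h) 1 - w := ⟨_, rfl⟩
  obtain ⟨μ, hμ⟩ : ∃ ν, ν = C (-y + (0:ℤ) • h) 0 - κ := ⟨_, rfl⟩
  have b1 : ∀ j : ℤ, B (y + j • h) 1 = w + κ / l ^ j := by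
    intro j
    have hj : l ^ j ≠ 0 := zpow_ne_zero _ hl
    have r0 := R j 0
    have r1 := R j 1
    rw [zpow_zero] at r0
    rw [zpow_one] at r1
    field_simp
    apply mul_left_cancel₀ hl1
    linear_combination r1 - r0 - l ^ j * hw' - hκ'
  have b0 : ∀ j : ℤ, B (y + j • h) 0 = μ + ν * l ^ j := by
    intro j
    have hj : l ^ j ≠ 0 := zpow_ne_zero _ hl
    have r0 := R j 0
    rw [zpow_zero, b1 j] at r0
    field_simp at r0
    rw [hμ, hν]
    linear_combination r0
  have c1 : ∀ j : ℤ, C (-y + j • h) 1 = w + ν / l ^ j := by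
    intro j
    have hj : l ^ j ≠ 0 := zpow_ne_zero _ hl
    have r0 := R 0 j
    have r1 := R 1 j
    rw [b1, b0, zpow_zero] at r0
    rw [b1, b0, zpow_one] at r1
    field_simp at r1 ⊢
    apply mul_left_cancel₀ hl1
    linear_combination r0 - r1
  refine ⟨μ, ν, κ, w, fun j => ⟨?_, ?_⟩⟩
  · funext t; fin_cases t
    · exact b0 j
    · exact b1 j
    · exact n.2.1 _
  · funext t; fin_cases t
    · have hj : l ^ j ≠ 0 := zpow_ne_zero _ hl
      have r0 := R 0 j
      rw [b1, b0, c1, zpow_zero] at r0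
      field_simp at r0
      simp only [Fin.zero_eta, Matrix.cons_val_zero]
      linear_combination -r0
    · exact c1 j
    · exact n.2.2.1 _

lemma Aff.translate {l} {A B C : H → Fin 3 → ℂ} {h : H} (n : Aff l A B C h) (u v : ℂ) :
    ∃ A' B' C' : H → Fin 3 → ℂ, Aff l A' B' C' h ∧ (∀ y, B y = B' y + ![u, v, 0]) ∧ (∀ y, C y = C' y + ![u, v, 0]) := by
  obtain ⟨n, b2, c2, hl, hA⟩ := n
  have hd : det3 ![1,0,0] ![0,1,0] ![u,v,1] ≠ 0 := by simp [det3]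
  obtain ⟨A', B', C', n', eA, eB, eC⟩ := net_change n hd
  have b2' : ∀ y, B' y 2 = 1 := fun y => by have := b2 y; rw [eB] at this; simpa [comb] using this
  have c2' : ∀ y, C' y 2 = 1 := fun y => by have := c2 y; rw [eC] at this; simpa [comb] using this
  refine ⟨A', B', C', ⟨n', b2', c2', hl, fun i => ?_⟩, fun y => ?_, fun y => ?_⟩
  · have := hA i
    rw [eA] at this
    have e0 := congrFun this 0
    have e1 := congrFun this 1
    have e2 := congrFun this 2
    simp [comb] at e0 e1 e2
    rw [e2] at e1
    funext t; fin_cases t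
    · simp
    · simp; simpa [e2] using e1
    · simp [e2]
  · rw [eB]; funext t; fin_cases t <;> simp [comb, b2']
  · rw [eC]; funext t; fin_cases t <;> simp [comb, c2']

lemma fin_red [Nontrivial H] [Finite H] {A B C : H → Fin 3 → ℂ} (n : Net A B C) (a2 : ∀ x, A x 2 = 0) (m : H → ℂ) (hm : ∀ x, m x ≠ 0)
    (hr : ∀ x y z, x + y + z = 0 → A x 0 * m (-z) + A x 1 * m y = 0) :
    ∃ a b : ℕ, 0 < a ∧ 0 < b ∧ Nonempty (H ≃+ ZMod a × ZMod b) := by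
  have a01 : ∀ x, A x 0 = 0 → A x 1 ≠ 0 := by
    intro x h0 h1
    apply n.ne_zero x
    funext t; fin_cases t <;> simp [h0, h1, a2]
  have a0 : ∀ x, A x 0 ≠ 0 := by
    intro x e
    have := hr x 0 (-x) (by abel)
    rw [e, zero_mul, zero_add] at this
    exact mul_ne_zero (a01 x e) (hm _) this
  have a1 : ∀ x, A x 1 ≠ 0 := by
    intro x e
    have := hr x 0 (-x) (by abel)
    rw [e, zero_mul, add_zero] at this
    exact mul_ne_zero (a0 x) (hm _) this
  refine cyclic_of_mul (fun x => - A x 1 / A x 0) m (fun z => 1 / m (-z)) 1 (fun x => div_ne_zero (neg_ne_zero.2 (a1 x)) (a0 x)) hm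
    (fun x => one_div_ne_zero (hm _)) ?_ ?_
  · intro x y z e
    have := hr x y z e
    have := a0 x
    have := hm (-z)
    field_simp
    linear_combination -(hr x y z e)
  · intro x x' e
    have := a0 x
    have := a0 x'
    refine n.inj (c := A x 0 / A x' 0) ?_
    simp only at e
    field_simp at e
    funext t; fin_cases t
    · simp; field_simp
    · simp; field_simp; linear_combination -e
    · simp [a2]

lemma Aff.main [Nontrivial H] [Finite H] {l} {A B C : H → Fin 3 → ℂ} {h : H} (n : Aff l A B C h)
    (hd : ∀ i : ℤ, 0 < i → i < 10 → i • h ≠ 0) : ∃ a b : ℕ, 0 < a ∧ 0 < b ∧ Nonempty (H ≃+ ZMod a × ZMod b) := by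
  have h1 : h ≠ 0 := by simpa using hd 1 (by norm_num) (by norm_num)
  have hl := n.2.2.2.1
  have hl1 : l ≠ 1 := by
    intro e
    have := n.pow_inj (i := 1) (j := 0) (by simp [e])
    apply h1; simpa using this
  -- translate
  obtain ⟨A, B, C, n, N, K, hB0, hC0⟩ : ∃ A B C : H → Fin 3 → ℂ, Aff l A B C h ∧ ∃ N K : ℂ,
      (∀ j : ℤ, B (j • h) = ![N * l ^ j, K / l ^ j, 1]) ∧ (∀ j : ℤ, C (j • h) = ![K * l ^ j, N / l ^ j, 1]) := by
    obtain ⟨μ, ν, κ, w, hp⟩ := n.param h1 0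
    simp only [zero_add, neg_zero] at hp
    obtain ⟨A', B', C', n', hB, hC⟩ := n.translate μ w
    refine ⟨A', B', C', n', ν, κ, fun j => ?_, fun j => ?_⟩
    · have := (hp j).1
      rw [hB] at this
      rw [eq_sub_of_add_eq this]
      funext t; fin_cases t <;> simp
    · have := (hp j).2
      rw [hC] at this
      rw [eq_sub_of_add_eq this]
      funext t; fin_cases t <;> simp
  choose μ ν κ w hp using n.param h1
  have hne : ∀ y, ν y = 0 → κ y ≠ 0 := by
    intro y e1 e2
    have e0 := (hp y 0).1
    have e := (hp y 1).1
    rw [e1, e2] at e0 e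
    have := n.1.cyc.inj (x := y + (1:ℤ) • h) (x' := y + (0:ℤ) • h) (c := 1) (by rw [e, e0]; simp)
    apply h1; simpa using this
  have hNK : N = 0 → K ≠ 0 := by
    intro e1 e2
    have e0 := hB0 0
    have e := hB0 1
    rw [e1, e2] at e0 e
    have := n.1.cyc.inj (x := (1:ℤ) • h) (x' := (0:ℤ) • h) (c := 1) (by rw [e, e0]; simp)
    apply h1; simpa using this
  have linj : Function.Injective (fun r : Fin 5 => l ^ ((r : ℕ) : ℤ)) := by
    intro r s e
    have := n.pow_inj e
    rcases lt_trichotomy r s with hl | hl | hl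
    · exact absurd this (smul_ne hd (by exact_mod_cast hl) (by omega))
    · exact hl
    · exact absurd this.symm (smul_ne hd (by exact_mod_cast hl) (by omega))
  have rels : ∀ (y : H) (i : ℤ) (T : ℂ), T ≠ 0 → T = l ^ i → ∀ a0 a1 a2, A (-y - i • h) 0 = a0 → A (-y - i • h) 1 = a1 → A (-y - i • h) 2 = a2 →
      ν y * N * a2 = 0 ∧ a0 * N + ν y * a1 * T = μ y * N * a2 ∧ w y * a0 = μ y * a1 ∧
      κ y * a0 + K * T * a1 = w y * K * T * a2 ∧ κ y * K * a2 = 0 := by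
    intro y i T hT0 hT a0 a1 a2 ea0 ea1 ea2
    have := quart_zero (c4 := a2 * ν y * N / T) (c3 := - a0 * N / T - ν y * a1 + μ y * N * a2 / T) 
      (c2 := w y * a0 - μ y * a1) (c1 := κ y * a0 + K * T * a1 - w y * K * T * a2) (c0 := - κ y * K * T * a2) linj (fun r => by
        have hn := (n.1 (-y - i • h) (y + ((r : ℕ) : ℤ) • h) ((i - ((r : ℕ) : ℤ)) • h)).2 (by module)
        have ht : l ^ ((r : ℕ) : ℤ) ≠ 0 := zpow_ne_zero _ hl
        rw [(hp y _).1, hC0, zpow_sub₀ hl, ← hT] at hn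
        simp only [det3, ea0, ea1, ea2] at hn
        generalize l ^ ((r : ℕ) : ℤ) = t at *
        simp at hn
        field_simp at hn ⊢
        linear_combination hn)
    obtain ⟨r4, r3, r2, r1, r0⟩ := this
    field_simp at r4 r3
    refine ⟨?_, ?_, ?_, ?_, ?_⟩
    · linear_combination r4
    · linear_combination -r3
    · linear_combination r2
    · linear_combination r1
    · have : T * (κ y * K * a2) = 0 := by linear_combination - r0
      exact (mul_eq_zero.1 this).resolve_left hT0
  have ane : ∀ x, ¬ (A x 0 = 0 ∧ A x 1 = 0 ∧ A x 2 = 0) := by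
    rintro x ⟨e0, e1, e2⟩
    apply n.1.ne_zero x
    funext t; fin_cases t <;> assumption
  have lineB1 : ∀ y, w y = 0 → κ y = 0 → N ≠ 0 := by
    intro y e1 e2 e3
    refine line_off n.1.cyc (a := ![0,1,0]) (x := y + (0:ℤ) • h) (x' := y + (1:ℤ) • h) (fun e => ?_) ?_ ?_ ?_ ((0:ℤ) • h) ?_
    · simpa using congrFun e 1
    · simpa using h1
    · rw [(hp y 0).1]; simp [dot, e1, e2]
    · rw [(hp y 1).1]; simp [dot, e1, e2]
    · rw [hC0]; simp [dot, e3]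
  have lineB0 : ∀ y, μ y = 0 → ν y = 0 → K ≠ 0 := by
    intro y e1 e2 e3
    refine line_off n.1.cyc (a := ![1,0,0]) (x := y + (0:ℤ) • h) (x' := y + (1:ℤ) • h) (fun e => ?_) ?_ ?_ ?_ ((0:ℤ) • h) ?_
    · simpa using congrFun e 0
    · simpa using h1
    · rw [(hp y 0).1]; simp [dot, e1, e2]
    · rw [(hp y 1).1]; simp [dot, e1, e2]
    · rw [hC0]; simp [dot, e3]
  have R0 : ∀ y, ∃ a0 a1 a2 : ℂ, A (-y) 2 = a2 ∧ ¬ (a0 = 0 ∧ a1 = 0 ∧ a2 = 0) ∧ ν y * N * a2 = 0 ∧ a0 * N + ν y * a1 = μ y * N * a2 ∧ w y * a0 = μ y * a1 ∧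
      κ y * a0 + K * a1 = w y * K * a2 ∧ κ y * K * a2 = 0 := by
    intro y
    have := rels y 0 1 one_ne_zero (by simp) _ _ _ rfl rfl rfl
    simp only [zero_smul, sub_zero, mul_one] at this
    exact ⟨_, _, _, rfl, ane _, this⟩
  have R1 : ∀ y, ∃ a0 a1 a2 : ℂ, ¬ (a0 = 0 ∧ a1 = 0 ∧ a2 = 0) ∧ ν y * N * a2 = 0 ∧ a0 * N + ν y * a1 * l = μ y * N * a2 ∧ w y * a0 = μ y * a1 ∧
      κ y * a0 + K * l * a1 = w y * K * l * a2 ∧ κ y * K * a2 = 0 := by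
    intro y
    have := rels y 1 l hl (by simp) _ _ _ rfl rfl rfl
    exact ⟨_, _, _, ane _, this⟩
  have key : ∀ y, A (-y) 2 = 0 ∧ μ y = 0 ∧ w y = 0 ∧ ((N ≠ 0 ∧ K ≠ 0 ∧ ν y ≠ 0 ∧ κ y ≠ 0 ∧ ν y * κ y = N * K) ∨ (N = 0 ∧ ν y = 0 ∧ κ y ≠ 0) ∨
      (N ≠ 0 ∧ K = 0 ∧ κ y = 0 ∧ ν y ≠ 0)) := by
    intro y
    obtain ⟨a0, a1, a2, ea, na, r1, r2, r3, r4, r5⟩ := R0 y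
    obtain ⟨b0, b1, b2, nb, s1, s2, s3, s4, s5⟩ := R1 y
    rw [ea]
    have hy := hne y
    have l1 := lineB1 y
    have l0 := lineB0 y
    generalize ν y = ν at *
    generalize κ y = κ at *
    generalize μ y = μ at *
    generalize w y = w at *
    clear rels R0 R1 lineB0 lineB1 hp hne hB0 hC0 n linj ane
    by_cases hN : N = 0
    · have hK := hNK hN
      subst hN
      have hν : ν = 0 := by
        by_contra hν
        grind only
      subst hν
      have hκ := hy rfl
      have ha2 : a2 = 0 := by grind only
      have hb2 : b2 = 0 := by grind only
      subst ha2 hb2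
      have ha1 : a1 ≠ 0 := by grind only
      have hb1 : b1 ≠ 0 := by grind only
      have e1 : w * K + μ * κ = 0 := by grind only
      have e2 : w * K * l + μ * κ = 0 := by grind only
      have hw : w = 0 := by
        have : w * K * (l - 1) = 0 := by linear_combination e2 - e1
        simpa [hK, sub_eq_zero, hl1] using this
      refine ⟨rfl, ?_, hw, Or.inr (Or.inl ⟨rfl, rfl, hκ⟩)⟩
      grind only
    · by_cases hK : K = 0
      · subst hK
        have hκ : κ = 0 := by
          by_contra hκ
          grind only
        subst hκ
        have hν : ν ≠ 0 := fun e => hy e rfl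
        have ha2 : a2 = 0 := by grind only
        have hb2 : b2 = 0 := by grind only
        subst ha2 hb2
        have ha1 : a1 ≠ 0 := by grind only
        have hb1 : b1 ≠ 0 := by grind only
        have e1 : w * ν + μ * N = 0 := by grind only
        have e2 : w * ν * l + μ * N = 0 := by grind only
        have hw : w = 0 := by
          have : w * ν * (l - 1) = 0 := by linear_combination e2 - e1
          simpa [hν, sub_eq_zero, hl1] using this
        refine ⟨rfl, ?_, hw, Or.inr (Or.inr ⟨hN, rfl, rfl, hν⟩)⟩
        grind only
      · have ha2 : a2 = 0 := by grind only
        have hb2 : b2 = 0 := by grind only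
        subst ha2 hb2
        have hν : ν ≠ 0 := by
          intro e; subst e; grind only
        have hκ : κ ≠ 0 := by
          intro e; subst e; grind only
        have ha1 : a1 ≠ 0 := by grind only
        have hb1 : b1 ≠ 0 := by grind only
        have e1 : w * ν + μ * N = 0 := by grind only
        have e2 : w * ν * l + μ * N = 0 := by grind only
        have hw : w = 0 := by
          have : w * ν * (l - 1) = 0 := by linear_combination e2 - e1
          simpa [hν, sub_eq_zero, hl1] using this
        refine ⟨rfl, ?_, hw, Or.inl ⟨hN, hK, hν, hκ, ?_⟩⟩
        · grind only
        · grind only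
  have hA2 : ∀ x, A x 2 = 0 := by
    intro x; simpa using (key (-x)).1
  have hB : ∀ y, B y = ![ν y, κ y, 1] := by
    intro y
    have := (hp y 0).1
    simpa [(key y).2.1, (key y).2.2.1] using this
  have hC : ∀ y, C y = ![κ (-y), ν (-y), 1] := by
    intro y
    have := (hp (-y) 0).2
    simpa [(key (-y)).2.1, (key (-y)).2.2.1] using this
  have D : ∀ x y z, x + y + z = 0 → A x 0 * (κ y - ν (-z)) = A x 1 * (ν y - κ (-z)) := by
    intro x y z e
    have := (n.1 x y z).2 e
    rw [hB, hC] at this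
    simp [det3, hA2] at this
    linear_combination this
  by_cases hN : N = 0
  · have hν : ∀ y, ν y = 0 := by intro y; have := (key y).2.2.2; grind only
    have hκ : ∀ y, κ y ≠ 0 := by intro y; exact hne y (hν y)
    refine fin_red n.1 hA2 (fun y => (κ y)⁻¹) (fun y => inv_ne_zero (hκ y)) ?_
    intro x y z e
    have := D x y z e
    rw [hν, hν] at this
    have := hκ y
    have := hκ (-z)
    field_simp
    grind only
  · have hν : ∀ y, ν y ≠ 0 := by intro y; have := (key y).2.2.2; grind only
    refine fin_red n.1 hA2 ν hν ?_
    intro x y z e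
    have d := D x y z e
    by_cases hK : K = 0
    · have hκ : ∀ y, κ y = 0 := by intro y; have := (key y).2.2.2; grind only
      rw [hκ, hκ] at d
      linear_combination -d
    · have hκ : ∀ y, ν y * κ y = N * K := by intro y; have := (key y).2.2.2; grind only
      have k1 := hκ y
      have k2 := hκ (-z)
      have v1 := hν y
      have v2 := hν (-z)
      have hdis : ν y ≠ κ (-z) := by
        intro e'
        refine n.1.cyc.disj y z 1 ?_
        rw [hB, hC, one_smul, e']
        have : κ y = ν (-z) := by
          rw [e'] at k1
          apply mul_left_cancel₀ (e' ▸ v1 : κ (-z) ≠ 0)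
          linear_combination k1 - k2
        rw [this]
      have : (ν y - κ (-z)) * (A x 0 * ν (-z) + A x 1 * ν y) = 0 := by
        linear_combination -ν y * d + A x 0 * (k1 - k2)
      exact (mul_eq_zero.1 this).resolve_left (sub_ne_zero.2 hdis)
end Net3

theorem realizable_iff_two_invariant_factors (H : Type) [AddCommGroup H] [Fintype H]
    (hord : ∃ h : H, 10 ≤ addOrderOf h) :
    (∃ p₁ p₂ p₃ : H → P2, Realizes p₁ p₂ p₃) ↔
      ∃ a b : ℕ, 0 < a ∧ 0 < b ∧ Nonempty (H ≃+ ZMod a × ZMod b) := by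
  obtain ⟨h, hh⟩ := hord
  have hd : ∀ i : ℤ, 0 < i → i < 10 → i • h ≠ 0 := by
    intro i h1 h2 e
    have := addOrderOf_dvd_iff_zsmul_eq_zero.2 e
    have := Int.le_of_dvd h1 this
    omega
  have h1 : h ≠ 0 := by simpa using hd 1 (by norm_num) (by norm_num)
  have h2 : 2 • h ≠ 0 := by
    have := hd 2 (by norm_num) (by norm_num)
    intro e; apply this; rw [← e]; module
  have hnt : Nontrivial H := ⟨h, 0, h1⟩
  constructor
  · rintro ⟨p₁, p₂, p₃, hr⟩
    have n := Net3.net_of_realizes hr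
    obtain ⟨c, hc, fA, fB, fC⟩ := n.exists_cubic h1 h2 0 0
    simp only [zero_add, neg_zero, sub_zero] at fA fB fC
    by_cases hl : Net3.NoLine (Net3.cub c)
    · exact n.irred hd hl fA fB fC
    · rcases n.red hd hc fA fB fC hl with r | r | r
      · obtain ⟨l, A, B, C, ha⟩ := r.aff n hd
        exact ha.main hd
      · obtain ⟨l, A, B, C, ha⟩ := r.aff n.cyc hd
        exact ha.main hd
      · obtain ⟨l, A, B, C, ha⟩ := r.aff n.cyc.cyc hd
        exact ha.main hd
  · rintro ⟨a, b, ha, hb, ⟨e⟩⟩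
    exact Net3.realizable_of_equiv a b ha hb e
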